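/- arXiv:2106.05821 — 2 statements merged into one kernel-verified Lean document; each statement's English description precedes it below -/
import Mathlib

section
/- Let G be a group containing a free subgroup F of finite index, and let A and B be subgroups of G. Then r̄k(A ∩ B) ≤ [G:F] · r̄k(A) · r̄k(B), where r̄k denotes the virtual reduced rank. -/
/-- `r : ℚ` is the virtual reduced rank of the group `H`: there is a finitely generated
free subgroup `K` of finite index in `H` such that `r = max (0, rank K - 1) / [H : K]`,
where `rank K` is the minimal cardinality of a generating set of `K`.
(This value does not depend on the choice of `K`.) -/
def IsVirtRedRank (H : Type*) [Group H] (r : ℚ) : Prop :=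
  ∃ K : Subgroup H, K.FiniteIndex ∧ IsFreeGroup K ∧
    ∃ hfg : Group.FG K, r = ((@Group.rank K _ hfg - 1 : ℕ) : ℚ) / (K.index : ℚ)

open scoped Pointwise

namespace FreeGroup

variable {α : Type*}

/-- The sign of a letter. -/
def letterSign (l : α × Bool) : ℤ := if l.2 then 1 else -1

theorem letterSign_inv (l : α × Bool) : letterSign (l.1, !l.2) = -letterSign l := by
  rcases l with ⟨a, _ | _⟩ <;> simp [letterSign]

variable [LinearOrder α]

/-- The sign of a comparison, as an integer. -/
def cmpSign {β : Type*} [LinearOrder β] (p q : β) : ℤ :=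
  if p < q then 1 else if q < p then -1 else 0

/-- The sign of the turn made by a path in the Cayley tree that reads the letter `l` and then the
letter `m`. -/
def turn (l m : α × Bool) : ℤ := cmpSign (toLex (l.1, !l.2)) (toLex m)

/-- The weight of a word: the sum of the signs of its letters and of its turns. -/
def weight : List (α × Bool) → ℤ
  | [] => 0
  | [l] => letterSign l
  | l :: m :: L => letterSign l + turn l m + weight (m :: L)

theorem weight_append_cons_cons (L : List (α × Bool)) (a b : α × Bool) (M : List (α × Bool)) :
    weight (L ++ a :: b :: M) = weight (L ++ [a]) + turn a b + weight (b :: M) := by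
  induction L with
  | nil => simp [weight]
  | cons c L ih =>
    cases L with
    | nil => simp [weight]; ring
    | cons d L => simp only [List.cons_append, weight] at ih ⊢; rw [ih]; ring

theorem abs_turn_le (l m : α × Bool) : |turn l m| ≤ 1 := by
  unfold turn cmpSign; split_ifs <;> simp

theorem turn_eq_one_or {l m : α × Bool} (h : l.1 = m.1 → l.2 = m.2) :
    turn l m = 1 ∨ turn l m = -1 := by
  have hne : toLex (l.1, !l.2) ≠ toLex m := by
    intro h'
    have h' := toLex.injective h'
    subst h'
    simp at h
  unfold turn cmpSign
  rcases lt_or_gt_of_ne hne with h1 | h1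
  · simp [h1]
  · simp [h1, h1.not_gt]

theorem turn_add_turn_inv (l m : α × Bool) : turn l m + turn (m.1, !m.2) (l.1, !l.2) = 0 := by
  simp only [turn, Bool.not_not, cmpSign, Prod.mk.eta]
  split_ifs <;> first | rfl | (exfalso; order)

theorem abs_turn_sub_le {a l c : α × Bool} (hal : a.1 = l.1 → a.2 = l.2)
    (hlc : (l.1, !l.2).1 = c.1 → (l.1, !l.2).2 = c.2)
    (hac : a.1 = c.1 → a.2 = c.2) :
    |turn a c - turn a l - turn (l.1, !l.2) c| ≤ 1 := by
  have h1 := turn_eq_one_or hal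
  have h2 := turn_eq_one_or hlc
  have h3 := turn_eq_one_or hac
  simp only [turn, Bool.not_not, cmpSign, Prod.mk.eta] at *
  split_ifs at * <;> first | (exfalso; order) | simp at *

theorem odd_weight : ∀ {L : List (α × Bool)}, IsReduced L → L ≠ [] → Odd (weight L)
  | [], _, h => absurd rfl h
  | [l], _, _ => by rcases l with ⟨a, _ | _⟩ <;> simp [weight, letterSign]
  | l :: m :: L, h, _ => by
    have h' := List.isChain_cons_cons.1 h
    have ih := odd_weight h'.2 (by simp)
    have h1 : Odd (turn l m) := by
      rcases turn_eq_one_or h'.1 with h | h <;> simp [h]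
    have h2 : Odd (letterSign l) := by rcases l with ⟨a, _ | _⟩ <;> simp [letterSign]
    exact (h2.add_odd h1).add_odd ih

theorem abs_weight_reduce_append_le (r v : List (α × Bool)) (hr : IsReduced r.reverse)
    (hv : IsReduced v) :
    |weight (reduce (r.reverse ++ v)) - weight r.reverse - weight v| ≤ 1 := by
  induction r generalizing v with
  | nil => simp [hv.reduce_eq, weight]
  | cons l r ih =>
    cases v with
    | nil => simp [hr.reduce_eq, weight, -List.reverse_cons]
    | cons m v =>
      by_cases hm : l.1 = m.1 → l.2 = m.2
      · have hred : IsReduced ((l :: r).reverse ++ m :: v) := by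
          refine List.IsChain.append hr hv ?_
          simpa using hm
        rw [hred.reduce_eq]
        have := weight_append_cons_cons r.reverse l m v
        simp only [List.reverse_cons, List.append_assoc, List.singleton_append] at this ⊢
        rw [this]
        convert abs_turn_le l m using 2
        ring
      · have hm' : m = (l.1, !l.2) := by
          rw [Classical.not_imp] at hm
          ext
          · exact hm.1.symm
          · simpa using (Bool.eq_not_of_ne (Ne.symm hm.2))
        subst hm'
        have hstep : reduce ((l :: r).reverse ++ (l.1, !l.2) :: v) = reduce (r.reverse ++ v) := by
          refine reduce.Step.eq ?_
          simpa using @Red.Step.not α r.reverse v l.1 l.2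
        rw [hstep]
        have hr' : IsReduced r.reverse := by
          rw [List.reverse_cons] at hr; exact hr.left_of_append
        have hv' : IsReduced v := hv.tail
        have ih := ih v hr' hv'
        cases r with
        | nil =>
          cases v with
          | nil => simp [weight, letterSign_inv]
          | cons n v =>
            simp only [List.reverse_nil, List.nil_append, hv'.reduce_eq, List.reverse_cons, weight,
              letterSign_inv]
            convert abs_turn_le (l.1, !l.2) n using 1
            rw [← abs_neg]
            congr 1
            ring
        | cons k r =>
          have hw : weight (l :: k :: r).reverse
              = weight (k :: r).reverse + turn k l + letterSign l := by
            have := weight_append_cons_cons r.reverse k l []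
            simpa [weight] using this
          have hkl : k.1 = l.1 → k.2 = l.2 := by
            have := hr
            simp only [List.reverse_cons, List.append_assoc, List.singleton_append] at this
            exact (List.isChain_cons_cons.1 this.right_of_append).1
          cases v with
          | nil =>
            rw [List.append_nil, hr'.reduce_eq, hw]
            simp only [weight, letterSign_inv]
            convert abs_turn_le k l using 1
            rw [← abs_neg]
            congr 1
            ring
          | cons n v =>
            have hln := (List.isChain_cons_cons.1 hv).1
            rw [hw]
            simp only [weight, letterSign_inv] at ih ⊢
            by_cases hn : k.1 = n.1 → k.2 = n.2
            · have hred : IsReduced ((k :: r).reverse ++ n :: v) := by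
                refine List.IsChain.append hr' hv' ?_
                simpa using hn
              rw [hred.reduce_eq]
              have := weight_append_cons_cons r.reverse k n v
              simp only [List.reverse_cons, List.append_assoc, List.singleton_append] at this ⊢
              rw [this]
              convert abs_turn_sub_le hkl hln hn using 2
              ring
            · have hn' : n = (k.1, !k.2) := by
                rw [Classical.not_imp] at hn
                ext
                · exact hn.1.symm
                · simpa using (Bool.eq_not_of_ne (Ne.symm hn.2))
              subst hn'
              convert ih using 2
              linear_combination -(turn_add_turn_inv k l)

/-- The weight of an element of a free group is the weight of its reduced word. -/
def wt (u : FreeGroup α) : ℤ := weight u.toWord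

theorem odd_wt {u : FreeGroup α} (h : u ≠ 1) : Odd (wt u) :=
  odd_weight isReduced_toWord (by simpa using h)

theorem abs_wt_mul_le (u v : FreeGroup α) : |wt (u * v) - wt u - wt v| ≤ 1 := by
  have := abs_weight_reduce_append_le u.toWord.reverse v.toWord (by simpa using isReduced_toWord)
    isReduced_toWord
  simpa [wt, toWord_mul] using this

theorem wt_inv (u : FreeGroup α) : wt u⁻¹ = -wt u := by
  by_cases h : u = 1
  · simp [h, wt, weight]
  · have h1 := odd_wt h
    have h2 := odd_wt (inv_ne_one.2 h)
    have h3 := abs_wt_mul_le u u⁻¹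
    have h4 : wt (1 : FreeGroup α) = 0 := by simp [wt, weight]
    rw [mul_inv_cancel, h4, abs_le] at h3
    obtain ⟨a, ha⟩ := h1
    obtain ⟨b, hb⟩ := h2
    omega

end FreeGroup

/-- Free groups are left-orderable. -/
theorem IsFreeGroup.exists_linearOrder (F : Type*) [Group F] [IsFreeGroup F] :
    ∃ _ : LinearOrder F, ∀ c a b : F, a < b → c * a < c * b := by
  classical
  obtain ⟨ι, ⟨b⟩⟩ := IsFreeGroup.nonempty_basis (G := F)
  let _ : LinearOrder ι := linearOrderOfSTO WellOrderingRel
  let τ : F → ℤ := fun u => FreeGroup.wt (b.repr u)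
  have hodd : ∀ u, u ≠ 1 → Odd (τ u) := fun u hu => FreeGroup.odd_wt (by simpa using hu)
  have hmul : ∀ u v, |τ (u * v) - τ u - τ v| ≤ 1 := fun u v => by
    simpa [τ] using FreeGroup.abs_wt_mul_le (b.repr u) (b.repr v)
  have hinv : ∀ u, τ u⁻¹ = -τ u := fun u => by simpa [τ] using FreeGroup.wt_inv (b.repr u)
  have hpos : ∀ u v, 0 < τ u → 0 < τ v → 0 < τ (u * v) := fun u v hu hv => by
    have := abs_le.1 (hmul u v); omega
  have h1 : τ 1 = 0 := by have := hinv 1; simp at this; omega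
  let r : F → F → Prop := fun x y => 0 < τ (x⁻¹ * y)
  have hr : IsStrictTotalOrder F r :=
    { irrefl := fun a => by simp [r, h1]
      trans := fun x y z hxy hyz => by
        have := hpos _ _ hxy hyz
        simpa [r, mul_assoc] using this
      trichotomous := fun x y hxy hyx => by
        by_contra hne
        have h2 := hodd (x⁻¹ * y) (by rwa [Ne, inv_mul_eq_one])
        have h3 := hinv (x⁻¹ * y)
        simp only [mul_inv_rev, inv_inv] at h3
        simp only [r] at hxy hyx
        obtain ⟨a, ha⟩ := h2
        omega }
  refine ⟨linearOrderOfSTO r, fun c x y h => ?_⟩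
  change 0 < τ _
  have h : 0 < τ (x⁻¹ * y) := h
  simpa [mul_assoc] using h

theorem Set.ncard_image_le_of_rel {X Y P Q : Type*} {S : Set X} {T : Set Y} {p : X → P}
    {q : Y → Q} (R : X → Y → Prop) (hT : (q '' T).Finite) (hex : ∀ x ∈ S, ∃ y ∈ T, R x y)
    (hR : ∀ x x' y y', R x y → R x' y' → q y = q y' → p x = p x') :
    (p '' S).ncard ≤ (q '' T).ncard := by
  rcases S.eq_empty_or_nonempty with rfl | ⟨x₀, hx₀⟩
  · simp
  have : Nonempty X := ⟨x₀⟩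
  have : Nonempty Y := ⟨(hex x₀ hx₀).choose⟩
  choose! f hfT hf using hex
  have hsec : ∀ a ∈ p '' S, ∃ x ∈ S, p x = a := fun a ha => ha
  choose! s hsS hs using hsec
  refine Set.ncard_le_ncard_of_injOn (fun a => q (f (s a)))
    (fun a ha => ⟨_, hfT _ (hsS a ha), rfl⟩) ?_ hT
  intro a ha a' ha' h
  rw [← hs a ha, ← hs a' ha']
  exact hR _ _ _ _ (hf _ (hsS a ha)) (hf _ (hsS a' ha')) h

/-- A graph with vertex type `V` and edge type `E`, each edge having a source and a target. -/
structure OrientedGraph (V E : Type*) where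
  /-- The source of an edge. -/
  src : E → V
  /-- The target of an edge. -/
  tgt : E → V

namespace OrientedGraph

variable {V E : Type*} (G : OrientedGraph V E)

/-- Two vertices are adjacent along an edge of `L`. -/
def Adj (L : Set E) (v w : V) : Prop :=
  ∃ e ∈ L, (G.src e = v ∧ G.tgt e = w) ∨ (G.src e = w ∧ G.tgt e = v)

/-- The connected component of `v` in the subgraph with edge set `L`. -/
def comp (L : Set E) (v : V) : Set V := {w | Relation.ReflTransGen (G.Adj L) v w}

variable {G} {L L' : Set E} {u v w : V} {e : E}

theorem Adj.symm (h : G.Adj L v w) : G.Adj L w v := by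
  obtain ⟨e, he, h⟩ := h
  exact ⟨e, he, h.symm⟩

theorem mem_comp_self : v ∈ G.comp L v := Relation.ReflTransGen.refl

theorem mem_comp_symm (h : w ∈ G.comp L v) : v ∈ G.comp L w := by
  have : Std.Symm (G.Adj L) := ⟨fun _ _ h => h.symm⟩
  exact Relation.ReflTransGen.stdSymm.symm _ _ h

theorem comp_eq_of_mem (h : w ∈ G.comp L v) : G.comp L w = G.comp L v :=
  Set.Subset.antisymm (fun _ hx => Relation.ReflTransGen.trans h hx)
    (fun _ hx => Relation.ReflTransGen.trans (mem_comp_symm h) hx)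

theorem comp_mono (h : L ⊆ L') : G.comp L v ⊆ G.comp L' v := fun _ hw =>
  Relation.ReflTransGen.mono (fun _ _ ⟨e, he, h'⟩ => ⟨e, h he, h'⟩) _ _ hw

theorem mem_comp_of_adj (h : G.Adj L v w) (hv : v ∈ G.comp L u) : w ∈ G.comp L u :=
  Relation.ReflTransGen.tail hv h

theorem comp_subset {U : Set V} (hv : v ∈ U)
    (h : ∀ e ∈ L, G.src e ∈ U ↔ G.tgt e ∈ U) : G.comp L v ⊆ U := by
  intro w hw
  induction hw with
  | refl => exact hv
  | tail _ hadj ih =>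
    obtain ⟨e, he, ⟨rfl, rfl⟩ | ⟨rfl, rfl⟩⟩ := hadj
    · exact (h e he).1 ih
    · exact (h e he).2 ih

theorem src_mem_comp_iff (he : e ∈ L) : G.src e ∈ G.comp L v ↔ G.tgt e ∈ G.comp L v :=
  ⟨mem_comp_of_adj ⟨e, he, .inl ⟨rfl, rfl⟩⟩, mem_comp_of_adj ⟨e, he, .inr ⟨rfl, rfl⟩⟩⟩

variable (G) in
/-- `p` and `q` are the two ends of the edge `e`. -/
def Ends (e : E) (p q : V) : Prop := (G.src e = p ∧ G.tgt e = q) ∨ (G.src e = q ∧ G.tgt e = p)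

section Order

variable [LinearOrder E]

variable {E₀ E₁ : Set E} {e' : E} {v' : V}

variable (G) in
/-- An edge of `E₀` is a bridge if both its ends lie in infinite components of the subgraph of the
smaller edges of `E₀`. -/
def IsBridge (E₀ : Set E) (e : E) : Prop :=
  e ∈ E₀ ∧ (G.comp (E₀ ∩ Set.Iio e) (G.src e)).Infinite ∧
    (G.comp (E₀ ∩ Set.Iio e) (G.tgt e)).Infinite

theorem IsBridge.mono (h : E₀ ⊆ E₁) (he : G.IsBridge E₀ e) : G.IsBridge E₁ e :=
  ⟨h he.1, he.2.1.mono (comp_mono (Set.inter_subset_inter_left _ h)),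
    he.2.2.mono (comp_mono (Set.inter_subset_inter_left _ h))⟩

variable [LinearOrder V]

variable (G) in
/-- Adding the edge `e` to the smaller edges of `E₀` merges the finite component with greatest
vertex `v` into a component that is infinite or has a greater vertex. -/
def Kills (E₀ : Set E) (e : E) (v : V) : Prop :=
  e ∈ E₀ ∧ ∃ p q, G.Ends e p q ∧ (G.comp (E₀ ∩ Set.Iio e) p).Finite ∧
    IsGreatest (G.comp (E₀ ∩ Set.Iio e) p) v ∧
    ((G.comp (E₀ ∩ Set.Iio e) q).Infinite ∨ ∃ w ∈ G.comp (E₀ ∩ Set.Iio e) q, v < w)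

theorem exists_kills (he : e ∈ E₀) (hb : ¬ G.IsBridge E₀ e)
    (hac : G.tgt e ∉ G.comp (E₀ ∩ Set.Iio e) (G.src e)) : ∃ v, G.Kills E₀ e v := by
  have hgreat : ∀ p, (G.comp (E₀ ∩ Set.Iio e) p).Finite →
      ∃ v, IsGreatest (G.comp (E₀ ∩ Set.Iio e) p) v := fun p hp => by
    obtain ⟨v, hv⟩ := hp.exists_maximal ⟨p, mem_comp_self⟩
    exact ⟨v, hv.1, fun w hw => le_of_not_gt fun hlt => hlt.not_ge (hv.2 hw hlt.le)⟩
  have key : ∀ p q, G.Ends e p q → q ∉ G.comp (E₀ ∩ Set.Iio e) p →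
      (G.comp (E₀ ∩ Set.Iio e) p).Finite → ∃ v, G.Kills E₀ e v := by
    intro p q hpq hq hp
    obtain ⟨v, hv⟩ := hgreat p hp
    by_cases hqf : (G.comp (E₀ ∩ Set.Iio e) q).Finite
    · obtain ⟨w, hw⟩ := hgreat q hqf
      rcases lt_trichotomy v w with h | h | h
      · exact ⟨v, he, p, q, hpq, hp, hv, .inr ⟨w, hw.1, h⟩⟩
      · subst h
        refine absurd ?_ hq
        rw [← comp_eq_of_mem hv.1, comp_eq_of_mem hw.1]
        exact mem_comp_self
      · exact ⟨w, he, q, p, hpq.symm, hqf, hw, .inr ⟨v, hv.1, h⟩⟩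
    · exact ⟨v, he, p, q, hpq, hp, hv, .inl hqf⟩
  by_cases hs : (G.comp (E₀ ∩ Set.Iio e) (G.src e)).Finite
  · exact key _ _ (.inl ⟨rfl, rfl⟩) hac hs
  · by_cases ht : (G.comp (E₀ ∩ Set.Iio e) (G.tgt e)).Finite
    · exact key _ _ (.inr ⟨rfl, rfl⟩) (fun h => hac (mem_comp_symm h)) ht
    · exact absurd ⟨he, hs, ht⟩ hb

theorem Kills.not_isBridge (h : G.Kills E₀ e v) : ¬ G.IsBridge E₀ e := by
  rintro ⟨-, h1, h2⟩
  obtain ⟨-, p, q, ⟨rfl, rfl⟩ | ⟨rfl, rfl⟩, hp, -⟩ := h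
  · exact h1 hp
  · exact h2 hp

theorem Kills.not_lt (h : G.Kills E₀ e v) (h' : G.Kills E₀ e' v) : ¬ e < e' := by
  intro hlt
  obtain ⟨he, p, q, hpq, -, hv, hq⟩ := h
  obtain ⟨-, p', q', -, hp', hv', -⟩ := h'
  have hsub : E₀ ∩ Set.Iio e ⊆ E₀ ∩ Set.Iio e' :=
    Set.inter_subset_inter_right _ (Set.Iio_subset_Iio hlt.le)
  have hpc : p ∈ G.comp (E₀ ∩ Set.Iio e') p' := by
    rw [← comp_eq_of_mem hv'.1]
    exact comp_mono hsub (mem_comp_symm hv.1)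
  have hqc : q ∈ G.comp (E₀ ∩ Set.Iio e') p' := mem_comp_of_adj ⟨e, ⟨he, hlt⟩, hpq⟩ hpc
  have hqsub : G.comp (E₀ ∩ Set.Iio e) q ⊆ G.comp (E₀ ∩ Set.Iio e') p' := by
    rw [← comp_eq_of_mem hqc]
    exact comp_mono hsub
  rcases hq with hq | ⟨w, hw, hvw⟩
  · exact hq (hp'.subset hqsub)
  · exact hvw.not_ge (hv'.2 (hqsub hw))

theorem Kills.edge_unique (h : G.Kills E₀ e v) (h' : G.Kills E₀ e' v) : e = e' :=
  le_antisymm (_root_.not_lt.1 (h'.not_lt h)) (_root_.not_lt.1 (h.not_lt h'))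

theorem Kills.vertex_unique (h : G.Kills E₀ e v) (h' : G.Kills E₀ e v') : v = v' := by
  obtain ⟨-, p, q, hpq, hp, hv, hq⟩ := h
  obtain ⟨-, p', q', hpq', hp', hv', hq'⟩ := h'
  have hcase : (p = p' ∧ q = q') ∨ (p = q' ∧ q = p') := by
    obtain ⟨rfl, rfl⟩ | ⟨rfl, rfl⟩ := hpq <;> obtain ⟨rfl, rfl⟩ | ⟨rfl, rfl⟩ := hpq' <;> simp
  obtain ⟨rfl, rfl⟩ | ⟨rfl, rfl⟩ := hcase
  · exact hv.unique hv'
  · rcases hq with hq | ⟨w, hw, hvw⟩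
    · exact absurd hp' hq
    · rcases hq' with hq' | ⟨w', hw', hvw'⟩
      · exact absurd hp hq'
      · exact absurd ((hvw.trans_le (hv'.2 hw)).trans (hvw'.trans_le (hv.2 hw'))) (lt_irrefl _)

variable (G) in
/-- An action of `Γ` on the graph that preserves the orders of the vertices and of the edges and
is free on the vertices. -/
structure OrderAction (Γ : Type*) [Group Γ] [MulAction Γ V] [MulAction Γ E] : Prop where
  src_smul : ∀ (g : Γ) (e : E), G.src (g • e) = g • G.src e
  tgt_smul : ∀ (g : Γ) (e : E), G.tgt (g • e) = g • G.tgt e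
  smul_lt_vertex : ∀ (g : Γ) (v w : V), v < w → g • v < g • w
  smul_lt_edge : ∀ (g : Γ) (e e' : E), e < e' → g • e < g • e'
  eq_one_of_smul_eq : ∀ (g : Γ) (v : V), g • v = v → g = 1

namespace OrderAction

variable {Γ : Type*} [Group Γ] [MulAction Γ V] [MulAction Γ E] (g : Γ)

theorem smul_comp_subset (hΓ : G.OrderAction Γ) : g • G.comp L v ⊆ G.comp (g • L) (g • v) := by
  rintro _ ⟨w, hw, rfl⟩
  induction hw with
  | refl => exact mem_comp_self
  | tail _ hadj ih =>
    obtain ⟨e, he, h⟩ := hadj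
    refine mem_comp_of_adj ⟨g • e, Set.smul_mem_smul_set he, ?_⟩ ih
    rw [hΓ.src_smul, hΓ.tgt_smul]
    rcases h with ⟨rfl, rfl⟩ | ⟨rfl, rfl⟩ <;> simp

theorem comp_smul (hΓ : G.OrderAction Γ) : G.comp (g • L) (g • v) = g • G.comp L v := by
  refine Set.Subset.antisymm ?_ (hΓ.smul_comp_subset g)
  have := hΓ.smul_comp_subset g⁻¹ (L := g • L) (v := g • v)
  rwa [inv_smul_smul, inv_smul_smul, Set.smul_set_subset_iff_subset_inv_smul_set, inv_inv] at this

theorem smul_lt_edge_iff (hΓ : G.OrderAction Γ) {g : Γ} {e e' : E} : g • e < g • e' ↔ e < e' :=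
  ⟨fun h => by simpa using hΓ.smul_lt_edge g⁻¹ _ _ h, hΓ.smul_lt_edge g e e'⟩

theorem smul_lt_vertex_iff (hΓ : G.OrderAction Γ) {g : Γ} {v w : V} : g • v < g • w ↔ v < w :=
  ⟨fun h => by simpa using hΓ.smul_lt_vertex g⁻¹ _ _ h, hΓ.smul_lt_vertex g v w⟩

theorem smul_Iio (hΓ : G.OrderAction Γ) : g • Set.Iio e = Set.Iio (g • e) := by
  ext x
  rw [Set.mem_smul_set_iff_inv_smul_mem, Set.mem_Iio, Set.mem_Iio, ← hΓ.smul_lt_edge_iff (g := g),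
    smul_inv_smul]

theorem smul_Iic (hΓ : G.OrderAction Γ) : g • Set.Iic e = Set.Iic (g • e) := by
  ext x
  rw [Set.mem_smul_set_iff_inv_smul_mem, Set.mem_Iic, Set.mem_Iic, ← not_lt,
    ← hΓ.smul_lt_edge_iff (g := g), smul_inv_smul, not_lt]

theorem smul_isGreatest (hΓ : G.OrderAction Γ) {U : Set V} (h : IsGreatest U v) :
    IsGreatest (g • U) (g • v) := by
  refine ⟨Set.smul_mem_smul_set h.1, ?_⟩
  rintro _ ⟨w, hw, rfl⟩
  exact le_of_not_gt fun hlt => (hΓ.smul_lt_vertex_iff.1 hlt).not_ge (h.2 hw)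

theorem comp_inter_Iio_smul (hΓ : G.OrderAction Γ) :
    G.comp ((g • E₀) ∩ Set.Iio (g • e)) (g • v) = g • G.comp (E₀ ∩ Set.Iio e) v := by
  rw [← hΓ.comp_smul, Set.smul_set_inter, hΓ.smul_Iio]

theorem isBridge_smul (hΓ : G.OrderAction Γ) (he : G.IsBridge E₀ e) :
    G.IsBridge (g • E₀) (g • e) := by
  refine ⟨Set.smul_mem_smul_set he.1, ?_, ?_⟩
  · rw [hΓ.src_smul, hΓ.comp_inter_Iio_smul, Set.infinite_smul_set]; exact he.2.1
  · rw [hΓ.tgt_smul, hΓ.comp_inter_Iio_smul, Set.infinite_smul_set]; exact he.2.2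

theorem kills_smul (hΓ : G.OrderAction Γ) (h : G.Kills E₀ e v) :
    G.Kills (g • E₀) (g • e) (g • v) := by
  obtain ⟨he, p, q, hpq, hp, hv, hq⟩ := h
  refine ⟨Set.smul_mem_smul_set he, g • p, g • q, ?_, ?_, ?_, ?_⟩
  · rw [Ends, hΓ.src_smul, hΓ.tgt_smul]
    rcases hpq with ⟨rfl, rfl⟩ | ⟨rfl, rfl⟩ <;> simp
  · rwa [hΓ.comp_inter_Iio_smul, Set.finite_smul_set]
  · rw [hΓ.comp_inter_Iio_smul]; exact hΓ.smul_isGreatest g hv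
  · rw [hΓ.comp_inter_Iio_smul, Set.infinite_smul_set]
    refine hq.imp_right ?_
    rintro ⟨w, hw, hvw⟩
    exact ⟨g • w, Set.smul_mem_smul_set hw, hΓ.smul_lt_vertex g _ _ hvw⟩

variable {QV QE : Type*} {πV : V → QV} {πE : E → QE} {V₀ : Set V}

/-- Modulo `Γ`, there are at most as many non-bridges as vertices. -/
theorem ncard_not_isBridge_le (hΓ : G.OrderAction Γ) (hinv : ∀ g : Γ, g • E₀ = E₀)
    (hends : ∀ e ∈ E₀, G.src e ∈ V₀ ∧ G.tgt e ∈ V₀)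
    (hac : ∀ e ∈ E₀, G.tgt e ∉ G.comp (E₀ ∩ Set.Iio e) (G.src e))
    (hπV : ∀ v w, πV v = πV w → ∃ g : Γ, g • v = w)
    (hπE : ∀ (g : Γ) (e : E), πE (g • e) = πE e) (hV : (πV '' V₀).Finite) :
    (πE '' {e ∈ E₀ | ¬ G.IsBridge E₀ e}).ncard ≤ (πV '' V₀).ncard := by
  refine Set.ncard_image_le_of_rel (G.Kills E₀) hV ?_ ?_
  · rintro e ⟨he, hb⟩
    obtain ⟨v, hv⟩ := exists_kills he hb (hac e he)
    refine ⟨v, ?_, hv⟩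
    obtain ⟨-, p, q, hpq, -, hv, -⟩ := hv
    have hp : p ∈ V₀ := by
      rcases hpq with ⟨rfl, rfl⟩ | ⟨rfl, rfl⟩
      · exact (hends e he).1
      · exact (hends e he).2
    exact comp_subset hp (fun e' he' => by simp [hends e' he'.1]) hv.1
  · intro e e' v v' h h' hvv
    obtain ⟨g, rfl⟩ := hπV _ _ hvv
    have := hΓ.kills_smul g h
    rw [hinv g] at this
    rw [← this.edge_unique h', hπE]

theorem exists_kills_vertex (hΓ : G.OrderAction Γ) (hinv : ∀ g : Γ, g • E₀ = E₀)
    (hπE : ∀ e e', πE e = πE e' → ∃ g : Γ, g • e = e') (hE : (πE '' E₀).Finite)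
    (hv : (G.comp E₀ v).Infinite) : ∃ e, G.Kills E₀ e v := by
  set Q : Set E := {e ∈ E₀ | G.src e ∈ G.comp (E₀ ∩ Set.Iic e) v ∧
    (G.comp (E₀ ∩ Set.Iic e) v).Finite ∧ IsGreatest (G.comp (E₀ ∩ Set.Iic e) v) v} with hQ
  have hfin_of_inj : ∀ S : Set E, S ⊆ E₀ → (∀ e ∈ S, ∀ g : Γ, g • e ∈ S → g = 1) → S.Finite := by
    intro S hS h
    refine Set.Finite.of_finite_image (f := πE) (hE.subset (Set.image_mono hS)) ?_
    intro e he e' he' hee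
    obtain ⟨g, rfl⟩ := hπE _ _ hee
    rw [h e he g he', one_smul]
  have hQfin : Q.Finite := by
    refine hfin_of_inj Q (fun e he => he.1) ?_
    rintro e ⟨he, hs, -, hgr⟩ g ⟨-, hs', -, hgr'⟩
    have h1 : G.comp (E₀ ∩ Set.Iic (g • e)) v = g • G.comp (E₀ ∩ Set.Iic e) v := by
      rw [← comp_eq_of_mem hs', ← comp_eq_of_mem hs, hΓ.src_smul, ← hΓ.comp_smul,
        Set.smul_set_inter, hΓ.smul_Iic, hinv]
    rw [h1] at hgr'
    exact hΓ.eq_one_of_smul_eq g v ((hΓ.smul_isGreatest g hgr).unique hgr')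
  obtain ⟨M, hMlow, hMQ, hUfin, hUv⟩ : ∃ M : Set E, (∀ e ∈ M, ∀ e' ≤ e, e' ∈ M) ∧ Q ⊆ M ∧
      (G.comp (E₀ ∩ M) v).Finite ∧ IsGreatest (G.comp (E₀ ∩ M) v) v := by
    rcases Q.eq_empty_or_nonempty with hQe | hQn
    · refine ⟨∅, by simp, by simp [hQe], ?_⟩
      have : G.comp (E₀ ∩ ∅) v = {v} :=
        Set.Subset.antisymm (comp_subset rfl (by simp)) (by simpa using mem_comp_self)
      rw [this]
      exact ⟨Set.finite_singleton v, isGreatest_singleton⟩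
    · obtain ⟨m, hm⟩ := hQfin.exists_maximal hQn
      refine ⟨Set.Iic m, fun e he e' he' => le_trans he' he, fun e he => ?_, hm.1.2.2⟩
      exact le_of_not_gt fun hlt => hlt.not_ge (hm.2 he hlt.le)
  set U := G.comp (E₀ ∩ M) v with hU
  set B : Set E := {e ∈ E₀ | ¬ (G.src e ∈ U ↔ G.tgt e ∈ U)} with hB
  have hBfin : B.Finite := by
    have h1 : ∀ u, {e ∈ E₀ | G.src e = u}.Finite := fun u => by
      refine hfin_of_inj _ (fun e he => he.1) ?_
      rintro e ⟨he, rfl⟩ g ⟨-, hg⟩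
      exact hΓ.eq_one_of_smul_eq g _ (by rwa [hΓ.src_smul] at hg)
    have h2 : ∀ u, {e ∈ E₀ | G.tgt e = u}.Finite := fun u => by
      refine hfin_of_inj _ (fun e he => he.1) ?_
      rintro e ⟨he, rfl⟩ g ⟨-, hg⟩
      exact hΓ.eq_one_of_smul_eq g _ (by rwa [hΓ.tgt_smul] at hg)
    refine (hUfin.biUnion fun u _ => (h1 u).union (h2 u)).subset ?_
    rintro e ⟨he, hne⟩
    simp only [Set.mem_iUnion]
    by_cases hs : G.src e ∈ U
    · exact ⟨_, hs, .inl ⟨he, rfl⟩⟩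
    · have ht : G.tgt e ∈ U := by tauto
      exact ⟨_, ht, .inr ⟨he, rfl⟩⟩
  have hBne : B.Nonempty := by
    by_contra hne
    refine hv (hUfin.subset (comp_subset mem_comp_self fun e he => ?_))
    by_contra h
    exact hne ⟨e, he, h⟩
  obtain ⟨e, heB⟩ := hBfin.exists_minimal hBne
  have hemin : ∀ e' ∈ E₀, e' < e → (G.src e' ∈ U ↔ G.tgt e' ∈ U) := fun e' he' hlt => by
    by_contra h
    exact hlt.not_ge (heB.2 ⟨he', h⟩ hlt.le)
  have heM : e ∉ M := fun h => heB.1.2 (src_mem_comp_iff ⟨heB.1.1, h⟩)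
  have hMlt : ∀ e' ∈ M, e' < e := fun e' he' => lt_of_not_ge fun h => heM (hMlow e' he' e h)
  have hcomp : G.comp (E₀ ∩ Set.Iio e) v = U :=
    Set.Subset.antisymm (comp_subset mem_comp_self fun e' he' => hemin e' he'.1 he'.2)
      (comp_mono (Set.inter_subset_inter_right _ hMlt))
  obtain ⟨p, q, hpq, hp, hq⟩ : ∃ p q, G.Ends e p q ∧ p ∈ U ∧ q ∉ U := by
    by_cases hs : G.src e ∈ U
    · exact ⟨_, _, .inl ⟨rfl, rfl⟩, hs, fun ht => heB.1.2 (by simp [hs, ht])⟩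
    · exact ⟨_, _, .inr ⟨rfl, rfl⟩, by have := heB.1.2; tauto, hs⟩
  have hcp : G.comp (E₀ ∩ Set.Iio e) p = U := by
    rw [← hcomp] at hp ⊢
    exact comp_eq_of_mem hp
  by_contra hno
  have hK : ¬ ((G.comp (E₀ ∩ Set.Iio e) q).Infinite ∨
      ∃ w ∈ G.comp (E₀ ∩ Set.Iio e) q, v < w) := fun h =>
    hno ⟨e, heB.1.1, p, q, hpq, by rwa [hcp], by rwa [hcp], h⟩
  push Not at hK
  have hqU : q ∈ G.comp (E₀ ∩ Set.Iio e) q := mem_comp_self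
  have hsub : G.comp (E₀ ∩ Set.Iic e) v ⊆ U ∪ G.comp (E₀ ∩ Set.Iio e) q := by
    refine comp_subset (.inl mem_comp_self) ?_
    rintro e' ⟨he', hle⟩
    rcases (Set.mem_Iic.1 hle).lt_or_eq with hlt | rfl
    · rw [Set.mem_union, Set.mem_union, hemin e' he' hlt,
        src_mem_comp_iff (show e' ∈ E₀ ∩ Set.Iio e from ⟨he', hlt⟩)]
    · rcases hpq with ⟨rfl, rfl⟩ | ⟨rfl, rfl⟩ <;> simp [hp, hqU]
  have hvU : U ⊆ G.comp (E₀ ∩ Set.Iic e) v := by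
    rw [← hcomp]
    exact comp_mono (Set.inter_subset_inter_right _ Set.Iio_subset_Iic_self)
  refine heM (hMQ ⟨heB.1.1, ?_, ?_, mem_comp_self, ?_⟩)
  · have hsrc : G.src e ∈ G.comp (E₀ ∩ Set.Iic e) v ∨ G.tgt e ∈ G.comp (E₀ ∩ Set.Iic e) v := by
      rcases hpq with ⟨rfl, rfl⟩ | ⟨rfl, rfl⟩
      · exact .inl (hvU hp)
      · exact .inr (hvU hp)
    exact hsrc.elim id (src_mem_comp_iff (L := E₀ ∩ Set.Iic e) ⟨heB.1.1, le_refl e⟩).2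
  · exact (hUfin.union hK.1).subset hsub
  · intro w hw
    rcases hsub hw with h | h
    · exact hUv.2 h
    · exact hK.2 w h

/-- Modulo `Γ`, there are at least as many non-bridges as vertices in infinite components. -/
theorem le_ncard_not_isBridge (hΓ : G.OrderAction Γ) (hinv : ∀ g : Γ, g • E₀ = E₀)
    (hπE : ∀ e e', πE e = πE e' → ∃ g : Γ, g • e = e') (hE : (πE '' E₀).Finite)
    (hπV : ∀ (g : Γ) (v : V), πV (g • v) = πV v)
    (hinf : ∀ v ∈ V₀, (G.comp E₀ v).Infinite) :
    (πV '' V₀).ncard ≤ (πE '' {e ∈ E₀ | ¬ G.IsBridge E₀ e}).ncard := by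
  refine Set.ncard_image_le_of_rel (fun v e => G.Kills E₀ e v)
    (hE.subset (Set.image_mono (Set.sep_subset _ _))) ?_ ?_
  · intro v hv
    obtain ⟨e, he⟩ := hΓ.exists_kills_vertex hinv hπE hE (hinf v hv)
    exact ⟨e, ⟨he.1, he.not_isBridge⟩, he⟩
  · intro v v' e e' h h' hee
    obtain ⟨g, rfl⟩ := hπE _ _ hee
    have := hΓ.kills_smul g h
    rw [hinv g] at this
    rw [← this.vertex_unique h', hπV]

end OrderAction

end Order

end OrientedGraph

namespace FreeGroupBasis

variable {ι F : Type*} [Group F] (b : FreeGroupBasis ι F)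

theorem closure_range : Subgroup.closure (Set.range b) = ⊤ := by
  have h : Set.range b = b.repr.symm.toMonoidHom '' Set.range FreeGroup.of := by
    rw [← Set.range_comp]; rfl
  rw [h, ← MonoidHom.map_closure, FreeGroup.closure_range_of, ← MonoidHom.range_eq_map]
  exact MonoidHom.range_eq_top.2 b.repr.symm.surjective

theorem induction_right {P : F → Prop} (one : P 1) (mul : ∀ f i, P f → P (f * b i))
    (mul_inv : ∀ f i, P f → P (f * (b i)⁻¹)) (f : F) : P f := by
  have hf : f ∈ Subgroup.closure (Set.range b) := by rw [b.closure_range]; trivial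
  induction hf using Subgroup.closure_induction_right with
  | one => exact one
  | mul_right x hx y hy ih =>
    obtain ⟨i, rfl⟩ := hy
    exact mul x i ih
  | mul_inv_cancel x hx y hy ih =>
    obtain ⟨i, rfl⟩ := hy
    exact mul_inv x i ih

end FreeGroupBasis

/-- The edges of the Cayley graph of `G` with respect to a family indexed by `ι`. -/
@[ext]
structure CayleyEdge (G ι : Type*) where
  /-- The source of the edge. -/
  vertex : G
  /-- The label of the edge. -/
  label : ι

namespace CayleyEdge

variable {G ι : Type*}

instance [LinearOrder G] [LinearOrder ι] : LinearOrder (CayleyEdge G ι) :=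
  LinearOrder.lift' (fun e => toLex (e.vertex, e.label)) fun e e' h => by
    have := toLex.injective h
    ext
    · exact congrArg Prod.fst this
    · exact congrArg Prod.snd this

theorem lt_iff [LinearOrder G] [LinearOrder ι] {e e' : CayleyEdge G ι} :
    e < e' ↔ e.vertex < e'.vertex ∨ e.vertex = e'.vertex ∧ e.label < e'.label :=
  Prod.Lex.toLex_lt_toLex

variable [Group G]

instance : MulAction G (CayleyEdge G ι) where
  smul g e := ⟨g * e.vertex, e.label⟩
  one_smul _ := CayleyEdge.ext (one_mul _) rfl
  mul_smul g h _ := CayleyEdge.ext (mul_assoc g h _) rfl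

end CayleyEdge

namespace Subgroup

variable {G ι : Type*} [Group G] (C : Subgroup G)

/-- The orbit of an element under left multiplication by `C`. -/
def orbV (x : G) : Quotient (QuotientGroup.rightRel C) := Quotient.mk _ x

/-- The orbit of an edge of a Cayley graph under left multiplication by `C`. -/
def orbE (e : CayleyEdge G ι) : Quotient (QuotientGroup.rightRel C) × ι :=
  (C.orbV e.vertex, e.label)

variable {C}

theorem orbV_eq_iff {x y : G} : C.orbV x = C.orbV y ↔ ∃ c : C, c • x = y := by
  rw [orbV, orbV, Quotient.eq, QuotientGroup.rightRel_apply]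
  constructor
  · intro h
    exact ⟨⟨_, h⟩, by simp [Subgroup.smul_def]⟩
  · rintro ⟨c, rfl⟩
    simp [Subgroup.smul_def]

theorem orbE_eq_iff {e e' : CayleyEdge G ι} : C.orbE e = C.orbE e' ↔ ∃ c : C, c • e = e' := by
  rw [orbE, orbE, Prod.mk.injEq, orbV_eq_iff]
  constructor
  · rintro ⟨⟨c, hc⟩, h⟩
    exact ⟨c, CayleyEdge.ext hc h⟩
  · rintro ⟨c, rfl⟩
    exact ⟨⟨c, rfl⟩, rfl⟩

theorem orbV_smul (c : C) (x : G) : C.orbV (c • x) = C.orbV x :=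
  (orbV_eq_iff.2 ⟨c, rfl⟩).symm

theorem orbE_smul (c : C) (e : CayleyEdge G ι) : C.orbE (c • e) = C.orbE e :=
  (orbE_eq_iff.2 ⟨c, rfl⟩).symm

end Subgroup

namespace FreeGroupBasis

open OrientedGraph

variable {ι F : Type*} [Group F] (b : FreeGroupBasis ι F)

/-- The Cayley graph of a free group with respect to a basis. -/
@[simps]
def cayley : OrientedGraph F (CayleyEdge F ι) where
  src e := e.vertex
  tgt e := e.vertex * b e.label

/-- Functions on the edges of the Cayley tree can be integrated. -/
theorem exists_primitive {k : Type*} [AddGroup k] (φ : CayleyEdge F ι → k) :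
    ∃ Φ : F → k, Φ 1 = 0 ∧ ∀ f i, Φ (f * b i) = Φ f + φ ⟨f, i⟩ := by
  let σ : ι → Equiv.Perm (F × k) := fun i =>
    { toFun := fun p => (p.1 * b i, p.2 + φ ⟨p.1, i⟩)
      invFun := fun p => (p.1 * (b i)⁻¹, p.2 - φ ⟨p.1 * (b i)⁻¹, i⟩)
      left_inv := fun p => by simp
      right_inv := fun p => by simp }
  let H : F →* (Equiv.Perm (F × k))ᵐᵒᵖ := b.lift fun i => MulOpposite.op (σ i)
  have hH : ∀ i, H (b i) = MulOpposite.op (σ i) := fun i => by simp [H]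
  let ψ : F → F × k := fun f => (H f).unop (1, 0)
  have hψ : ∀ f i, ψ (f * b i) = σ i (ψ f) := fun f i => by simp [ψ, hH]
  have hψ' : ∀ f i, ψ (f * (b i)⁻¹) = (σ i)⁻¹ (ψ f) := fun f i => by simp [ψ, hH]
  have h1 : ∀ f, (ψ f).1 = f := by
    intro f
    induction f using b.induction_right with
    | one => simp [ψ]
    | mul f i ih => rw [hψ]; simp [σ, ih]
    | mul_inv f i ih => rw [hψ']; simp [σ, Equiv.Perm.inv_def, ih]
  refine ⟨fun f => (ψ f).2, by simp [ψ], fun f i => ?_⟩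
  simp only [hψ]
  simp [σ, h1]

theorem comp_univ (x : F) : b.cayley.comp Set.univ x = Set.univ := by
  have h : ∀ y, y ∈ b.cayley.comp Set.univ 1 := by
    intro y
    induction y using b.induction_right with
    | one => exact mem_comp_self
    | mul f i ih =>
      exact mem_comp_of_adj ⟨⟨f, i⟩, trivial, .inl ⟨rfl, rfl⟩⟩ ih
    | mul_inv f i ih =>
      exact mem_comp_of_adj ⟨⟨f * (b i)⁻¹, i⟩, trivial, .inr ⟨rfl, by simp⟩⟩ ih
  rw [comp_eq_of_mem (h x)]
  exact Set.eq_univ_of_forall h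

/-- The edge `e` of the Cayley tree separates `x` from `y`. -/
def Sep (e : CayleyEdge F ι) (x y : F) : Prop := y ∉ b.cayley.comp {e}ᶜ x

variable {b} {e : CayleyEdge F ι} {x y z : F}

theorem sep_src_tgt : b.Sep e (b.cayley.src e) (b.cayley.tgt e) := by
  classical
  obtain ⟨Φ, -, hΦ⟩ := b.exists_primitive (k := ℤ) fun e' => if e' = e then 1 else 0
  intro h
  have hsub : b.cayley.comp {e}ᶜ (b.cayley.src e) ⊆ {y | Φ y = Φ e.vertex} := by
    refine comp_subset rfl fun e' he' => ?_
    simp only [cayley_src, cayley_tgt, Set.mem_ofPred_eq, hΦ]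
    rw [if_neg (by simpa using he'), add_zero]
  have := hsub h
  simp [hΦ] at this

theorem tgt_notMem_comp {E₀ : Set (CayleyEdge F ι)} (he : e ∉ E₀) :
    b.cayley.tgt e ∉ b.cayley.comp E₀ (b.cayley.src e) := fun h =>
  sep_src_tgt (comp_mono (fun e' h' (heq : e' = e) => he (heq ▸ h')) h)

theorem Sep.symm (h : b.Sep e x y) : b.Sep e y x := fun h' => h (mem_comp_symm h')

theorem Sep.or (h : b.Sep e x z) (y : F) : b.Sep e x y ∨ b.Sep e y z := by
  by_contra! hc
  simp only [Sep, not_not] at hc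
  exact h (by rw [← comp_eq_of_mem hc.1]; exact hc.2)

theorem sep_of_not_sep (h : ¬ b.Sep e x y) (h' : b.Sep e y z) : b.Sep e x z := by
  simp only [Sep, not_not] at h
  rwa [Sep, ← comp_eq_of_mem h]

theorem sep_iff_of_ends {e' : CayleyEdge F ι} (hee : e' ≠ e) (hyz : b.cayley.Ends e' y z) :
    b.Sep e x y ↔ b.Sep e x z := by
  have hadj : b.cayley.Adj {e}ᶜ y z := ⟨e', hee, hyz⟩
  exact not_congr ⟨mem_comp_of_adj hadj, mem_comp_of_adj hadj.symm⟩

theorem sep_of_ends (hyz : b.cayley.Ends e y z) : b.Sep e y z := by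
  rcases hyz with ⟨rfl, rfl⟩ | ⟨rfl, rfl⟩
  · exact sep_src_tgt
  · exact sep_src_tgt.symm

theorem smul_src (g : F) (e : CayleyEdge F ι) : b.cayley.src (g • e) = g • b.cayley.src e := rfl

theorem smul_tgt (g : F) (e : CayleyEdge F ι) : b.cayley.tgt (g • e) = g • b.cayley.tgt e :=
  mul_assoc _ _ _

theorem Sep.smul (g : F) (h : b.Sep e x y) : b.Sep (g • e) (g * x) (g * y) := by
  intro h'
  refine h ?_
  have hsub : b.cayley.comp {g • e}ᶜ (g * x) ⊆ {z | g⁻¹ * z ∈ b.cayley.comp {e}ᶜ x} := by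
    refine comp_subset (by simpa using mem_comp_self) fun e' he' => ?_
    have h1 : g⁻¹ • e' ∈ ({e}ᶜ : Set (CayleyEdge F ι)) := by
      rw [Set.mem_compl_singleton_iff] at he' ⊢
      rintro rfl
      simp at he'
    have := src_mem_comp_iff (G := b.cayley) (v := x) h1
    rwa [smul_src, smul_tgt] at this
  simpa using hsub h'

theorem exists_ends (b : FreeGroupBasis ι F) {P : F → Prop} (x : F) (one : P x)
    (step : ∀ e y z, b.cayley.Ends e y z → P y → P z) (y : F) : P y := by
  have h : y ∈ b.cayley.comp Set.univ x := by rw [b.comp_univ]; trivial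
  induction h with
  | refl => exact one
  | tail _ h ih =>
    obtain ⟨e, -, h⟩ := h
    exact step e _ _ h ih

theorem finite_setOf_sep (x y : F) : {e | b.Sep e x y}.Finite := by
  induction y using b.exists_ends x with
  | one => simp [Sep, mem_comp_self]
  | step e y z hyz ih =>
    refine (ih.insert e).subset fun e' he' => ?_
    by_cases hee : e' = e
    · exact .inl hee
    · exact .inr ((sep_iff_of_ends (Ne.symm hee) hyz).2 he')

/-- Any two vertices are connected by the edges that separate them. -/
theorem mem_comp_setOf_sep (x y : F) : y ∈ b.cayley.comp {e | b.Sep e x y} x := by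
  induction y using b.exists_ends x with
  | one => exact mem_comp_self
  | step e y z hyz ih =>
    by_cases h : b.Sep e x y
    · have hsub : {e' | b.Sep e' x y} \ {e} ⊆ {e' | b.Sep e' x z} := fun e' he' =>
        (sep_iff_of_ends (fun h => he'.2 h.symm) hyz).1 he'.1
      refine comp_mono hsub ?_
      set U := b.cayley.comp ({e' | b.Sep e' x y} \ {e}) x with hU
      by_contra hz
      have hy : y ∉ U := fun hy => h (comp_mono (fun e' he' => he'.2) hy)
      refine hy (comp_subset (U := U) mem_comp_self (fun e' he' => ?_) ih)
      by_cases hee : e' = e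
      · subst hee
        rcases hyz with ⟨h1, h2⟩ | ⟨h1, h2⟩ <;> simp only [h1, h2, hy, hz]
      · exact src_mem_comp_iff ⟨he', hee⟩
    · have hz : b.Sep e x z := sep_of_not_sep h (sep_of_ends hyz)
      refine mem_comp_of_adj ⟨e, hz, hyz⟩ (comp_mono (fun e' he' => ?_) ih)
      refine (sep_iff_of_ends (fun hee => ?_) hyz).1 he'
      subst hee
      exact h he'

variable (b)

/-- The edges of the subtree spanned by `Y`. -/
def hullE (Y : Set F) : Set (CayleyEdge F ι) := {e | ∃ x ∈ Y, ∃ y ∈ Y, b.Sep e x y}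

/-- The vertices of the subtree spanned by `Y`. -/
def hullV (Y : Set F) : Set F :=
  Y ∪ (b.cayley.src '' b.hullE Y ∪ b.cayley.tgt '' b.hullE Y)

variable {b} {Y Y' : Set F}

theorem hullE_mono (h : Y ⊆ Y') : b.hullE Y ⊆ b.hullE Y' := by
  rintro e ⟨x, hx, y, hy, hs⟩
  exact ⟨x, h hx, y, h hy, hs⟩

theorem ends_mem_hullV (he : e ∈ b.hullE Y) :
    b.cayley.src e ∈ b.hullV Y ∧ b.cayley.tgt e ∈ b.hullV Y :=
  ⟨.inr (.inl ⟨e, he, rfl⟩), .inr (.inr ⟨e, he, rfl⟩)⟩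

theorem smul_hullE_subset (g : F) : g • b.hullE Y ⊆ b.hullE (g • Y) := by
  rintro _ ⟨e, ⟨x, hx, y, hy, hs⟩, rfl⟩
  exact ⟨g * x, Set.smul_mem_smul_set hx, g * y, Set.smul_mem_smul_set hy, hs.smul g⟩

theorem smul_hullE (g : F) : g • b.hullE Y = b.hullE (g • Y) := by
  refine Set.Subset.antisymm (smul_hullE_subset g) ?_
  rw [Set.subset_smul_set_iff]
  simpa using smul_hullE_subset g⁻¹ (Y := g • Y) (b := b)

theorem mem_comp_hullE (hx : x ∈ Y) (hy : y ∈ b.hullV Y) : y ∈ b.cayley.comp (b.hullE Y) x := by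
  have hY : ∀ z ∈ Y, z ∈ b.cayley.comp (b.hullE Y) x := fun z hz =>
    comp_mono (L' := b.hullE Y) (fun _ he => ⟨x, hx, z, hz, he⟩) (mem_comp_setOf_sep x z)
  have hends : ∀ e ∈ b.hullE Y, b.cayley.src e ∈ b.cayley.comp (b.hullE Y) x := by
    intro e he
    by_contra hc
    have hc' : b.cayley.tgt e ∉ b.cayley.comp (b.hullE Y) x := by
      rwa [← src_mem_comp_iff he]
    have hsub : b.cayley.comp (b.hullE Y) x ⊆ b.cayley.comp {e}ᶜ x := by
      have : b.cayley.comp (b.hullE Y) x ⊆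
          b.cayley.comp {e}ᶜ x ∩ b.cayley.comp (b.hullE Y) x := by
        refine comp_subset (U := b.cayley.comp {e}ᶜ x ∩ b.cayley.comp (b.hullE Y) x)
          ⟨mem_comp_self, mem_comp_self⟩ fun e' he' => ?_
        by_cases hee : e' = e
        · subst hee
          simp only [Set.mem_inter_iff, hc, hc', and_false]
        · exact and_congr (src_mem_comp_iff (L := {e}ᶜ) hee) (src_mem_comp_iff he')
      exact this.trans Set.inter_subset_left
    obtain ⟨u, hu, v, hv, huv⟩ := he
    refine huv ?_
    rw [comp_eq_of_mem (hsub (hY u hu))]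
    exact hsub (hY v hv)
  rcases hy with hy | ⟨e, he, rfl⟩ | ⟨e, he, rfl⟩
  · exact hY y hy
  · exact hends e he
  · exact (src_mem_comp_iff he).1 (hends e he)

variable {C : Subgroup F} {R : Set F}

theorem smul_coe_mul (c : C) : (c : F) • ((C : Set F) * R) = (C : Set F) * R := by
  rw [← smul_mul_assoc, smul_coe_set c.2]

theorem exists_finite_hullE (hC : C.FG) (hR : R.Finite) :
    ∃ K : Set (CayleyEdge F ι), K.Finite ∧
      ∀ e ∈ b.hullE ((C : Set F) * R), ∃ c : C, ∃ e' ∈ K, c • e' = e := by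
  obtain ⟨S, rfl⟩ := hC
  set C := Subgroup.closure (S : Set F) with hCdef
  refine ⟨(⋃ s ∈ (S : Set F), {e | b.Sep e 1 s}) ∪ ⋃ r ∈ R, {e | b.Sep e 1 r},
    (S.finite_toSet.biUnion fun s _ => finite_setOf_sep 1 s).union
      (hR.biUnion fun r _ => finite_setOf_sep 1 r), ?_⟩
  have htrans : ∀ (c : C) (e : CayleyEdge F ι) (x y : F), b.Sep e (c * x) (c * y) →
      b.Sep ((c⁻¹ : C) • e) x y := fun c e x y h => by
    simpa [Subgroup.smul_def] using h.smul (c : F)⁻¹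
  have hgen : ∀ d ∈ C, ∀ e, b.Sep e 1 d →
      ∃ c : C, ∃ e' ∈ ⋃ s ∈ (S : Set F), {e | b.Sep e 1 s}, c • e' = e := by
    intro d hd
    induction hd using Subgroup.closure_induction_right with
    | one => exact fun e he => absurd mem_comp_self he
    | mul_right x hx s hs ih =>
      intro e he
      rcases he.or x with h | h
      · exact ih e h
      · refine ⟨⟨x, hx⟩, _, Set.mem_biUnion hs (htrans ⟨x, hx⟩ e 1 s (by simpa using h)), ?_⟩
        simp
    | mul_inv_cancel x hx s hs ih =>
      intro e he
      rcases he.or x with h | h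
      · exact ih e h
      · have hxs : x * s⁻¹ ∈ C := C.mul_mem hx (C.inv_mem (Subgroup.subset_closure hs))
        refine ⟨⟨_, hxs⟩, _, Set.mem_biUnion hs
          (htrans ⟨_, hxs⟩ e 1 s (by simpa using h.symm)), ?_⟩
        simp
  rintro e ⟨_, ⟨c, hc, r, hr, rfl⟩, _, ⟨c', hc', r', hr', rfl⟩, h⟩
  rcases h.or c with h | h
  · refine ⟨⟨c, hc⟩, _, .inr (Set.mem_biUnion hr
      (htrans ⟨c, hc⟩ e 1 r (by simpa using h.symm))), ?_⟩
    simp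
  rcases h.or c' with h | h
  · obtain ⟨d, e', he', hd⟩ := hgen (c⁻¹ * c') (C.mul_mem (C.inv_mem hc) hc') _
      (htrans ⟨c, hc⟩ e 1 (c⁻¹ * c') (by simpa using h))
    refine ⟨⟨c, hc⟩ * d, e', .inl he', ?_⟩
    rw [mul_smul, hd, smul_inv_smul]
  · refine ⟨⟨c', hc'⟩, _, .inr (Set.mem_biUnion hr'
      (htrans ⟨c', hc'⟩ e 1 r' (by simpa using h))), ?_⟩
    simp

theorem finite_orbE_hullE (hC : C.FG) (hR : R.Finite) :
    (C.orbE '' b.hullE ((C : Set F) * R)).Finite := by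
  obtain ⟨K, hK, h⟩ := exists_finite_hullE (b := b) hC hR
  refine (hK.image C.orbE).subset ?_
  rintro _ ⟨e, he, rfl⟩
  obtain ⟨c, e', he', rfl⟩ := h e he
  exact ⟨e', he', (Subgroup.orbE_smul c e').symm⟩

theorem finite_orbV_hullV (hC : C.FG) (hR : R.Finite) :
    (C.orbV '' b.hullV ((C : Set F) * R)).Finite := by
  obtain ⟨K, hK, h⟩ := exists_finite_hullE (b := b) hC hR
  refine ((hR.union ((hK.image b.cayley.src).union (hK.image b.cayley.tgt))).image C.orbV).subset ?_
  rintro _ ⟨v, ⟨c, hc, r, hr, rfl⟩ | ⟨e, he, rfl⟩ | ⟨e, he, rfl⟩, rfl⟩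
  · exact ⟨r, .inl hr, (Subgroup.orbV_smul ⟨c, hc⟩ r).symm⟩
  · obtain ⟨c, e', he', rfl⟩ := h e he
    exact ⟨_, .inr (.inl ⟨e', he', rfl⟩), (Subgroup.orbV_smul c _).symm⟩
  · obtain ⟨c, e', he', rfl⟩ := h e he
    refine ⟨_, .inr (.inr ⟨e', he', rfl⟩), ?_⟩
    have : b.cayley.tgt (c • e') = c • b.cayley.tgt e' := smul_tgt (c : F) e'
    rw [this, Subgroup.orbV_smul]

end FreeGroupBasis

/-- The homomorphisms from `C` to the additive group of rational numbers. -/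
def ratHom (C : Type*) [Group C] : Submodule ℚ (C → ℚ) where
  carrier := {χ | ∀ x y, χ (x * y) = χ x + χ y}
  add_mem' := fun {χ ψ} hχ hψ x y => by
    simp only [Pi.add_apply, hχ x y, hψ x y]
    ring
  zero_mem' := fun x y => by simp
  smul_mem' := fun a χ hχ x y => by
    simp only [Pi.smul_apply, hχ x y, smul_add]

section Rank

variable {C ι : Type*} [Group C]

theorem ratHom_map_one {χ : C → ℚ} (hχ : χ ∈ ratHom C) : χ 1 = 0 := by
  simpa using hχ 1 1

theorem ratHom_ext {S : Set C} (hS : Subgroup.closure S = ⊤) {χ : C → ℚ}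
    (hχ : χ ∈ ratHom C) (h : ∀ s ∈ S, χ s = 0) : χ = 0 := by
  funext x
  have hx : x ∈ Subgroup.closure S := by rw [hS]; trivial
  induction hx using Subgroup.closure_induction with
  | mem x hx => exact h x hx
  | one => exact ratHom_map_one hχ
  | mul x y _ _ hx hy => rw [hχ x y, hx, hy]; simp
  | inv x _ hx =>
    have := hχ x x⁻¹
    rw [mul_inv_cancel, ratHom_map_one hχ, hx] at this
    simpa using this.symm

theorem exists_injective_ratHom (S : Set C) (hS : Subgroup.closure S = ⊤) :
    Function.Injective ((LinearMap.funLeft ℚ ℚ ((↑) : S → C)).domRestrict (ratHom C)) := by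
  rw [injective_iff_map_eq_zero]
  rintro ⟨χ, hχ⟩ h
  exact Subtype.ext (ratHom_ext hS hχ fun s hs => congrFun h ⟨s, hs⟩)

instance [Group.FG C] : FiniteDimensional ℚ (ratHom C) := by
  obtain ⟨S, -, hS⟩ := Group.rank_spec C
  exact Module.Finite.of_injective _ (exists_injective_ratHom _ hS)

theorem finrank_ratHom_le [Group.FG C] : Module.finrank ℚ (ratHom C) ≤ Group.rank C := by
  obtain ⟨S, hSc, hS⟩ := Group.rank_spec C
  rw [← hSc]
  simpa using LinearMap.finrank_le_finrank_of_injective (exists_injective_ratHom _ hS)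

namespace FreeGroupBasis

theorem surjective_ratHom (b : FreeGroupBasis ι C) :
    Function.Surjective ((LinearMap.funLeft ℚ ℚ b).domRestrict (ratHom C)) := by
  intro φ
  let H : C →* Multiplicative ℚ := b.lift fun i => Multiplicative.ofAdd (φ i)
  refine ⟨⟨fun x => (H x).toAdd, fun x y => by simp⟩, ?_⟩
  funext i
  simp [H, LinearMap.funLeft]

variable [Group.FG C]

theorem finite_of_fg (b : FreeGroupBasis ι C) : Finite ι := by
  have : Module.Finite ℚ (ι → ℚ) := Module.Finite.of_surjective _ b.surjective_ratHom
  classical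
  exact (Pi.linearIndependent_single_one ι ℚ).finite

theorem card_eq_rank (b : FreeGroupBasis ι C) : Nat.card ι = Group.rank C := by
  have := b.finite_of_fg
  have := Fintype.ofFinite ι
  classical
  apply le_antisymm
  · refine le_trans ?_ finrank_ratHom_le
    have := LinearMap.finrank_le_finrank_of_surjective b.surjective_ratHom
    simpa using this
  · have := Group.rank_le (S := Finset.univ.image b) (by simpa using b.closure_range)
    refine this.trans (Finset.card_image_le.trans ?_)
    simp

theorem finrank_ratHom (b : FreeGroupBasis ι C) :
    Module.finrank ℚ (ratHom C) = Group.rank C := by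
  refine le_antisymm finrank_ratHom_le ?_
  have := b.finite_of_fg
  have := Fintype.ofFinite ι
  rw [← b.card_eq_rank]
  simpa using LinearMap.finrank_le_finrank_of_surjective b.surjective_ratHom

end FreeGroupBasis

end Rank

theorem Submodule.finrank_map_add_finrank_inf_ker {k M N : Type*} [Field k] [AddCommGroup M]
    [Module k M] [AddCommGroup N] [Module k N] (f : M →ₗ[k] N) (W : Submodule k M)
    [FiniteDimensional k W] :
    Module.finrank k (W.map f) + Module.finrank k (W ⊓ LinearMap.ker f : Submodule k M) =
      Module.finrank k W := by
  rw [← LinearMap.finrank_range_add_finrank_ker (f.domRestrict W), LinearMap.range_domRestrict,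
    LinearMap.ker_domRestrict, ← Submodule.map_comap_subtype, Submodule.finrank_map_subtype_eq]

section FiberFun

variable {X Q : Type*}

/-- The functions that are constant on the fibres of `π` and vanish outside `X₀`. -/
def fiberFun (π : X → Q) (X₀ : Set X) : Submodule ℚ (X → ℚ) where
  carrier := {φ | (∀ x y, π x = π y → φ x = φ y) ∧ ∀ x ∉ X₀, φ x = 0}
  add_mem' := fun hφ hψ =>
    ⟨fun x y h => congrArg₂ (· + ·) (hφ.1 x y h) (hψ.1 x y h),
      fun x hx => by simp [hφ.2 x hx, hψ.2 x hx]⟩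
  zero_mem' := ⟨fun _ _ _ => rfl, fun _ _ => rfl⟩
  smul_mem' := fun a φ hφ =>
    ⟨fun x y h => congrArg (a * ·) (hφ.1 x y h), fun x hx => by simp [hφ.2 x hx]⟩

variable {π : X → Q} {X₀ : Set X}

/-- Functions on the image of `X₀` pull back to functions constant on fibres. -/
theorem exists_linearEquiv_fiberFun (hsat : ∀ x y, π x = π y → x ∈ X₀ → y ∈ X₀) :
    Nonempty (fiberFun π X₀ ≃ₗ[ℚ] (π '' X₀ → ℚ)) := by
  classical
  choose s hs using fun q : π '' X₀ => q.2
  refine ⟨LinearEquiv.ofBijective ((LinearMap.funLeft ℚ ℚ s).domRestrict (fiberFun π X₀))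
    ⟨?_, fun g => ?_⟩⟩
  · rw [injective_iff_map_eq_zero]
    rintro ⟨φ, hφ⟩ h
    refine Subtype.ext (funext fun x => ?_)
    by_cases hx : x ∈ X₀
    · have h1 := congrFun h ⟨π x, x, hx, rfl⟩
      exact (hφ.1 _ _ (hs ⟨π x, x, hx, rfl⟩).2).symm.trans h1
    · exact hφ.2 x hx
  · refine ⟨⟨fun x => if hx : x ∈ X₀ then g ⟨π x, x, hx, rfl⟩ else 0, fun x y h => ?_,
      fun x hx => dif_neg hx⟩, ?_⟩
    · have hxy : x ∈ X₀ ↔ y ∈ X₀ := ⟨hsat x y h, hsat y x h.symm⟩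
      by_cases hx : x ∈ X₀
      · simp only [hx, hxy.1 hx, dif_pos, h]
      · simp only [hx, mt hxy.2 hx, dif_neg, not_false_eq_true]
    · funext q
      simp only [LinearMap.domRestrict_apply, LinearMap.funLeft_apply, (hs q).1, dif_pos, (hs q).2]

theorem finiteDimensional_fiberFun (hsat : ∀ x y, π x = π y → x ∈ X₀ → y ∈ X₀)
    (hfin : (π '' X₀).Finite) : FiniteDimensional ℚ (fiberFun π X₀) := by
  obtain ⟨T⟩ := exists_linearEquiv_fiberFun hsat
  have := hfin.to_subtype
  exact T.symm.finiteDimensional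

theorem finrank_fiberFun (hsat : ∀ x y, π x = π y → x ∈ X₀ → y ∈ X₀)
    (hfin : (π '' X₀).Finite) : Module.finrank ℚ (fiberFun π X₀) = (π '' X₀).ncard := by
  obtain ⟨T⟩ := exists_linearEquiv_fiberFun hsat
  have := hfin.fintype
  rw [T.finrank_eq, Module.finrank_fintype_fun_eq_card, ← Nat.card_eq_fintype_card,
    Nat.card_coe_set_eq]

end FiberFun

namespace FreeGroupBasis

open OrientedGraph

section Euler

variable {ι F : Type*} [Group F] {b : FreeGroupBasis ι F} {C : Subgroup F}
  {E₀ : Set (CayleyEdge F ι)} {V₀ : Set F}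

variable (C V₀) in
/-- The functions on `V₀`, extended by zero, on which `C` acts by adding constants. -/
def affineFun : Submodule ℚ (F → ℚ) where
  carrier := {Ψ | (∀ c ∈ C, ∀ f ∈ V₀, Ψ (c * f) = Ψ c - Ψ 1 + Ψ f) ∧ ∀ f ∉ V₀, Ψ f = 0}
  add_mem' := fun {Φ Ψ} hΦ hΨ =>
    ⟨fun c hc f hf => by simp only [Pi.add_apply, hΦ.1 c hc f hf, hΨ.1 c hc f hf]; ring,
      fun f hf => by simp [hΦ.2 f hf, hΨ.2 f hf]⟩
  zero_mem' := ⟨fun _ _ _ _ => by simp, fun _ _ => rfl⟩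
  smul_mem' := fun a Φ hΦ =>
    ⟨fun c hc f hf => by simp only [Pi.smul_apply, hΦ.1 c hc f hf, smul_eq_mul]; ring,
      fun f hf => by simp [hΦ.2 f hf]⟩

variable (C) in
/-- The increments of a function along `C`. -/
def increment : (F → ℚ) →ₗ[ℚ] (C → ℚ) where
  toFun Ψ c := Ψ c - Ψ 1
  map_add' Φ Ψ := by funext c; simp only [Pi.add_apply]; ring
  map_smul' a Φ := by funext c; simp only [Pi.smul_apply, smul_eq_mul, RingHom.id_apply]; ring

open Classical in
variable (b E₀) in
/-- The coboundary of a function on the vertices, restricted to the edges in `E₀`. -/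
noncomputable def coboundary : (F → ℚ) →ₗ[ℚ] (CayleyEdge F ι → ℚ) where
  toFun Ψ e := if e ∈ E₀ then Ψ (b.cayley.tgt e) - Ψ (b.cayley.src e) else 0
  map_add' Φ Ψ := by
    funext e
    by_cases h : e ∈ E₀ <;> simp only [h, if_true, if_false, Pi.add_apply] <;> ring
  map_smul' a Φ := by
    funext e
    by_cases h : e ∈ E₀ <;>
      simp only [h, if_true, if_false, Pi.smul_apply, smul_eq_mul, RingHom.id_apply] <;> ring

theorem coboundary_apply_of_mem (Ψ : F → ℚ) {e : CayleyEdge F ι} (he : e ∈ E₀) :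
    b.coboundary E₀ Ψ e = Ψ (b.cayley.tgt e) - Ψ (b.cayley.src e) := if_pos he

theorem coboundary_apply_of_notMem (Ψ : F → ℚ) {e : CayleyEdge F ι} (he : e ∉ E₀) :
    b.coboundary E₀ Ψ e = 0 := if_neg he

theorem exists_extension {χ : C → ℚ} (hχ : χ ∈ ratHom C) :
    ∃ Φ : F → ℚ, ∀ (c : C) (f : F), Φ (c * f) = χ c + Φ f := by
  have hrep : ∀ f, ∃ c : C, c • (C.orbV f).out = f := fun f =>
    Subgroup.orbV_eq_iff.1 (Quotient.out_eq (C.orbV f))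
  choose s hs using hrep
  refine ⟨fun f => χ (s f), fun c f => ?_⟩
  rw [← hχ]
  refine congrArg χ ?_
  have h1 := hs (c * f)
  have h2 : C.orbV ((c : F) * f) = C.orbV f := Subgroup.orbV_smul c f
  rw [h2] at h1
  have h3 := hs f
  simp only [Subgroup.smul_def, smul_eq_mul] at h1 h3
  refine Subtype.ext (mul_right_cancel (b := (C.orbV f).out) ?_)
  rw [h1, Subgroup.coe_mul, mul_assoc, h3]

theorem map_increment_affineFun (h1 : 1 ∈ V₀) (hV : ∀ c : C, ∀ f ∈ V₀, c • f ∈ V₀) :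
    (affineFun C V₀).map (increment C) = ratHom C := by
  classical
  have hCV : ∀ c : C, (c : F) ∈ V₀ := fun c => by simpa [Subgroup.smul_def] using hV c 1 h1
  apply le_antisymm
  · rintro _ ⟨Ψ, hΨ, rfl⟩ c d
    have := hΨ.1 c c.2 d (hCV d)
    simp only [increment, LinearMap.coe_mk, AddHom.coe_mk, Subgroup.coe_mul, this]
    ring
  · intro χ hχ
    obtain ⟨Φ, hΦ⟩ := exists_extension hχ
    have hΦ1 : ∀ c : C, Φ c = χ c + Φ 1 := fun c => by simpa using hΦ c 1
    have hV' : ∀ c : C, ∀ f ∈ V₀, (c : F) * f ∈ V₀ := hV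
    refine ⟨fun f => if f ∈ V₀ then Φ f else 0, ⟨fun c hc f hf => ?_, fun f hf => if_neg hf⟩, ?_⟩
    · have := hΦ ⟨c, hc⟩ f
      simp only [hV' ⟨c, hc⟩ f hf, hf, hCV ⟨c, hc⟩, h1, if_true, this, hΦ1 ⟨c, hc⟩]
      ring
    · funext c
      simp only [increment, LinearMap.coe_mk, AddHom.coe_mk, hCV c, h1, if_true, hΦ1]
      ring

theorem affineFun_inf_ker_increment (hV : ∀ c : C, ∀ f ∈ V₀, c • f ∈ V₀) :
    affineFun C V₀ ⊓ LinearMap.ker (increment C) = fiberFun C.orbV V₀ := by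
  ext Ψ
  constructor
  · rintro ⟨hΨ, hker⟩
    refine ⟨fun x y hxy => ?_, hΨ.2⟩
    obtain ⟨c, rfl⟩ := Subgroup.orbV_eq_iff.1 hxy
    by_cases hx : x ∈ V₀
    · have h2 : Ψ c - Ψ 1 = 0 := congrFun hker c
      have h3 := hΨ.1 c c.2 x hx
      rw [h2, zero_add] at h3
      exact h3.symm
    · have hcx : c • x ∉ V₀ := fun h => hx (by simpa using hV c⁻¹ _ h)
      rw [hΨ.2 x hx, hΨ.2 _ hcx]
  · rintro ⟨hΨ, hΨ'⟩
    have hc1 : ∀ c ∈ C, Ψ c = Ψ 1 := fun c hc =>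
      hΨ _ _ (Subgroup.orbV_eq_iff.2 ⟨⟨c⁻¹, C.inv_mem hc⟩, by simp [Subgroup.smul_def]⟩)
    refine ⟨⟨fun c hc f _ => ?_, hΨ'⟩, funext fun c => sub_eq_zero.2 (hc1 c c.2)⟩
    rw [hc1 c hc, sub_self, zero_add]
    exact (hΨ _ _ (Subgroup.orbV_eq_iff.2 ⟨⟨c, hc⟩, rfl⟩)).symm

theorem map_coboundary_affineFun (hV : ∀ c : C, ∀ f ∈ V₀, c • f ∈ V₀)
    (h1 : 1 ∈ V₀) (hE : ∀ c : C, ∀ e ∈ E₀, c • e ∈ E₀)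
    (hends : ∀ e ∈ E₀, b.cayley.src e ∈ V₀ ∧ b.cayley.tgt e ∈ V₀) :
    (affineFun C V₀).map (b.coboundary E₀) = fiberFun C.orbE E₀ := by
  classical
  have hCV : ∀ c ∈ C, c ∈ V₀ := fun c hc => by
    simpa [Subgroup.smul_def] using hV ⟨c, hc⟩ 1 h1
  apply le_antisymm
  · rintro _ ⟨Ψ, hΨ, rfl⟩
    refine ⟨fun e e' hee => ?_, fun e he => coboundary_apply_of_notMem Ψ he⟩
    obtain ⟨c, rfl⟩ := Subgroup.orbE_eq_iff.1 hee
    by_cases he : e ∈ E₀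
    · rw [coboundary_apply_of_mem Ψ he, coboundary_apply_of_mem Ψ (hE c e he)]
      have h2 : b.cayley.tgt (c • e) = c * b.cayley.tgt e := smul_tgt (c : F) e
      have h3 : b.cayley.src (c • e) = c * b.cayley.src e := rfl
      rw [h2, h3, hΨ.1 c c.2 _ (hends e he).1, hΨ.1 c c.2 _ (hends e he).2]
      ring
    · have hce : c • e ∉ E₀ := fun h => he (by simpa using hE c⁻¹ _ h)
      rw [coboundary_apply_of_notMem Ψ he, coboundary_apply_of_notMem Ψ hce]
  · rintro φ ⟨hφ, hφ'⟩
    obtain ⟨Φ, hΦ1, hΦ⟩ := b.exists_primitive φ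
    have hinv : ∀ c ∈ C, ∀ f i, φ ⟨c * f, i⟩ = φ ⟨f, i⟩ := fun c hc f i =>
      (hφ ⟨f, i⟩ ⟨c * f, i⟩ (Subgroup.orbE_eq_iff.2 ⟨⟨c, hc⟩, rfl⟩)).symm
    have hadd : ∀ c ∈ C, ∀ f, Φ (c * f) = Φ c + Φ f := by
      intro c hc f
      induction f using b.induction_right with
      | one => simp [hΦ1]
      | mul f i ih => rw [← mul_assoc, hΦ, hΦ, ih, hinv c hc, add_assoc]
      | mul_inv f i ih =>
        have h2 := hΦ (c * (f * (b i)⁻¹)) i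
        have h3 := hΦ (f * (b i)⁻¹) i
        rw [hinv c hc, mul_assoc, inv_mul_cancel_right, ih] at h2
        rw [inv_mul_cancel_right] at h3
        linarith
    refine ⟨fun f => if f ∈ V₀ then Φ f else 0, ⟨fun c hc f hf => ?_, fun f hf => if_neg hf⟩, ?_⟩
    · have hcf : c * f ∈ V₀ := hV ⟨c, hc⟩ f hf
      simp only [hcf, hf, hCV c hc, h1, if_true, hadd c hc f, hΦ1, sub_zero]
    · funext e
      by_cases he : e ∈ E₀
      · rw [coboundary_apply_of_mem _ he, if_pos (hends e he).1, if_pos (hends e he).2]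
        simp [hΦ]
      · rw [coboundary_apply_of_notMem _ he, hφ' e he]

theorem finrank_affineFun_inf_ker_coboundary
    (h1 : 1 ∈ V₀) (hends : ∀ e ∈ E₀, b.cayley.src e ∈ V₀ ∧ b.cayley.tgt e ∈ V₀)
    (hV : ∀ c : C, ∀ f ∈ V₀, c • f ∈ V₀)
    (hconn : ∀ v ∈ V₀, v ∈ b.cayley.comp E₀ 1) :
    Module.finrank ℚ
      (affineFun C V₀ ⊓ LinearMap.ker (b.coboundary E₀) : Submodule ℚ (F → ℚ)) = 1 := by
  classical
  have hCV : ∀ c ∈ C, c ∈ V₀ := fun c hc => by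
    simpa [Subgroup.smul_def] using hV ⟨c, hc⟩ 1 h1
  have h : affineFun C V₀ ⊓ LinearMap.ker (b.coboundary E₀) =
      Submodule.span ℚ {fun f => if f ∈ V₀ then (1 : ℚ) else 0} := by
    ext Ψ
    rw [Submodule.mem_span_singleton]
    constructor
    · rintro ⟨hΨ, hker⟩
      refine ⟨Ψ 1, funext fun f => ?_⟩
      have hsub : b.cayley.comp E₀ 1 ⊆ {f | Ψ f = Ψ 1} := by
        refine comp_subset rfl fun e he => ?_
        have h2 : b.coboundary E₀ Ψ e = 0 := congrFun hker e
        rw [coboundary_apply_of_mem Ψ he, sub_eq_zero] at h2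
        simp only [Set.mem_ofPred_eq, h2]
      by_cases hf : f ∈ V₀
      · have : Ψ f = Ψ 1 := hsub (hconn f hf)
        simp [hf, this]
      · simp [hf, hΨ.2 f hf]
    · rintro ⟨a, rfl⟩
      refine Submodule.smul_mem _ _ ⟨⟨fun c hc f hf => ?_, fun f hf => if_neg hf⟩,
        funext fun e => ?_⟩
      · have hcf : c * f ∈ V₀ := hV ⟨c, hc⟩ f hf
        simp [hcf, hf, hCV c hc, h1]
      · by_cases he : e ∈ E₀
        · rw [coboundary_apply_of_mem _ he, if_pos (hends e he).1, if_pos (hends e he).2]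
          simp
        · exact coboundary_apply_of_notMem _ he
  rw [h]
  refine finrank_span_singleton fun h0 => ?_
  simpa [h1] using congrFun h0 1

/-- Euler's formula for the quotient by `C` of a `C`-invariant subtree of the Cayley tree. -/
theorem ncard_orbE_add_one [Group.FG C] [IsFreeGroup C]
    (h1 : 1 ∈ V₀) (hV : ∀ c : C, ∀ f ∈ V₀, c • f ∈ V₀) (hE : ∀ c : C, ∀ e ∈ E₀, c • e ∈ E₀)
    (hends : ∀ e ∈ E₀, b.cayley.src e ∈ V₀ ∧ b.cayley.tgt e ∈ V₀)
    (hconn : ∀ v ∈ V₀, v ∈ b.cayley.comp E₀ 1)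
    (hVfin : (C.orbV '' V₀).Finite) (hEfin : (C.orbE '' E₀).Finite) :
    (C.orbE '' E₀).ncard + 1 = (C.orbV '' V₀).ncard + Group.rank C := by
  have hVsat : ∀ x y, C.orbV x = C.orbV y → x ∈ V₀ → y ∈ V₀ := fun x y hxy hx => by
    obtain ⟨c, rfl⟩ := Subgroup.orbV_eq_iff.1 hxy
    exact hV c x hx
  have hEsat : ∀ x y : CayleyEdge F ι, C.orbE x = C.orbE y → x ∈ E₀ → y ∈ E₀ := fun x y hxy hx => by
    obtain ⟨c, rfl⟩ := Subgroup.orbE_eq_iff.1 hxy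
    exact hE c x hx
  have hW : FiniteDimensional ℚ (affineFun C V₀) := by
    rw [FiniteDimensional, Module.Finite.iff_fg]
    refine Submodule.fg_of_fg_map_of_fg_inf_ker (increment C) ?_ ?_
    · rw [map_increment_affineFun h1 hV, ← Module.Finite.iff_fg]
      infer_instance
    · rw [affineFun_inf_ker_increment hV, ← Module.Finite.iff_fg]
      exact finiteDimensional_fiberFun hVsat hVfin
  have hinc := Submodule.finrank_map_add_finrank_inf_ker (increment C) (affineFun C V₀)
  have hcob := Submodule.finrank_map_add_finrank_inf_ker (b.coboundary E₀) (affineFun C V₀)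
  rw [map_increment_affineFun h1 hV, affineFun_inf_ker_increment hV,
    finrank_fiberFun hVsat hVfin, (IsFreeGroup.basis C).finrank_ratHom] at hinc
  rw [map_coboundary_affineFun hV h1 hE hends, finrank_fiberFun hEsat hEfin,
    finrank_affineFun_inf_ker_coboundary h1 hends hV hconn] at hcob
  omega

end Euler

end FreeGroupBasis

/-- The Schreier index formula. -/
theorem Subgroup.rank_sub_one_eq {K : Type*} [Group K] [IsFreeGroup K] [Group.FG K]
    (L : Subgroup K) [L.FiniteIndex] [Group.FG L] :
    Group.rank L - 1 = L.index * (Group.rank K - 1) := by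
  have b := IsFreeGroup.basis K
  have := b.finite_of_fg
  have hcard : Nat.card (Quotient (QuotientGroup.rightRel L)) = L.index :=
    Nat.card_congr (QuotientGroup.quotientRightRelEquivQuotientLeftRel L)
  have : Finite (Quotient (QuotientGroup.rightRel L)) :=
    Nat.finite_of_card_ne_zero (by rw [hcard]; exact Subgroup.FiniteIndex.index_ne_zero)
  have hV : L.orbV '' Set.univ = Set.univ := by
    rw [Set.image_univ, Set.range_eq_univ]
    exact Quotient.mk_surjective
  have hE : L.orbE '' (Set.univ : Set (CayleyEdge K (IsFreeGroup.Generators K))) = Set.univ := by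
    rw [Set.image_univ, Set.range_eq_univ]
    rintro ⟨q, i⟩
    obtain ⟨x, rfl⟩ := Quotient.mk_surjective q
    exact ⟨⟨x, i⟩, rfl⟩
  have h := FreeGroupBasis.ncard_orbE_add_one (b := b) (C := L) (V₀ := Set.univ) (E₀ := Set.univ)
    trivial (fun _ _ _ => trivial) (fun _ _ _ => trivial) (fun _ _ => ⟨trivial, trivial⟩)
    (fun v _ => by rw [b.comp_univ]; trivial) (Set.toFinite _) (Set.toFinite _)
  rw [hV, hE, Set.ncard_univ, Set.ncard_univ, Nat.card_prod, hcard, b.card_eq_rank] at h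
  have hi : 1 ≤ L.index := Nat.one_le_iff_ne_zero.2 Subgroup.FiniteIndex.index_ne_zero
  rw [Nat.mul_sub, mul_one]
  omega

namespace FreeGroupBasis

open OrientedGraph

variable {ι F : Type*} [Group F] {b : FreeGroupBasis ι F}

theorem finite_hullE {Y : Set F} (hY : Y.Finite) : (b.hullE Y).Finite := by
  refine (hY.biUnion fun x _ => hY.biUnion fun y _ => finite_setOf_sep (b := b) x y).subset ?_
  rintro e ⟨x, hx, y, hy, h⟩
  exact Set.mem_biUnion hx (Set.mem_biUnion hy h)

variable {C : Subgroup F} {R : Set F}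

theorem smul_hullE_coe_mul (c : C) :
    c • b.hullE ((C : Set F) * R) = b.hullE ((C : Set F) * R) := by
  have : (c : F) • b.hullE ((C : Set F) * R) = b.hullE ((C : Set F) * R) := by
    rw [smul_hullE, smul_coe_mul]
  exact this

theorem smul_mem_hullE (c : C) (e : CayleyEdge F ι) (he : e ∈ b.hullE ((C : Set F) * R)) :
    c • e ∈ b.hullE ((C : Set F) * R) := by
  rw [← smul_hullE_coe_mul c]
  exact Set.smul_mem_smul_set he

theorem smul_mem_hullV (c : C) (v : F) (hv : v ∈ b.hullV ((C : Set F) * R)) :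
    c • v ∈ b.hullV ((C : Set F) * R) := by
  rcases hv with hv | ⟨e, he, rfl⟩ | ⟨e, he, rfl⟩
  · refine .inl ?_
    rw [← smul_coe_mul c]
    exact Set.smul_mem_smul_set hv
  · exact .inr (.inl ⟨c • e, smul_mem_hullE c e he, rfl⟩)
  · exact .inr (.inr ⟨c • e, smul_mem_hullE c e he, smul_tgt (c : F) e⟩)

variable [LinearOrder F] [LinearOrder ι]

variable (C) in
theorem orderAction (hord : ∀ c x y : F, x < y → c * x < c * y) :
    b.cayley.OrderAction C where
  src_smul _ _ := rfl
  tgt_smul c e := smul_tgt (c : F) e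
  smul_lt_vertex c x y h := hord c x y h
  smul_lt_edge c e e' h := by
    rw [CayleyEdge.lt_iff] at h ⊢
    rcases h with h | ⟨h, h'⟩
    · exact .inl (hord c _ _ h)
    · exact .inr ⟨congrArg ((c : F) * ·) h, h'⟩
  eq_one_of_smul_eq c x h := by
    have h' : (c : F) * x = x := h
    exact Subtype.ext (by simpa using h')

theorem isBridge_smul (hord : ∀ c x y : F, x < y → c * x < c * y) (g : F)
    {E₀ : Set (CayleyEdge F ι)} {e : CayleyEdge F ι} (he : b.cayley.IsBridge E₀ e) :
    b.cayley.IsBridge (g • E₀) (g • e) :=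
  (orderAction ⊤ hord).isBridge_smul (⟨g, trivial⟩ : (⊤ : Subgroup F)) he

theorem infinite_of_ne_bot (hord : ∀ c x y : F, x < y → c * x < c * y) (hC : C ≠ ⊥) :
    (C : Set F).Infinite := by
  obtain ⟨⟨c, hcC⟩, hc'⟩ := Subgroup.ne_bot_iff_exists_ne_one.1 hC
  have hc : c ≠ 1 := fun h => hc' (Subtype.ext h)
  obtain ⟨d, hdC, hd⟩ : ∃ d ∈ C, 1 < d := by
    rcases lt_or_gt_of_ne hc with h | h
    · exact ⟨c⁻¹, C.inv_mem hcC, by simpa using hord c⁻¹ _ _ h⟩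
    · exact ⟨c, hcC, h⟩
  have hmono : StrictMono fun n : ℕ => d ^ n := strictMono_nat_of_lt_succ fun n => by
    simpa [pow_succ] using hord (d ^ n) _ _ hd
  refine (Set.infinite_range_of_injective hmono.injective).mono ?_
  rintro _ ⟨n, rfl⟩
  exact C.pow_mem hdC n

theorem not_isBridge_of_finite {E₀ : Set (CayleyEdge F ι)} (hE : E₀.Finite)
    (e : CayleyEdge F ι) : ¬ b.cayley.IsBridge E₀ e := by
  rintro ⟨-, h, -⟩
  refine h (((hE.image b.cayley.src).union (hE.image b.cayley.tgt)).insert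
    (b.cayley.src e) |>.subset (comp_subset (.inl rfl) fun e' he' => ?_))
  exact iff_of_true (.inr (.inl ⟨e', he'.1, rfl⟩)) (.inr (.inr ⟨e', he'.1, rfl⟩))

/-- The number of orbits of bridges is the reduced rank. -/
theorem ncard_orbE_isBridge (hord : ∀ c x y : F, x < y → c * x < c * y) [Group.FG C]
    (hR : R.Finite) (h1R : 1 ∈ R) :
    (C.orbE '' {e | b.cayley.IsBridge (b.hullE ((C : Set F) * R)) e}).ncard =
      Group.rank C - 1 := by
  have hC : C.FG := (Group.fg_iff_subgroup_fg C).1 ‹_›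
  have : IsFreeGroup F := b.isFreeGroup
  set E₀ := b.hullE ((C : Set F) * R) with hE₀
  set V₀ := b.hullV ((C : Set F) * R) with hV₀
  by_cases hbot : C = ⊥
  · have hfin : E₀.Finite := finite_hullE (by rw [hbot]; simpa using hR)
    have hempty : {e | b.cayley.IsBridge E₀ e} = ∅ :=
      Set.eq_empty_of_forall_notMem fun e => not_isBridge_of_finite hfin e
    have hrank : Group.rank C ≤ 0 := by
      refine Group.rank_le (S := ∅) ?_
      subst hbot
      exact Subsingleton.elim _ _
    rw [hempty, Set.image_empty, Set.ncard_empty]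
    omega
  have hCsub : ∀ c ∈ C, c ∈ (C : Set F) * R := fun c hc => ⟨c, hc, 1, h1R, mul_one c⟩
  have hEfin : (C.orbE '' E₀).Finite := finite_orbE_hullE hC hR
  have hVfin : (C.orbV '' V₀).Finite := finite_orbV_hullV hC hR
  have hconn : ∀ v ∈ V₀, v ∈ b.cayley.comp E₀ 1 := fun v hv =>
    mem_comp_hullE (hCsub 1 C.one_mem) hv
  have heuler := ncard_orbE_add_one (b := b) (C := C) (E₀ := E₀) (V₀ := V₀)
    (.inl (hCsub 1 C.one_mem)) smul_mem_hullV smul_mem_hullE (fun e he => ends_mem_hullV he) hconn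
    hVfin hEfin
  have hact := orderAction (b := b) C hord
  have hinv : ∀ c : C, c • E₀ = E₀ := smul_hullE_coe_mul
  have hle := hact.ncard_not_isBridge_le (V₀ := V₀) hinv (fun e he => ends_mem_hullV he)
    (fun e _ => tgt_notMem_comp fun h => lt_irrefl e h.2) (fun v w h => Subgroup.orbV_eq_iff.1 h)
    (πE := C.orbE) Subgroup.orbE_smul hVfin
  have hge := hact.le_ncard_not_isBridge (V₀ := V₀) hinv (πE := C.orbE)
    (fun e e' h => Subgroup.orbE_eq_iff.1 h) hEfin (πV := C.orbV) Subgroup.orbV_smul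
    (fun v hv => by
      rw [comp_eq_of_mem (hconn v hv)]
      exact (infinite_of_ne_bot hord hbot).mono fun c hc => hconn c (.inl (hCsub c hc)))
  have hunion : C.orbE '' E₀ = C.orbE '' {e | b.cayley.IsBridge E₀ e} ∪
      C.orbE '' {e ∈ E₀ | ¬ b.cayley.IsBridge E₀ e} := by
    rw [← Set.image_union]
    congr 1
    ext e
    constructor
    · intro he
      by_cases h : b.cayley.IsBridge E₀ e
      · exact .inl h
      · exact .inr ⟨he, h⟩
    · rintro (h | h)
      · exact h.1
      · exact h.1
  have hdisj : Disjoint (C.orbE '' {e | b.cayley.IsBridge E₀ e})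
      (C.orbE '' {e ∈ E₀ | ¬ b.cayley.IsBridge E₀ e}) := by
    rw [Set.disjoint_left]
    rintro _ ⟨e, he, rfl⟩ ⟨e', he', h⟩
    obtain ⟨c, rfl⟩ := Subgroup.orbE_eq_iff.1 h.symm
    refine he'.2 ?_
    rw [← hinv c]
    exact hact.isBridge_smul c he
  have hcard := Set.ncard_union_eq hdisj
    (hEfin.subset (by rw [hunion]; exact Set.subset_union_left))
    (hEfin.subset (by rw [hunion]; exact Set.subset_union_right))
  rw [← hunion] at hcard
  omega

variable (b) in
/-- The edges that are bridges of the subtree spanned by finitely many orbits of `C`. -/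
def bridges (C : Subgroup F) : Set (CayleyEdge F ι) :=
  {e | ∃ R : Set F, R.Finite ∧ 1 ∈ R ∧ b.cayley.IsBridge (b.hullE ((C : Set F) * R)) e}

variable {D : Subgroup F}

theorem bridges_mono (h : C ≤ D) : b.bridges C ⊆ b.bridges D := by
  rintro e ⟨R, hR, h1, he⟩
  exact ⟨R, hR, h1, he.mono (hullE_mono (Set.mul_subset_mul_right h))⟩

theorem smul_mem_bridges (hord : ∀ c x y : F, x < y → c * x < c * y) {g : F}
    (hCD : ∀ x, x ∈ D ↔ g⁻¹ * x * g ∈ C) {e : CayleyEdge F ι} (he : e ∈ b.bridges C) :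
    g • e ∈ b.bridges D := by
  obtain ⟨R, hR, h1, he⟩ := he
  refine ⟨insert 1 (g • R), (hR.smul_set).insert 1, .inl rfl, ?_⟩
  refine (isBridge_smul hord g he).mono ?_
  rw [smul_hullE]
  refine hullE_mono ?_
  rintro _ ⟨_, ⟨c, hc, r, hr, rfl⟩, rfl⟩
  refine ⟨g * c * g⁻¹, (hCD _).2 (by simpa [mul_assoc] using hc), g * r,
    .inr ⟨r, hr, rfl⟩, by simp [mul_assoc]⟩

theorem smul_mem_bridges_iff (hord : ∀ c x y : F, x < y → c * x < c * y) {g : F}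
    (hCD : ∀ x, x ∈ D ↔ g⁻¹ * x * g ∈ C) {e : CayleyEdge F ι} :
    g • e ∈ b.bridges D ↔ e ∈ b.bridges C := by
  refine ⟨fun h => ?_, smul_mem_bridges hord hCD⟩
  have := smul_mem_bridges (g := g⁻¹) (C := D) (D := C) hord
    (fun x => by rw [hCD]; simp [mul_assoc]) h
  simpa using this

theorem bridges_eq (hord : ∀ c x y : F, x < y → c * x < c * y) [Group.FG C] :
    b.bridges C = {e | b.cayley.IsBridge (b.hullE ((C : Set F) * {1})) e} := by
  refine Set.Subset.antisymm ?_ fun e he => ⟨{1}, Set.finite_singleton 1, rfl, he⟩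
  rintro e ⟨R, hR, h1, he⟩
  have hsub : {e | b.cayley.IsBridge (b.hullE ((C : Set F) * {1})) e} ⊆
      {e | b.cayley.IsBridge (b.hullE ((C : Set F) * R)) e} := fun e he =>
    he.mono (hullE_mono (Set.mul_subset_mul_left (Set.singleton_subset_iff.2 h1)))
  have hfin : (C.orbE '' {e | b.cayley.IsBridge (b.hullE ((C : Set F) * R)) e}).Finite :=
    (finite_orbE_hullE ((Group.fg_iff_subgroup_fg C).1 ‹_›) hR).subset
      (Set.image_mono fun e he => he.1)
  have heq := Set.eq_of_subset_of_ncard_le (Set.image_mono (f := C.orbE) hsub)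
    (by rw [ncard_orbE_isBridge hord hR h1, ncard_orbE_isBridge hord (Set.finite_singleton 1) rfl])
    hfin
  have : C.orbE e ∈ C.orbE '' {e | b.cayley.IsBridge (b.hullE ((C : Set F) * {1})) e} := by
    rw [heq]
    exact ⟨e, he, rfl⟩
  obtain ⟨e', he', h⟩ := this
  obtain ⟨c, rfl⟩ := Subgroup.orbE_eq_iff.1 h
  have := (orderAction (b := b) C hord).isBridge_smul c he'
  rwa [smul_hullE_coe_mul] at this

theorem finite_orbE_bridges (hord : ∀ c x y : F, x < y → c * x < c * y) [Group.FG C] :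
    (C.orbE '' b.bridges C).Finite := by
  rw [bridges_eq hord]
  exact (finite_orbE_hullE ((Group.fg_iff_subgroup_fg C).1 ‹_›) (Set.finite_singleton 1)).subset
      (Set.image_mono fun e he => he.1)

theorem ncard_orbE_bridges (hord : ∀ c x y : F, x < y → c * x < c * y) [Group.FG C] :
    (C.orbE '' b.bridges C).ncard = Group.rank C - 1 := by
  rw [bridges_eq hord]
  exact ncard_orbE_isBridge hord (Set.finite_singleton 1) rfl

end FreeGroupBasis

section VirtualRank

variable {H : Type*} [Group H]

theorem Group.fg_of_subgroup (K : Subgroup H) [K.FiniteIndex] [Group.FG K] : Group.FG H := by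
  have h : K ⊔ Subgroup.closure (Set.range (Quotient.out : H ⧸ K → H)) = ⊤ := by
    rw [eq_top_iff]
    intro x _
    have h1 : ((x : H ⧸ K).out)⁻¹ * x ∈ K := QuotientGroup.eq.1 (Quotient.out_eq _)
    have h2 : (x : H ⧸ K).out ∈ Subgroup.closure (Set.range (Quotient.out : H ⧸ K → H)) :=
      Subgroup.subset_closure ⟨_, rfl⟩
    have h3 := mul_mem (Subgroup.mem_sup_right (S := K) h2) (Subgroup.mem_sup_left h1)
    rwa [mul_inv_cancel_left] at h3
  have : Finite (Quotient (QuotientGroup.leftRel K)) := inferInstanceAs (Finite (H ⧸ K))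
  rw [Group.fg_def, ← h]
  exact ((Group.fg_iff_subgroup_fg K).1 ‹_›).sup
    ⟨(Set.finite_range _).toFinset, by rw [Set.Finite.coe_toFinset]⟩

theorem Subgroup.rank_sub_one_mul_index {K L : Subgroup H} (h : L ≤ K) [IsFreeGroup K]
    [L.FiniteIndex] [Group.FG K] [Group.FG L] :
    (Group.rank L - 1) * K.index = (Group.rank K - 1) * L.index := by
  rw [← Subgroup.relIndex_mul_index h,
    ← Group.rank_congr (Subgroup.subgroupOfEquivOfLe h), Subgroup.rank_sub_one_eq,
    Subgroup.relIndex]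
  ring

theorem IsVirtRedRank.eq {r : ℚ} (hr : IsVirtRedRank H r) (M : Subgroup H) [M.FiniteIndex]
    [IsFreeGroup M] : ∃ _ : Group.FG M, r * M.index = (Group.rank M - 1 : ℕ) := by
  obtain ⟨K, hK, hfree, hfg, rfl⟩ := hr
  have := Group.fg_of_subgroup K
  refine ⟨inferInstance, ?_⟩
  have h1 := Subgroup.rank_sub_one_mul_index (inf_le_left : M ⊓ K ≤ M)
  have h2 := Subgroup.rank_sub_one_mul_index (inf_le_right : M ⊓ K ≤ K)
  have hi : ((M ⊓ K).index : ℚ) ≠ 0 := Nat.cast_ne_zero.2 Subgroup.FiniteIndex.index_ne_zero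
  have hKi : (K.index : ℚ) ≠ 0 := Nat.cast_ne_zero.2 Subgroup.FiniteIndex.index_ne_zero
  rw [div_mul_eq_mul_div, div_eq_iff hKi]
  refine mul_right_cancel₀ hi ?_
  rw [← Nat.cast_mul, ← Nat.cast_mul, ← Nat.cast_mul, ← Nat.cast_mul, Nat.cast_inj]
  calc _ = (Group.rank K - 1) * (M ⊓ K).index * M.index := by ring
    _ = (Group.rank ↥(M ⊓ K) - 1) * M.index * K.index := by rw [← h2]; ring
    _ = _ := by rw [h1]; ring

end VirtualRank

theorem Set.encard_image_eq_of_iff {X P Q : Type*} {S : Set X} {p : X → P} {q : X → Q}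
    (h : ∀ x ∈ S, ∀ y ∈ S, p x = p y ↔ q x = q y) : (p '' S).encard = (q '' S).encard := by
  rcases S.eq_empty_or_nonempty with rfl | ⟨x₀, -⟩
  · simp
  have : Nonempty X := ⟨x₀⟩
  have hsec : ∀ a ∈ p '' S, ∃ x ∈ S, p x = a := fun a ha => ha
  choose! s hsS hs using hsec
  have hinj : Set.InjOn (fun a => q (s a)) (p '' S) := fun a ha a' ha' haa => by
    rw [← hs a ha, ← hs a' ha']
    exact (h _ (hsS a ha) _ (hsS a' ha')).2 haa
  rw [← hinj.encard_image]
  congr 1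
  ext z
  constructor
  · rintro ⟨a, ha, rfl⟩
    exact ⟨s a, hsS a ha, rfl⟩
  · rintro ⟨x, hx, rfl⟩
    have hpx : p x ∈ p '' S := ⟨x, hx, rfl⟩
    exact ⟨p x, hpx, (h _ (hsS _ hpx) _ hx).1 (hs _ hpx)⟩

theorem Subgroup.encard_orbE_of_normal {G ι : Type*} [Group G] (D N : Subgroup G) [N.Normal]
    {S : Set (CayleyEdge G ι)} (hS : ∀ d : D, ∀ e ∈ S, d • e ∈ S) :
    ((D ⊓ N).orbE '' S).encard = (D.orbE '' S).encard * ENat.card (D ⧸ N.subgroupOf D) := by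
  have hrep : ∀ e : CayleyEdge G ι, ∃ d : D, d * (D.orbV e.vertex).out = e.vertex := fun e =>
    Subgroup.orbV_eq_iff.1 (Quotient.out_eq (D.orbV e.vertex))
  choose s hs using hrep
  have hsmul : ∀ (d : D) e, s (d • e) = d * s e := fun d e => by
    have h1 := hs (d • e)
    have h2 : D.orbV (d • e).vertex = D.orbV e.vertex := Subgroup.orbV_smul d e.vertex
    have h3 : (d • e).vertex = d * (s e * (D.orbV e.vertex).out) := by rw [hs]; rfl
    rw [h2, h3, ← mul_assoc] at h1
    exact Subtype.ext (mul_right_cancel h1)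
  have key : ((D ⊓ N).orbE '' S).encard =
      ((fun e => (D.orbE e, (s e : D ⧸ N.subgroupOf D))) '' S).encard := by
    refine Set.encard_image_eq_of_iff fun e _ e' _ => ?_
    rw [Subgroup.orbE_eq_iff, Prod.mk.injEq, QuotientGroup.eq, Subgroup.mem_subgroupOf,
      Subgroup.orbE_eq_iff]
    constructor
    · rintro ⟨⟨c, hcD, hcN⟩, rfl⟩
      refine ⟨⟨⟨c, hcD⟩, rfl⟩, ?_⟩
      have : s ((⟨c, hcD, hcN⟩ : (D ⊓ N : Subgroup G)) • e) = ⟨c, hcD⟩ * s e := hsmul ⟨c, hcD⟩ e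
      rw [this]
      simpa [mul_assoc] using ‹N.Normal›.conj_mem c hcN (s e : G)⁻¹
    · rintro ⟨⟨d, rfl⟩, hN⟩
      rw [hsmul] at hN
      have := ‹N.Normal›.conj_mem _ hN (s e : G)
      refine ⟨⟨d, d.2, by simpa [mul_assoc] using this⟩, rfl⟩
  have himage : (fun e => (D.orbE e, (s e : D ⧸ N.subgroupOf D))) '' S =
      (D.orbE '' S) ×ˢ Set.univ := by
    ext ⟨o, q⟩
    constructor
    · rintro ⟨e, he, h⟩
      obtain ⟨rfl, rfl⟩ := Prod.mk.inj h
      exact ⟨⟨e, he, rfl⟩, trivial⟩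
    · rintro ⟨⟨e, he, rfl⟩, -⟩
      obtain ⟨d, rfl⟩ := QuotientGroup.mk_surjective q
      refine ⟨(d * (s e)⁻¹) • e, hS _ e he, ?_⟩
      simp only [hsmul, inv_mul_cancel_right, Subgroup.orbE_smul]
  rw [key, himage, Set.encard_prod, Set.encard_univ]

section Conjugates

open FreeGroupBasis

variable {G ι : Type*} [Group G] (F D : Subgroup G) (t : G)

/-- The conjugate by `t⁻¹` of the intersection of `D` with the normal core of `F`, as a subgroup
of `F`. -/
def conjPart : Subgroup F :=
  ((D ⊓ F.normalCore).map (MulAut.conj t⁻¹).toMonoidHom).subgroupOf F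

variable {F D t}

theorem mem_conjPart {x : F} : x ∈ conjPart F D t ↔ t * x * t⁻¹ ∈ D ⊓ F.normalCore := by
  rw [conjPart, Subgroup.mem_subgroupOf, Subgroup.mem_map_equiv]
  simp

theorem conj_mem_of_mem_normalCore {c : G} (hc : c ∈ F.normalCore) (t : G) : t⁻¹ * c * t ∈ F :=
  F.normalCore_le (by simpa using F.normalCore_normal.conj_mem c hc t⁻¹)

variable (F D t) in
/-- All the conjugates are isomorphic. -/
theorem nonempty_conjPart_equiv : Nonempty (conjPart F D t ≃* (D ⊓ F.normalCore : Subgroup G)) := by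
  have hle : (D ⊓ F.normalCore).map (MulAut.conj t⁻¹).toMonoidHom ≤ F := by
    rintro _ ⟨c, hc, rfl⟩
    simpa using conj_mem_of_mem_normalCore hc.2 t
  exact ⟨(Subgroup.subgroupOfEquivOfLe hle).trans
    (Subgroup.equivMapOfInjective _ _ (MulAut.conj t⁻¹).injective).symm⟩

theorem conjPart_mono {D' : Subgroup G} (h : D ≤ D') : conjPart F D t ≤ conjPart F D' t :=
  fun _ hx => mem_conjPart.2 (inf_le_inf_right _ h (mem_conjPart.1 hx))

theorem conjPart_mul {d : G} (hd : d ∈ D) : conjPart F D (d * t) = conjPart F D t := by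
  ext x
  rw [mem_conjPart, mem_conjPart, mul_inv_rev,
    show d * t * x * (t⁻¹ * d⁻¹) = d * (t * x * t⁻¹) * d⁻¹ by group]
  refine and_congr ⟨fun h => ?_, fun h => D.mul_mem (D.mul_mem hd h) (D.inv_mem hd)⟩
    ⟨fun h => ?_, fun h => F.normalCore_normal.conj_mem _ h d⟩
  · simpa [mul_assoc] using D.mul_mem (D.mul_mem (D.inv_mem hd) h) hd
  · simpa [mul_assoc] using F.normalCore_normal.conj_mem _ h d⁻¹

variable [LinearOrder F] [LinearOrder ι]

/-- The edges of the Cayley graph of `G` that, translated to the identity, are bridges for the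
corresponding conjugate of `D`. -/
def bridgeSet (b : FreeGroupBasis ι F) (D : Subgroup G) : Set (CayleyEdge G ι) :=
  {e | (⟨1, e.label⟩ : CayleyEdge F ι) ∈ b.bridges (conjPart F D e.vertex)}

variable {b : FreeGroupBasis ι F}

theorem bridgeSet_mono {D' : Subgroup G} (h : D ≤ D') : bridgeSet b D ⊆ bridgeSet b D' :=
  fun _ he => bridges_mono (conjPart_mono h) he

theorem smul_mem_bridgeSet (d : D) (e : CayleyEdge G ι) (he : e ∈ bridgeSet b D) :
    d • e ∈ bridgeSet b D := by
  have h : conjPart F D (d • e).vertex = conjPart F D e.vertex := conjPart_mul d.2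
  change (⟨1, e.label⟩ : CayleyEdge F ι) ∈ b.bridges (conjPart F D (d • e).vertex)
  rw [h]
  exact he

theorem mk_mem_bridgeSet_iff (hord : ∀ c x y : F, x < y → c * x < c * y) {f : F} {i : ι} :
    (⟨t * f, i⟩ : CayleyEdge G ι) ∈ bridgeSet b D ↔
      (⟨f, i⟩ : CayleyEdge F ι) ∈ b.bridges (conjPart F D t) := by
  have h := smul_mem_bridges_iff (b := b) hord (g := f) (D := conjPart F D t)
    (C := conjPart F D (t * f)) (e := ⟨1, i⟩) (fun x => by
      rw [mem_conjPart, mem_conjPart]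
      congr! 1
      simp [mul_assoc])
  have hf : f • (⟨1, i⟩ : CayleyEdge F ι) = ⟨f, i⟩ := CayleyEdge.ext (mul_one f) rfl
  rw [hf] at h
  exact h.symm

variable (t) in
theorem encard_orbE_bridgeSet_coset (hord : ∀ c x y : F, x < y → c * x < c * y)
    [Group.FG (D ⊓ F.normalCore : Subgroup G)] :
    ((D ⊓ F.normalCore).orbE '' {e ∈ bridgeSet b D | (e.vertex : G ⧸ F) = t}).encard =
      (Group.rank (D ⊓ F.normalCore : Subgroup G) - 1 : ℕ) := by
  obtain ⟨φ⟩ := nonempty_conjPart_equiv F D t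
  have : Group.FG (conjPart F D t) := Group.fg_of_surjective (f := φ.symm.toMonoidHom)
    φ.symm.surjective
  let j : CayleyEdge F ι → CayleyEdge G ι := fun e => ⟨t * e.vertex, e.label⟩
  have himage : {e ∈ bridgeSet b D | (e.vertex : G ⧸ F) = t} = j '' b.bridges (conjPart F D t) := by
    ext e
    constructor
    · rintro ⟨he, ht⟩
      have hf : t⁻¹ * e.vertex ∈ F := QuotientGroup.eq.1 ht.symm
      have hej : e = j ⟨⟨_, hf⟩, e.label⟩ := CayleyEdge.ext (by simp [j]) rfl
      refine ⟨_, (mk_mem_bridgeSet_iff hord).1 ?_, hej.symm⟩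
      change j ⟨⟨_, hf⟩, e.label⟩ ∈ bridgeSet b D
      rwa [← hej]
    · rintro ⟨e, he, rfl⟩
      exact ⟨(mk_mem_bridgeSet_iff hord).2 he, QuotientGroup.eq.2 (by simp [j])⟩
  rw [himage, ← Set.image_comp, ← Group.rank_congr φ, ← ncard_orbE_bridges (b := b) hord,
    (finite_orbE_bridges hord).cast_ncard_eq]
  refine Set.encard_image_eq_of_iff fun e _ e' _ => ?_
  rw [Function.comp_apply, Function.comp_apply, Subgroup.orbE_eq_iff, Subgroup.orbE_eq_iff]
  constructor
  · rintro ⟨c, hc⟩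
    have hv : (c : G) * (t * e.vertex) = t * e'.vertex := congrArg CayleyEdge.vertex hc
    have hl : (c • j e).label = (j e').label := congrArg CayleyEdge.label hc
    refine ⟨⟨⟨t⁻¹ * c * t, conj_mem_of_mem_normalCore c.2.2 t⟩, mem_conjPart.2 ?_⟩,
      CayleyEdge.ext (Subtype.ext ?_) hl⟩
    · simp [mul_assoc]
    · change t⁻¹ * c * t * e.vertex = e'.vertex
      rw [mul_assoc, mul_assoc, hv, inv_mul_cancel_left]
  · rintro ⟨c, rfl⟩
    refine ⟨⟨t * c * t⁻¹, mem_conjPart.1 c.2⟩, CayleyEdge.ext ?_ rfl⟩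
    change t * c * t⁻¹ * (t * e.vertex) = t * (c * e.vertex)
    group

theorem encard_orbE_bridgeSet [F.FiniteIndex] (hord : ∀ c x y : F, x < y → c * x < c * y)
    [Group.FG (D ⊓ F.normalCore : Subgroup G)] :
    ((D ⊓ F.normalCore).orbE '' bridgeSet b D).encard =
      (F.index * (Group.rank (D ⊓ F.normalCore : Subgroup G) - 1) : ℕ) := by
  have hunion : (D ⊓ F.normalCore).orbE '' bridgeSet b D = ⋃ q : G ⧸ F,
      (D ⊓ F.normalCore).orbE '' {e ∈ bridgeSet b D | (e.vertex : G ⧸ F) = q} := by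
    rw [← Set.image_iUnion]
    congr 1
    ext e
    simp
  have hdisj : Pairwise (Function.onFun Disjoint fun q : G ⧸ F =>
      (D ⊓ F.normalCore).orbE '' {e ∈ bridgeSet b D | (e.vertex : G ⧸ F) = q}) := by
    intro q q' hqq
    rw [Function.onFun, Set.disjoint_left]
    rintro _ ⟨e, he, rfl⟩ ⟨e', he', h⟩
    obtain ⟨c, rfl⟩ := Subgroup.orbE_eq_iff.1 h.symm
    refine hqq (he.2.symm.trans (Eq.trans (QuotientGroup.eq.2 ?_) he'.2))
    have := conj_mem_of_mem_normalCore c.2.2 e.vertex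
    change e.vertex⁻¹ * (c * e.vertex) ∈ F
    rwa [← mul_assoc]
  rw [hunion, Set.encard_iUnion_of_finite hdisj]
  have hq : ∀ q : G ⧸ F, ((D ⊓ F.normalCore).orbE ''
      {e ∈ bridgeSet b D | (e.vertex : G ⧸ F) = q}).encard =
      (Group.rank (D ⊓ F.normalCore : Subgroup G) - 1 : ℕ) := fun q => by
    obtain ⟨t, rfl⟩ := QuotientGroup.mk_surjective q
    exact encard_orbE_bridgeSet_coset t hord
  have := Fintype.ofFinite (G ⧸ F)
  simp only [hq]
  rw [finsum_eq_sum_of_fintype, Finset.sum_const, Finset.card_univ, ← Nat.card_eq_fintype_card,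
    nsmul_eq_mul, Subgroup.index, Nat.cast_mul]

/-- The number of `D`-orbits in `bridgeSet b D` is the virtual reduced rank of `D`, up to the factor
`[G : F]`. -/
theorem IsVirtRedRank.ncard_orbE_bridgeSet [IsFreeGroup F] [F.FiniteIndex]
    (hord : ∀ c x y : F, x < y → c * x < c * y) {r : ℚ} (hr : IsVirtRedRank D r) :
    (D.orbE '' bridgeSet b D).Finite ∧ ((D.orbE '' bridgeSet b D).ncard : ℚ) = F.index * r := by
  set N := F.normalCore with hN
  have hle : D ⊓ N ≤ F := inf_le_right.trans F.normalCore_le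
  have hfree : IsFreeGroup (D ⊓ N : Subgroup G) :=
    IsFreeGroup.ofMulEquiv (Subgroup.subgroupOfEquivOfLe hle)
  have hM : IsFreeGroup ((D ⊓ N).subgroupOf D) :=
    IsFreeGroup.ofMulEquiv (Subgroup.subgroupOfEquivOfLe inf_le_left).symm
  have hMN : (D ⊓ N).subgroupOf D = N.subgroupOf D := Subgroup.inf_subgroupOf_left _ _
  have hfi : ((D ⊓ N).subgroupOf D).FiniteIndex := by rw [hMN]; infer_instance
  obtain ⟨hfg, hrank⟩ := hr.eq ((D ⊓ N).subgroupOf D)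
  have : Group.FG (D ⊓ N : Subgroup G) := Group.fg_of_surjective
    (f := (Subgroup.subgroupOfEquivOfLe (inf_le_left : D ⊓ N ≤ D)).toMonoidHom)
    (Subgroup.subgroupOfEquivOfLe _).surjective
  rw [Group.rank_congr (Subgroup.subgroupOfEquivOfLe (inf_le_left : D ⊓ N ≤ D)), hMN] at hrank
  rw [hMN] at hfi
  have h1 := encard_orbE_bridgeSet (b := b) (D := D) hord
  have h2 := Subgroup.encard_orbE_of_normal D N (S := bridgeSet b D) smul_mem_bridgeSet
  have hfin' : ((D ⊓ N).orbE '' bridgeSet b D).Finite := by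
    rw [← Set.encard_ne_top_iff, h1]
    exact ENat.natCast_ne_top _
  have hfin : (D.orbE '' bridgeSet b D).Finite := by
    by_contra hinf
    rw [Set.Infinite.encard_eq hinf, ENat.top_mul (by simp)] at h2
    exact Set.encard_ne_top_iff.2 hfin' h2
  refine ⟨hfin, ?_⟩
  rw [h1, ← hfin.cast_ncard_eq, ENat.card_eq_coe_natCard] at h2
  have h3 : F.index * (Group.rank (D ⊓ N : Subgroup G) - 1) =
      (D.orbE '' bridgeSet b D).ncard * (N.subgroupOf D).index := by exact_mod_cast h2
  have hi : ((N.subgroupOf D).index : ℚ) ≠ 0 :=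
    Nat.cast_ne_zero.2 Subgroup.FiniteIndex.index_ne_zero
  refine mul_right_cancel₀ hi ?_
  rw [mul_assoc, hrank]
  exact_mod_cast h3.symm

end Conjugates

theorem Subgroup.ncard_orbE_inf_le {G ι : Type*} [Group G] {A B : Subgroup G}
    {S T U : Set (CayleyEdge G ι)} (hUS : U ⊆ S) (hUT : U ⊆ T)
    (hS : (A.orbE '' S).Finite) (hT : (B.orbE '' T).Finite) :
    ((A ⊓ B).orbE '' U).ncard ≤ (A.orbE '' S).ncard * (B.orbE '' T).ncard := by
  have h : ((A ⊓ B).orbE '' U).encard = ((fun e => (A.orbE e, B.orbE e)) '' U).encard := by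
    refine Set.encard_image_eq_of_iff fun e _ e' _ => ?_
    rw [Subgroup.orbE_eq_iff, Prod.mk.injEq, Subgroup.orbE_eq_iff, Subgroup.orbE_eq_iff]
    constructor
    · rintro ⟨c, h⟩
      exact ⟨⟨⟨c, c.2.1⟩, h⟩, ⟨⟨c, c.2.2⟩, h⟩⟩
    · rintro ⟨⟨x, rfl⟩, ⟨y, hy⟩⟩
      have hxy : (y : G) = x := mul_right_cancel (congrArg CayleyEdge.vertex hy)
      exact ⟨⟨x, x.2, hxy ▸ y.2⟩, rfl⟩
  rw [Set.ncard, h, ← Set.ncard, ← Set.ncard_prod]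
  refine Set.ncard_le_ncard ?_ (hS.prod hT)
  rintro _ ⟨e, he, rfl⟩
  exact ⟨⟨e, hUS he, rfl⟩, ⟨e, hUT he, rfl⟩⟩

/-- If `G` contains a free subgroup `F` of finite index and `A, B ≤ G`, then
`r̄k(A ∩ B) ≤ [G:F] ⬝ r̄k(A) ⬝ r̄k(B)`, where `r̄k` is the virtual reduced rank. -/
theorem virtually_free_hanna_neumann
    {G : Type*} [Group G] (F : Subgroup G) [IsFreeGroup F] [F.FiniteIndex]
    (A B : Subgroup G) (rA rB rAB : ℚ)
    (hrA : IsVirtRedRank A rA) (hrB : IsVirtRedRank B rB)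
    (hrAB : IsVirtRedRank (↥(A ⊓ B)) rAB) :
    rAB ≤ (F.index : ℚ) * rA * rB := by
  classical
  obtain ⟨_, hord⟩ := IsFreeGroup.exists_linearOrder F
  let b := IsFreeGroup.basis F
  let _ : LinearOrder (IsFreeGroup.Generators F) := linearOrderOfSTO WellOrderingRel
  obtain ⟨hA, hA'⟩ := hrA.ncard_orbE_bridgeSet (b := b) hord
  obtain ⟨hB, hB'⟩ := hrB.ncard_orbE_bridgeSet (b := b) hord
  obtain ⟨-, hAB'⟩ := hrAB.ncard_orbE_bridgeSet (b := b) hord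
  have hle := Subgroup.ncard_orbE_inf_le (bridgeSet_mono (b := b) inf_le_left)
    (bridgeSet_mono inf_le_right) hA hB
  have hle' : (F.index : ℚ) * rAB ≤ F.index * rA * (F.index * rB) := by
    rw [← hA', ← hB', ← hAB']
    exact_mod_cast hle
  have hi : (0 : ℚ) < F.index :=
    Nat.cast_pos.2 (Nat.pos_of_ne_zero Subgroup.FiniteIndex.index_ne_zero)
  refine le_of_mul_le_mul_left (hle'.trans_eq ?_) hi
  ring
end

section
/- (Strengthened Hanna Neumann conjecture, Friedman–Mineyev theorem.) Let A and B be finitely generated subgroups of a free group F, and let S be a system of representatives of the double cosets AsB in F (i.e., the map s ↦ AsB is a bijection from S onto the set of (A,B)-double cosets of F). Then ∑_{s∈S} r̄ank(A ∩ sBs⁻¹) ≤ r̄ank(A) · r̄ank(B); in particular, only finitely many terms of the sum are nonzero. -/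
/-- The rank of a group `H` (as an element of `ℕ∞`): the minimal cardinality of a finite
generating set of `H`, or `⊤` if `H` is not finitely generated. -/
noncomputable def grank (H : Type*) [Group H] : ℕ∞ :=
  sInf {n : ℕ∞ | ∃ s : Finset H, Subgroup.closure (s : Set H) = ⊤ ∧ n = s.card}

/-- The reduced rank `max (0, rank H - 1)` of a group `H`. -/
noncomputable def redRank (H : Type*) [Group H] : ℕ∞ :=
  grank H - 1

namespace HannaNeumann

/-! ### Free groups are bi-orderable -/

section Biorder

open Polynomial

/-- `prependHead x` sends a function on words to the function whose value at `x :: u` is the value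
at `u` when `u` does not start with `x`, and which vanishes at all other words. -/
noncomputable def prependHead {X : Type*} (x : X) : Module.End ℤ (List X → ℤ) := by
  classical
  exact
  { toFun := fun m w => if w.head? = some x ∧ w.tail.head? ≠ some x then m w.tail else 0
    map_add' := fun m n => by ext w; simp only [Pi.add_apply]; split_ifs <;> simp
    map_smul' := fun c m => by ext w; simp }

theorem prependHead_mul_self {X : Type*} (x : X) : prependHead x * prependHead x = 0 := by
  classical
  ext m w
  simp only [prependHead, Module.End.mul_apply, LinearMap.coe_mk, AddHom.coe_mk,
    LinearMap.zero_apply, Pi.zero_apply]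
  grind

/-- The polynomial `1 + n t ξₓ`. -/
noncomputable def transvection {X : Type*} (x : X) (n : ℤ) : (Module.End ℤ (List X → ℤ))[X] :=
  1 + C (n • prependHead x) * Polynomial.X

theorem transvection_mul {X : Type*} (x : X) (m n : ℤ) :
    transvection x m * transvection x n = transvection x (m + n) := by
  have h : (C (m • prependHead x) * Polynomial.X) * (C (n • prependHead x) * Polynomial.X) = 0 := by
    rw [mul_assoc, ← mul_assoc Polynomial.X, Polynomial.X_mul_C, mul_assoc, ← mul_assoc (C _),
      ← C_mul, smul_mul_smul_comm, prependHead_mul_self, smul_zero, C_0, zero_mul]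
  simp only [transvection, mul_add, add_mul, one_mul, mul_one, h, add_smul, C_add]
  abel

theorem transvection_zero {X : Type*} (x : X) : transvection x 0 = 1 := by
  simp [transvection]

/-- `transvection x` as a one-parameter subgroup. -/
noncomputable def transvectionHom {X : Type*} (x : X) :
    Multiplicative ℤ →* ((Module.End ℤ (List X → ℤ))[X])ˣ where
  toFun n := ⟨transvection x n.toAdd, transvection x (-n.toAdd),
    by rw [transvection_mul, add_neg_cancel, transvection_zero],
    by rw [transvection_mul, neg_add_cancel, transvection_zero]⟩
  map_one' := Units.ext (transvection_zero x)
  map_mul' m n := Units.ext (transvection_mul x _ _).symm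

/-- Evaluation of polynomials at `1`. -/
noncomputable def evalOne (S : Type*) [Ring S] : S[X] →+* S :=
  eval₂RingHom' (RingHom.id S) 1 fun a => Commute.one_right a

theorem evalOne_transvection {X : Type*} (x : X) (n : ℤ) :
    evalOne _ (transvection x n) = 1 + n • prependHead x := by
  change eval₂ _ _ _ = _
  rw [transvection, eval₂_add, eval₂_one, eval₂_mul_X, eval₂_C, mul_one, RingHom.id_apply]

/-- The functions on words whose longest words in the support exist and all start with `x`. -/
def startsWith {X : Type*} (x : X) : Set (List X → ℤ) :=
  {m | ∃ w, m (x :: w) ≠ 0 ∧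
    ∀ v, m v ≠ 0 → v.length ≤ w.length + 1 ∧ (v.length = w.length + 1 → v.head? = some x)}

theorem coprodI_lift_transvectionHom_injective (X : Type*) [Nontrivial X] :
    Function.Injective (Monoid.CoprodI.lift fun x : X => transvectionHom x) := by
  classical
  have key : Function.Injective (Monoid.CoprodI.lift
      fun x : X => (Units.map (evalOne _).toMonoidHom).comp (transvectionHom x)) := by
    refine Monoid.CoprodI.lift_injective_of_ping_pong _ (Or.inr ?_) startsWith ?_ ?_ ?_
    · obtain ⟨x⟩ := (inferInstance : Nonempty X)
      refine ⟨x, ?_⟩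
      rw [Cardinal.mk_eq_aleph0]
      exact (Cardinal.natCast_lt_aleph0 (n := 3)).le
    · intro x
      refine ⟨fun v => if v = [x] then 1 else 0, [], by simp, fun v hv => ?_⟩
      have : v = [x] := by by_contra h; simp [h] at hv
      simp [this]
    · intro x y hxy
      rw [Function.onFun, Set.disjoint_left]
      rintro m ⟨w, hw, hm⟩ ⟨w', hw', hm'⟩
      have h1 := hm _ hw'
      have h2 := hm' _ hw
      simp only [List.length_cons] at h1 h2
      have := h1.2 (by omega)
      simp only [List.head?_cons, Option.some.injEq] at this
      exact hxy this.symm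
    · rintro x y hxy n hn _ ⟨m, ⟨w, hw, hm⟩, rfl⟩
      have hn' : n.toAdd ≠ 0 := hn
      have happ : ∀ v, ((((Units.map (evalOne _).toMonoidHom).comp (transvectionHom x)) n) • m) v
          = m v + n.toAdd * (if v.head? = some x ∧ v.tail.head? ≠ some x then m v.tail else 0) := by
        intro v
        change (evalOne _ (transvection x n.toAdd)) m v = _
        rw [evalOne_transvection]
        simp [prependHead]
      have hz : m (x :: y :: w) = 0 := by
        by_contra h
        have := (hm _ h).1
        simp at this
      refine ⟨y :: w, ?_, fun v hv => ?_⟩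
      · dsimp only
        rw [happ, hz]
        simp [hn', hw, Ne.symm hxy]
      · dsimp only at hv
        rw [happ] at hv
        by_cases h : m v = 0
        · rw [h, zero_add] at hv
          have h2 := right_ne_zero_of_mul hv
          split_ifs at h2 with h3
          · obtain ⟨x', u, rfl⟩ : ∃ x' u, v = x' :: u := by
              cases v with
              | nil => simp at h3
              | cons a u => exact ⟨a, u, rfl⟩
            have := (hm _ h2).1
            simp only [List.tail_cons, List.length_cons] at this ⊢
            exact ⟨by omega, fun _ => h3.1⟩
          · exact absurd rfl h2
        · have := (hm _ h).1
          simp only [List.length_cons]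
          exact ⟨by omega, by omega⟩
  have hcomp : (Monoid.CoprodI.lift
      fun x : X => (Units.map (evalOne _).toMonoidHom).comp (transvectionHom x)) =
      (Units.map (evalOne _).toMonoidHom).comp
        (Monoid.CoprodI.lift fun x : X => transvectionHom x) := by
    ext x : 1
    ext
    simp
  rw [hcomp, MonoidHom.coe_comp] at key
  exact key.of_comp

theorem coeff_mul_eq_of_coeff_lt_eq_zero {S : Type*} [Ring S] {h p : S[X]} {n : ℕ}
    (hh : h.coeff 0 = 1) (hp : ∀ k < n, p.coeff k = 0) {k : ℕ} (hk : k ≤ n) :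
    (h * p).coeff k = p.coeff k ∧ (p * h).coeff k = p.coeff k := by
  constructor
  · rw [coeff_mul, Finset.sum_eq_single (0, k)]
    · simp [hh]
    · rintro ⟨i, j⟩ hij hne
      rw [Finset.HasAntidiagonal.mem_antidiagonal] at hij
      dsimp only at hij ⊢
      rw [hp j (by rcases i with _ | i; · simp_all
                   · omega), mul_zero]
    · simp
  · rw [coeff_mul, Finset.sum_eq_single (k, 0)]
    · simp [hh]
    · rintro ⟨i, j⟩ hij hne
      rw [Finset.HasAntidiagonal.mem_antidiagonal] at hij
      dsimp only at hij ⊢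
      rw [hp i (by rcases j with _ | j; · simp_all
                   · omega), zero_mul]
    · simp

/-- A group that embeds into the units with constant coefficient `1` of a polynomial ring whose
coefficient ring embeds additively into an ordered group is bi-orderable. -/
theorem exists_biorder_of_polynomial {G S L : Type*} [Group G] [Ring S] [AddCommGroup L]
    [LinearOrder L] [IsOrderedAddMonoid L] (e : S →+ L) (he : Function.Injective e)
    (φ : G →* S[X]ˣ) (hφ : Function.Injective φ) (h0 : ∀ g, (φ g : S[X]).coeff 0 = 1) :
    ∃ _ : LinearOrder G, MulLeftStrictMono G ∧ MulRightStrictMono G := by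
  let E : G → Lex (ℕ → L) := fun g => toLex fun n => e ((φ g : S[X]).coeff n)
  have hE : Function.Injective E := by
    intro g h hgh
    refine hφ (Units.ext (Polynomial.ext fun n => he ?_))
    exact congrFun hgh n
  let _ : LinearOrder G := LinearOrder.lift' E hE
  have hlt : ∀ g h : G, g < h ↔ ∃ n, (∀ k < n, (φ h - φ g : S[X]).coeff k = 0) ∧
      0 < e ((φ h - φ g : S[X]).coeff n) := by
    intro g h
    change (∃ n, (∀ k < n, e ((φ g : S[X]).coeff k) = e ((φ h : S[X]).coeff k)) ∧
      e ((φ g : S[X]).coeff n) < e ((φ h : S[X]).coeff n)) ↔ _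
    simp only [coeff_sub, map_sub, sub_pos, sub_eq_zero, he.eq_iff,
      eq_comm (a := (φ g : S[X]).coeff _)]
  refine ⟨inferInstance, ⟨fun k g h hgh => ?_⟩, ⟨fun k g h hgh => ?_⟩⟩
  · rw [hlt] at hgh ⊢
    obtain ⟨n, hn, hpos⟩ := hgh
    have hs : (φ (k * h) - φ (k * g) : S[X]) = φ k * (φ h - φ g) := by simp [mul_sub]
    refine ⟨n, fun j hj => ?_, ?_⟩
    · rw [hs, (coeff_mul_eq_of_coeff_lt_eq_zero (h0 k) hn hj.le).1, hn j hj]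
    · rwa [hs, (coeff_mul_eq_of_coeff_lt_eq_zero (h0 k) hn le_rfl).1]
  · change g * k < h * k
    rw [hlt] at hgh ⊢
    obtain ⟨n, hn, hpos⟩ := hgh
    have hs : (φ (h * k) - φ (g * k) : S[X]) = (φ h - φ g) * φ k := by simp [sub_mul]
    refine ⟨n, fun j hj => ?_, ?_⟩
    · rw [hs, (coeff_mul_eq_of_coeff_lt_eq_zero (h0 k) hn hj.le).2, hn j hj]
    · rwa [hs, (coeff_mul_eq_of_coeff_lt_eq_zero (h0 k) hn le_rfl).2]

/-- Free groups are bi-orderable. -/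
theorem exists_biorder (G : Type*) [Group G] [IsFreeGroup G] :
    ∃ _ : LinearOrder G, MulLeftStrictMono G ∧ MulRightStrictMono G := by
  classical
  let Y := IsFreeGroup.Generators G ⊕ Bool
  have : Nontrivial Y :=
    ⟨⟨Sum.inr true, Sum.inr false, fun h => Bool.noConfusion (Sum.inr_injective h)⟩⟩
  let toCoprod : FreeGroup Y →* Monoid.CoprodI fun _ : Y => Multiplicative ℤ :=
    FreeGroup.lift fun y => Monoid.CoprodI.of (i := y) (Multiplicative.ofAdd 1)
  have htoCoprod : Function.Injective toCoprod := by
    let back : (Monoid.CoprodI fun _ : Y => Multiplicative ℤ) →* FreeGroup Y :=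
      Monoid.CoprodI.lift fun y => zpowersHom _ (FreeGroup.of y)
    refine Function.LeftInverse.injective (g := back) fun g => ?_
    have : back.comp toCoprod = MonoidHom.id _ := by
      ext y
      simp [back, toCoprod]
    exact DFunLike.congr_fun this g
  let φ : G →* ((Module.End ℤ (List Y → ℤ))[X])ˣ :=
    ((Monoid.CoprodI.lift fun y : Y => transvectionHom y).comp toCoprod).comp
      ((FreeGroup.map Sum.inl).comp (IsFreeGroup.toFreeGroup G).toMonoidHom)
  have hφ : Function.Injective φ :=
    ((coprodI_lift_transvectionHom_injective Y).comp htoCoprod).comp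
      ((FreeGroup.map_injective Sum.inl_injective).comp (IsFreeGroup.toFreeGroup G).injective)
  obtain ⟨_, _⟩ := exists_wellFoundedLT ((List Y → ℤ) × List Y)
  let e : Module.End ℤ (List Y → ℤ) →+ Lex ((List Y → ℤ) × List Y → ℤ) :=
    { toFun := fun T => toLex fun p => T p.1 p.2
      map_zero' := rfl
      map_add' := fun _ _ => rfl }
  have he : Function.Injective e := by
    intro S T hST
    ext m w
    exact congrFun hST (m, w)
  refine exists_biorder_of_polynomial e he φ hφ fun g => ?_
  let P : Subgroup ((Module.End ℤ (List Y → ℤ))[X])ˣ :=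
    (Units.map (constantCoeff (R := Module.End ℤ (List Y → ℤ))).toMonoidHom).ker
  have hP : ∀ c, Monoid.CoprodI.lift (fun y : Y => transvectionHom y) c ∈ P := by
    intro c
    induction c using Monoid.CoprodI.induction_on with
    | one => rw [map_one]; exact P.one_mem
    | of i m =>
      rw [Monoid.CoprodI.lift_of]
      refine Units.ext ?_
      change (transvection i m.toAdd).coeff 0 = 1
      simp [transvection]
    | mul a b ha hb => rw [map_mul]; exact P.mul_mem ha hb
  exact congrArg Units.val (hP _)

end Biorder

/-! ### Malcev–Neumann series -/

theorem exists_ne_zero_of_finsum_ne_zero {α M : Type*} [AddCommMonoid M] {f : α → M}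
    (h : ∑ᶠ a, f a ≠ 0) : ∃ a, f a ≠ 0 := by
  by_contra! hzero
  exact h (finsum_eq_zero_of_forall_eq_zero hzero)

/-- Malcev–Neumann series: rational functions on an ordered group with well-ordered support. -/
def Series (G : Type*) [PartialOrder G] : Type _ := HahnSeries G ℚ

namespace Series

section Additive

variable {G : Type*} [PartialOrder G]

noncomputable instance : AddCommGroup (Series G) :=
  inferInstanceAs (AddCommGroup (HahnSeries G ℚ))

/-- The coefficient function of a series. -/
def coeff (f : Series G) : G → ℚ := HahnSeries.coeff f

/-- The series with a given coefficient function. -/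
def ofFun (f : G → ℚ) (hf : f.support.IsPWO) : Series G := ⟨f, hf⟩

@[simp] theorem coeff_ofFun (f : G → ℚ) (hf : f.support.IsPWO) : (ofFun f hf).coeff = f := rfl

theorem isPWO_support (f : Series G) : f.coeff.support.IsPWO := HahnSeries.isPWO_support f

@[ext] theorem ext {f g : Series G} (h : ∀ a, f.coeff a = g.coeff a) : f = g :=
  HahnSeries.ext (funext h)

@[simp] theorem coeff_zero (a : G) : (0 : Series G).coeff a = 0 := rfl

@[simp] theorem coeff_add (f g : Series G) (a : G) : (f + g).coeff a = f.coeff a + g.coeff a := rfl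

@[simp] theorem coeff_neg (f : Series G) (a : G) : (-f).coeff a = -f.coeff a := rfl

@[simp] theorem coeff_sub (f g : Series G) (a : G) : (f - g).coeff a = f.coeff a - g.coeff a := rfl

theorem exists_coeff_ne_zero {f : Series G} (hf : f ≠ 0) : ∃ a, f.coeff a ≠ 0 := by
  by_contra! h
  exact hf (ext h)

/-- The series `r g`. -/
noncomputable def single (g : G) (r : ℚ) : Series G :=
  HahnSeries.single g r

theorem coeff_single (g : G) (r : ℚ) (a : G) [Decidable (a = g)] :
    (single g r).coeff a = if a = g then r else 0 := by
  by_cases h : a = g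
  · rw [if_pos h, h]
    exact HahnSeries.coeff_single_same g r
  · rw [if_neg h]
    exact HahnSeries.coeff_single_of_ne h

theorem coeff_single_of_ne {g a : G} (r : ℚ) (h : a ≠ g) : (single g r).coeff a = 0 := by
  classical rw [coeff_single, if_neg h]

@[simp] theorem coeff_single_self (g : G) (r : ℚ) : (single g r).coeff g = r := by
  classical rw [coeff_single, if_pos rfl]

end Additive

theorem exists_min_coeff_ne_zero {G : Type*} [LinearOrder G] {f : Series G} (hf : f ≠ 0) :
    ∃ a, f.coeff a ≠ 0 ∧ ∀ b < a, f.coeff b = 0 := by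
  have hwf := f.isPWO_support.isWF
  have hne : f.coeff.support.Nonempty := exists_coeff_ne_zero hf
  refine ⟨hwf.min hne, hwf.min_mem hne, fun b hb => ?_⟩
  by_contra h
  exact hwf.not_lt_min hne h hb

variable {G : Type*} [Group G] [LinearOrder G]

noncomputable instance : One (Series G) := ⟨single 1 1⟩

theorem one_def : (1 : Series G) = single 1 1 := rfl

theorem coeff_one (a : G) [Decidable (a = 1)] :
    (1 : Series G).coeff a = if a = 1 then 1 else 0 :=
  coeff_single 1 1 a

variable [MulLeftStrictMono G] [MulRightStrictMono G]

theorem isPWO_mul {s t : Set G} (hs : s.IsPWO) (ht : t.IsPWO) :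
    {a : G | ∃ b ∈ s, b⁻¹ * a ∈ t}.IsPWO := by
  have : MulLeftMono G := mulLeftMono_of_mulLeftStrictMono G
  have : MulRightMono G := mulRightMono_of_mulRightStrictMono G
  refine ((hs.prod ht).image_of_monotone (f := fun p : G × G => p.1 * p.2) ?_).mono ?_
  · exact fun p q hpq => mul_le_mul' hpq.1 hpq.2
  · rintro a ⟨b, hb, hba⟩
    exact ⟨(b, b⁻¹ * a), ⟨hb, hba⟩, mul_inv_cancel_left b a⟩

theorem finite_antidiagonal {s t : Set G} (hs : s.IsPWO) (ht : t.IsPWO) (a : G) :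
    {b : G | b ∈ s ∧ b⁻¹ * a ∈ t}.Finite := by
  have : MulLeftMono G := mulLeftMono_of_mulLeftStrictMono G
  have : MulRightMono G := mulRightMono_of_mulRightStrictMono G
  have : IsOrderedCancelSMul G G :=
    { smul_le_smul_left := fun a b hab c => mul_le_mul_right hab c
      smul_le_smul_right := fun c d hcd a => mul_le_mul_left hcd a
      le_of_smul_le_smul_left := fun a b c h => le_of_mul_le_mul_left' h
      le_of_smul_le_smul_right := fun a b c h => le_of_mul_le_mul_right' h }
  refine ((Set.SMulAntidiagonal.finite_of_isPWO hs ht a).image Prod.fst).subset ?_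
  rintro b ⟨hb, hba⟩
  exact ⟨(b, b⁻¹ * a), ⟨hb, hba, mul_inv_cancel_left b a⟩, rfl⟩

theorem finite_support_mul (f g : Series G) (a : G) :
    (Function.support fun b => f.coeff b * g.coeff (b⁻¹ * a)).Finite := by
  refine (finite_antidiagonal f.isPWO_support g.isPWO_support a).subset fun b hb => ?_
  exact ⟨left_ne_zero_of_mul hb, right_ne_zero_of_mul hb⟩

/-- The convolution product of series. -/
noncomputable instance : Mul (Series G) where
  mul f g := ofFun (fun a => ∑ᶠ b, f.coeff b * g.coeff (b⁻¹ * a)) <| by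
    refine (isPWO_mul f.isPWO_support g.isPWO_support).mono fun a ha => ?_
    obtain ⟨b, hb⟩ := exists_ne_zero_of_finsum_ne_zero ha
    exact ⟨b, left_ne_zero_of_mul hb, right_ne_zero_of_mul hb⟩

theorem coeff_mul (f g : Series G) (a : G) :
    (f * g).coeff a = ∑ᶠ b, f.coeff b * g.coeff (b⁻¹ * a) := rfl

theorem coeff_mul_of_subset (f g : Series G) (a : G) (s : Finset G)
    (hs : ∀ b, f.coeff b ≠ 0 → g.coeff (b⁻¹ * a) ≠ 0 → b ∈ s) :
    (f * g).coeff a = ∑ b ∈ s, f.coeff b * g.coeff (b⁻¹ * a) :=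
  finsum_eq_sum_of_support_subset _ fun b hb =>
    hs b (left_ne_zero_of_mul hb) (right_ne_zero_of_mul hb)

theorem exists_of_coeff_mul_ne_zero {f g : Series G} {a : G} (h : (f * g).coeff a ≠ 0) :
    ∃ b, f.coeff b ≠ 0 ∧ g.coeff (b⁻¹ * a) ≠ 0 := by
  obtain ⟨b, hb⟩ := exists_ne_zero_of_finsum_ne_zero h
  exact ⟨b, left_ne_zero_of_mul hb, right_ne_zero_of_mul hb⟩

theorem coeff_single_mul (g : G) (r : ℚ) (f : Series G) (a : G) :
    (single g r * f).coeff a = r * f.coeff (g⁻¹ * a) := by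
  rw [coeff_mul_of_subset _ _ _ {g}]
  · simp
  · intro b hb _
    rw [Finset.mem_singleton]
    by_contra h
    exact hb (coeff_single_of_ne r h)

theorem coeff_mul_single (g : G) (r : ℚ) (f : Series G) (a : G) :
    (f * single g r).coeff a = f.coeff (a * g⁻¹) * r := by
  rw [coeff_mul_of_subset _ _ _ {a * g⁻¹}]
  · simp
  · intro b _ hb
    rw [Finset.mem_singleton]
    by_contra h
    refine hb (coeff_single_of_ne r fun h' => h ?_)
    rw [← h']
    group

theorem mul_assoc' (f g h : Series G) : f * g * h = f * (g * h) := by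
  ext a
  let sc := (finite_antidiagonal f.isPWO_support
    (isPWO_mul g.isPWO_support h.isPWO_support) a).toFinset
  let sb := (finite_antidiagonal (isPWO_mul f.isPWO_support g.isPWO_support)
    h.isPWO_support a).toFinset
  have hsc : ∀ c b, f.coeff c ≠ 0 → g.coeff (c⁻¹ * b) ≠ 0 → h.coeff (b⁻¹ * a) ≠ 0 → c ∈ sc := by
    intro c b hf hg hh
    rw [Set.Finite.mem_toFinset]
    refine ⟨hf, c⁻¹ * b, hg, ?_⟩
    have : (c⁻¹ * b)⁻¹ * (c⁻¹ * a) = b⁻¹ * a := by group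
    rwa [this]
  have hsb : ∀ c b, f.coeff c ≠ 0 → g.coeff (c⁻¹ * b) ≠ 0 → h.coeff (b⁻¹ * a) ≠ 0 → b ∈ sb := by
    intro c b hf hg hh
    rw [Set.Finite.mem_toFinset]
    exact ⟨⟨c, hf, hg⟩, hh⟩
  have hl : (f * g * h).coeff a =
      ∑ b ∈ sb, ∑ c ∈ sc, f.coeff c * g.coeff (c⁻¹ * b) * h.coeff (b⁻¹ * a) := by
    rw [coeff_mul_of_subset _ _ _ sb]
    · refine Finset.sum_congr rfl fun b _ => ?_
      by_cases hb : h.coeff (b⁻¹ * a) = 0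
      · simp [hb]
      · rw [coeff_mul_of_subset _ _ _ sc fun c hf hg => hsc c b hf hg hb, Finset.sum_mul]
    · intro b hfg hh
      obtain ⟨c, hf, hg⟩ := exists_of_coeff_mul_ne_zero hfg
      exact hsb c b hf hg hh
  have hr : (f * (g * h)).coeff a =
      ∑ c ∈ sc, ∑ b ∈ sb, f.coeff c * g.coeff (c⁻¹ * b) * h.coeff (b⁻¹ * a) := by
    rw [coeff_mul_of_subset _ _ _ sc]
    · refine Finset.sum_congr rfl fun c _ => ?_
      by_cases hc : f.coeff c = 0
      · simp [hc]
      · classical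
        rw [coeff_mul_of_subset _ _ _ (sb.image fun b => c⁻¹ * b), Finset.sum_image, Finset.mul_sum]
        · refine Finset.sum_congr rfl fun b _ => ?_
          rw [show (c⁻¹ * b)⁻¹ * (c⁻¹ * a) = b⁻¹ * a by group, mul_assoc]
        · exact fun b _ b' _ hbb => mul_left_cancel hbb
        · intro d hg hh
          refine Finset.mem_image.2 ⟨c * d, hsb c _ hc (by simpa using hg) ?_, by group⟩
          rwa [show (c * d)⁻¹ * a = d⁻¹ * (c⁻¹ * a) by group]
    · intro c hf hgh
      obtain ⟨d, hg, hh⟩ := exists_of_coeff_mul_ne_zero hgh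
      refine hsc c (c * d) hf (by simpa using hg) ?_
      rwa [show (c * d)⁻¹ * a = d⁻¹ * (c⁻¹ * a) by group]
  rw [hl, hr, Finset.sum_comm]

noncomputable instance : Ring (Series G) :=
  { (inferInstance : AddCommGroup (Series G)) with
    mul := (· * ·)
    one := 1
    mul_assoc := mul_assoc'
    one_mul := fun f => by ext a; rw [one_def, coeff_single_mul]; simp
    mul_one := fun f => by ext a; rw [one_def, coeff_mul_single]; simp
    zero_mul := fun f => by ext a; simp [coeff_mul]
    mul_zero := fun f => by ext a; simp [coeff_mul]
    left_distrib := fun f g h => by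
      ext a
      simp only [coeff_add, coeff_mul, mul_add]
      exact finsum_add_distrib (finite_support_mul f g a) (finite_support_mul f h a)
    right_distrib := fun f g h => by
      ext a
      simp only [coeff_add, coeff_mul, add_mul]
      exact finsum_add_distrib (finite_support_mul f h a) (finite_support_mul g h a) }

/-- The monomials form a copy of the group inside the series. -/
noncomputable def mono : G →* Series G where
  toFun g := single g 1
  map_one' := rfl
  map_mul' g h := by
    classical
    ext a
    rw [coeff_single_mul, coeff_single, coeff_single, one_mul]
    simp only [inv_mul_eq_iff_eq_mul]

@[simp] theorem coeff_mono_mul (g : G) (f : Series G) (a : G) :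
    (mono g * f).coeff a = f.coeff (g⁻¹ * a) := by
  simp [mono, coeff_single_mul]

@[simp] theorem coeff_mul_mono (g : G) (f : Series G) (a : G) :
    (f * mono g).coeff a = f.coeff (a * g⁻¹) := by
  simp [mono, coeff_mul_single]

theorem coeff_mono (g a : G) [Decidable (a = g)] :
    (mono g : Series G).coeff a = if a = g then 1 else 0 :=
  coeff_single g 1 a

theorem mono_injective : Function.Injective (mono : G → Series G) := by
  classical
  intro g h hgh
  have := congrArg (fun f => f.coeff g) hgh
  simp only [coeff_mono, if_true] at this
  by_contra hne
  simp [hne] at this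

instance : Nontrivial (Series G) :=
  ⟨1, 0, fun h => by simpa [one_def] using congrArg (fun f => f.coeff 1) h⟩

theorem coeff_mul_min {f g : Series G} {a b : G} (hf : ∀ c < a, f.coeff c = 0)
    (hg : ∀ c < b, g.coeff c = 0) :
    (f * g).coeff (a * b) = f.coeff a * g.coeff b ∧ ∀ c < a * b, (f * g).coeff c = 0 := by
  constructor
  · rw [coeff_mul_of_subset _ _ _ {a}]
    · simp
    · intro c hc hcb
      have h1 : a ≤ c := not_lt.1 fun h => hc (hf c h)
      have h2 : b ≤ c⁻¹ * (a * b) := not_lt.1 fun h => hcb (hg _ h)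
      rw [Finset.mem_singleton]
      by_contra hne
      have h3 : a * b < c * b := mul_lt_mul_left (lt_of_le_of_ne h1 (Ne.symm hne)) b
      have h4 : c * b ≤ a * b := by
        have : MulLeftMono G := mulLeftMono_of_mulLeftStrictMono G
        simpa using mul_le_mul_right h2 c
      exact absurd h3 h4.not_gt
  · intro c hc
    by_contra h
    obtain ⟨d, hd, hdc⟩ := exists_of_coeff_mul_ne_zero h
    have : MulLeftMono G := mulLeftMono_of_mulLeftStrictMono G
    have : MulRightMono G := mulRightMono_of_mulRightStrictMono G
    have h1 : a ≤ d := not_lt.1 fun h => hd (hf d h)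
    have h2 : b ≤ d⁻¹ * c := not_lt.1 fun h => hdc (hg _ h)
    have h3 := mul_le_mul' h1 h2
    rw [mul_inv_cancel_left] at h3
    exact absurd hc h3.not_gt

theorem isPWO_submonoid_closure {s : Set G} (hs : s.IsPWO) (hpos : ∀ x ∈ s, 1 ≤ x) :
    (Submonoid.closure s : Set G).IsPWO := by
  have : MulLeftMono G := mulLeftMono_of_mulLeftStrictMono G
  have : MulRightMono G := mulRightMono_of_mulRightStrictMono G
  rw [Submonoid.closure_eq_image_prod]
  refine (hs.partiallyWellOrderedOn_sublistForall₂ (· ≤ ·)).image_of_monotone_on ?_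
  exact fun l₁ _ l₂ hl₂ h₁₂ => h₁₂.prod_le_prod' fun x hx => hpos x <| hl₂ x hx

/-- A series `1 - u` with `u` supported above `1` has a right inverse. -/
theorem exists_one_sub_mul_eq_one {u : Series G} (hu : ∀ a, u.coeff a ≠ 0 → 1 < a) :
    ∃ v, (1 - u) * v = 1 := by
  classical
  let P := Submonoid.closure u.coeff.support
  have hP : (P : Set G).IsPWO := isPWO_submonoid_closure u.isPWO_support fun x hx => (hu x hx).le
  have hwf : WellFounded fun a b : P => (a : G) < b := hP.isWF
  let step (a : P) (rec : ∀ b : P, (b : G) < a → ℚ) : ℚ :=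
    (if (a : G) = 1 then 1 else 0) +
      ∑ᶠ b : G, if h : u.coeff b ≠ 0 ∧ b⁻¹ * a ∈ P then
        u.coeff b * rec ⟨b⁻¹ * a, h.2⟩ (by
          have h1 : b⁻¹ < 1 := inv_lt_one'.2 (hu b h.1)
          simpa using mul_lt_mul_left h1 (a : G)) else 0
  let v₀ : P → ℚ := hwf.fix step
  have hv₀ : ∀ a : P, v₀ a = (if (a : G) = 1 then 1 else 0) +
      ∑ᶠ b : G, if h : u.coeff b ≠ 0 ∧ b⁻¹ * (a : G) ∈ P then
        u.coeff b * v₀ ⟨b⁻¹ * a, h.2⟩ else 0 := fun a => hwf.fix_eq step a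
  let v : Series G := ofFun (fun a => if h : a ∈ P then v₀ ⟨a, h⟩ else 0) <| by
    refine hP.mono fun a ha => ?_
    by_contra h
    exact ha (dif_neg h)
  refine ⟨v, ?_⟩
  have hv : v = 1 + u * v := by
    ext a
    rw [coeff_add, coeff_one, coeff_mul]
    by_cases ha : a ∈ P
    · change (if h : a ∈ P then v₀ ⟨a, h⟩ else 0) = _
      rw [dif_pos ha, hv₀]
      congr 1
      refine finsum_congr fun b => ?_
      change _ = u.coeff b * (if h : b⁻¹ * a ∈ P then v₀ ⟨b⁻¹ * a, h⟩ else 0)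
      by_cases hb : u.coeff b = 0
      · simp [hb]
      · by_cases hba : b⁻¹ * a ∈ P
        · rw [dif_pos ⟨hb, hba⟩, dif_pos hba]
        · rw [dif_neg fun h => hba h.2, dif_neg hba, mul_zero]
    · change (if h : a ∈ P then v₀ ⟨a, h⟩ else 0) = _
      rw [dif_neg ha, if_neg (by rintro rfl; exact ha P.one_mem), zero_add]
      refine (finsum_eq_zero_of_forall_eq_zero fun b => ?_).symm
      by_cases hb : u.coeff b = 0
      · simp [hb]
      · change u.coeff b * (if h : b⁻¹ * a ∈ P then v₀ ⟨b⁻¹ * a, h⟩ else 0) = 0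
        rw [dif_neg, mul_zero]
        intro hba
        have := P.mul_mem (Submonoid.subset_closure hb) hba
        rw [mul_inv_cancel_left] at this
        exact ha this
  rw [sub_mul, one_mul, sub_eq_iff_eq_add]
  exact hv

/-- Every nonzero series has a right inverse. -/
theorem exists_mul_eq_one {f : Series G} (hf : f ≠ 0) : ∃ g, f * g = 1 := by
  obtain ⟨a, ha, hmin⟩ := exists_min_coeff_ne_zero hf
  let k : Series G := single a⁻¹ (f.coeff a)⁻¹
  have hu : ∀ b, (1 - k * f).coeff b ≠ 0 → 1 < b := by
    classical
    intro b hb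
    by_contra hb1
    refine hb ?_
    rw [coeff_sub, coeff_one, coeff_single_mul, inv_inv]
    rcases (not_lt.1 hb1).eq_or_lt with rfl | hlt
    · simp [ha]
    · have : a * b < a := by simpa using mul_lt_mul_right hlt a
      rw [hmin _ this, if_neg hlt.ne, mul_zero, sub_zero]
  obtain ⟨v, hv⟩ := exists_one_sub_mul_eq_one hu
  rw [sub_sub_cancel] at hv
  refine ⟨v * k, ?_⟩
  let k' : Series G := single a (f.coeff a)
  have hk : k' * k = 1 := by
    classical
    ext b
    rw [coeff_single_mul, coeff_single, coeff_one]
    simp only [inv_mul_eq_iff_eq_mul, mul_inv_cancel]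
    split_ifs <;> simp [ha]
  have hk2 : f * v = k' := by
    rw [← one_mul (f * v), ← hk, mul_assoc, ← mul_assoc k, hv, mul_one]
  rw [← mul_assoc, hk2, hk]

end Series

/-! ### Series supported on a subgroup -/

namespace Series

variable {G : Type*} [Group G] [LinearOrder G]

open Classical in
/-- The truncation of a series to the subgroup `H`. -/
noncomputable def truncAux (H : Subgroup G) (f : Series G) : Series G :=
  ofFun (fun a => if a ∈ H then f.coeff a else 0)
    (f.isPWO_support.mono fun a ha => by
      simp only [Function.mem_support, ne_eq, ite_eq_right_iff, Classical.not_imp] at ha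
      exact ha.2)

theorem coeff_truncAux_of_mem {H : Subgroup G} (f : Series G) {a : G} (ha : a ∈ H) :
    (truncAux H f).coeff a = f.coeff a := by
  simp [truncAux, ha]

theorem coeff_truncAux_of_notMem {H : Subgroup G} (f : Series G) {a : G} (ha : a ∉ H) :
    (truncAux H f).coeff a = 0 := by
  simp [truncAux, ha]

variable [MulLeftStrictMono G] [MulRightStrictMono G]

/-- The subring of series supported on the subgroup `H`. -/
noncomputable def supportedOn (H : Subgroup G) : Subring (Series G) where
  carrier := {f | ∀ a, f.coeff a ≠ 0 → a ∈ H}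
  zero_mem' a h := absurd (coeff_zero a) h
  one_mem' a h := by
    classical
    rw [coeff_one] at h
    obtain rfl : a = 1 := by by_contra h'; simp [h'] at h
    exact H.one_mem
  add_mem' {f g} hf hg a h := by
    by_cases hfa : f.coeff a = 0
    · exact hg a (by simpa [hfa] using h)
    · exact hf a hfa
  neg_mem' {f} hf a h := hf a (by simpa using h)
  mul_mem' {f g} hf hg a h := by
    obtain ⟨b, hb⟩ := exists_of_coeff_mul_ne_zero h
    have := H.mul_mem (hf b hb.1) (hg _ hb.2)
    simpa using this

theorem supportedOn_mono {H K : Subgroup G} (h : H ≤ K) : supportedOn H ≤ supportedOn K :=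
  fun _ hf a ha => h (hf a ha)

theorem mono_mem_supportedOn {H : Subgroup G} {g : G} (hg : g ∈ H) : mono g ∈ supportedOn H := by
  classical
  intro a ha
  rw [coeff_mono] at ha
  obtain rfl : a = g := by by_contra h'; simp [h'] at ha
  exact hg

theorem truncAux_mem (H : Subgroup G) (f : Series G) : truncAux H f ∈ supportedOn H := by
  intro a h
  by_contra ha
  exact h (coeff_truncAux_of_notMem f ha)

theorem truncAux_mul {H : Subgroup G} {d : Series G} (hd : d ∈ supportedOn H) (f : Series G) :
    truncAux H (d * f) = d * truncAux H f := by
  ext a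
  by_cases ha : a ∈ H
  · rw [coeff_truncAux_of_mem _ ha, coeff_mul, coeff_mul]
    refine finsum_congr fun b => ?_
    by_cases hb : d.coeff b = 0
    · simp [hb]
    · rw [coeff_truncAux_of_mem _ (H.mul_mem (H.inv_mem (hd b hb)) ha)]
  · have := (supportedOn H).mul_mem hd (truncAux_mem H f)
    rw [coeff_truncAux_of_notMem _ ha]
    by_contra h
    exact ha (this a (Ne.symm h))

/-- Truncation to the subgroup `H`, as a linear map. -/
noncomputable def trunc (H : Subgroup G) : Series G →ₗ[supportedOn H] supportedOn H where
  toFun f := ⟨truncAux H f, truncAux_mem H f⟩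
  map_add' f g := by
    ext a
    by_cases ha : a ∈ H
    · simp [coeff_truncAux_of_mem _ ha]
    · simp [coeff_truncAux_of_notMem _ ha]
  map_smul' d f := Subtype.ext (truncAux_mul d.2 f)

theorem coeff_trunc {H : Subgroup G} (f : Series G) {a : G} (ha : a ∈ H) :
    (trunc H f : Series G).coeff a = f.coeff a := coeff_truncAux_of_mem f ha

theorem trunc_of_mem {H : Subgroup G} {f : Series G} (hf : f ∈ supportedOn H) :
    trunc H f = ⟨f, hf⟩ := by
  ext a
  by_cases ha : a ∈ H
  · exact coeff_trunc f ha
  · have h1 : f.coeff a = 0 := by by_contra h; exact ha (hf a h)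
    exact (coeff_truncAux_of_notMem f ha).trans h1.symm

theorem trunc_eq_zero {H : Subgroup G} {f : Series G} (hf : ∀ a ∈ H, f.coeff a = 0) :
    trunc H f = 0 := by
  ext a
  by_cases ha : a ∈ H
  · exact (coeff_trunc f ha).trans (hf a ha)
  · exact coeff_truncAux_of_notMem f ha

theorem exists_mul_eq_one_supportedOn {H : Subgroup G} {d : supportedOn H} (hd : d ≠ 0) :
    ∃ e : supportedOn H, d * e = 1 := by
  obtain ⟨e, he⟩ := exists_mul_eq_one (f := (d : Series G)) (by simpa using hd)
  refine ⟨trunc H e, ?_⟩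
  have h := (trunc H).map_smul d e
  rw [smul_eq_mul] at h
  rw [← h]
  have h1 : d • e = 1 := he
  rw [h1, trunc_of_mem (supportedOn H).one_mem]
  rfl

theorem isUnit_supportedOn {H : Subgroup G} {d : supportedOn H} (hd : d ≠ 0) : IsUnit d := by
  obtain ⟨e, he⟩ := exists_mul_eq_one_supportedOn hd
  have he0 : e ≠ 0 := by rintro rfl; simp at he
  obtain ⟨f, hf⟩ := exists_mul_eq_one_supportedOn he0
  have : d = f := by
    calc d = d * (e * f) := by rw [hf, mul_one]
      _ = f := by rw [← mul_assoc, he, one_mul]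
  exact ⟨⟨d, e, he, this ▸ hf⟩, rfl⟩

noncomputable instance (H : Subgroup G) : DivisionRing (supportedOn H) :=
  DivisionRing.ofIsUnitOrEqZero fun d => (eq_or_ne d 0).symm.imp_left isUnit_supportedOn

end Series

/-! ### Derivations on free groups -/

theorem closure_range_basis {ι G : Type*} [Group G] (b : FreeGroupBasis ι G) :
    Subgroup.closure (Set.range b) = ⊤ := by
  have h : Set.range b = b.repr.symm '' Set.range FreeGroup.of := by
    rw [← Set.range_comp]; rfl
  have h2 := congrArg (Subgroup.map b.repr.symm.toMonoidHom) (FreeGroup.closure_range_of ι)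
  rw [MonoidHom.map_closure, Subgroup.map_top_of_surjective _ b.repr.symm.surjective] at h2
  rw [h]
  exact h2

/-- A derivation from a group to a module, with respect to a multiplicative map into the ring of
scalars. -/
structure IsDerivation {G R V : Type*} [Group G] [Ring R] [AddCommGroup V] [Module R V]
    (u : G →* R) (δ : G → V) : Prop where
  map_mul : ∀ g h, δ (g * h) = δ g + u g • δ h

namespace IsDerivation

variable {G R V : Type*} [Group G] [Ring R] [AddCommGroup V] [Module R V] {u : G →* R} {δ : G → V}

theorem map_one (h : IsDerivation u δ) : δ 1 = 0 := by
  have := h.map_mul 1 1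
  simpa using this

theorem map_inv (h : IsDerivation u δ) (g : G) : δ g⁻¹ = -(u g⁻¹ • δ g) := by
  have := h.map_mul g⁻¹ g
  rw [inv_mul_cancel, h.map_one] at this
  exact eq_neg_of_add_eq_zero_left this.symm

theorem map_mem_span (h : IsDerivation u δ) (R' : Subring R) {s : Set G}
    (hs : ∀ g ∈ Subgroup.closure s, u g ∈ R') {g : G} (hg : g ∈ Subgroup.closure s) :
    δ g ∈ Submodule.span R' (δ '' s) := by
  induction hg using Subgroup.closure_induction with
  | mem x hx => exact Submodule.subset_span ⟨x, hx, rfl⟩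
  | one => rw [h.map_one]; exact zero_mem _
  | mul x y hx hy ihx ihy =>
    rw [h.map_mul]
    exact add_mem ihx (Submodule.smul_mem _ (⟨u x, hs x hx⟩ : R') ihy)
  | inv x hx ihx =>
    rw [h.map_inv]
    exact neg_mem (Submodule.smul_mem _ (⟨u x⁻¹, hs _ (inv_mem hx)⟩ : R') ihx)

end IsDerivation

/-- The affine permutation `v ↦ u g • v + w`. -/
def affinePerm {G R V : Type*} [Group G] [Ring R] [AddCommGroup V] [Module R V]
    (u : G →* R) (g : G) (w : V) : Equiv.Perm V where
  toFun v := u g • v + w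
  invFun v := u g⁻¹ • (v - w)
  left_inv v := by simp [smul_smul, ← map_mul]
  right_inv v := by simp [smul_smul, ← map_mul]

theorem exists_isDerivation {ι G R V : Type*} [Group G] [Ring R] [AddCommGroup V] [Module R V]
    (b : FreeGroupBasis ι G) (u : G →* R) (f : ι → V) :
    ∃ δ : G → V, IsDerivation u δ ∧ ∀ i, δ (b i) = f i := by
  let φ : G →* Equiv.Perm V := b.lift fun i => affinePerm u (b i) (f i)
  have hφ (i) : φ (b i) = affinePerm u (b i) (f i) := congrFun (b.lift.symm_apply_apply _) i
  have key (g : G) : ∀ v, φ g v = u g • v + φ g 0 := by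
    have hg : g ∈ Subgroup.closure (Set.range b) := by
      rw [closure_range_basis]; trivial
    induction hg using Subgroup.closure_induction with
    | mem x hx =>
      obtain ⟨i, rfl⟩ := hx
      simp [hφ, affinePerm]
    | one => simp
    | mul x y _ _ ihx ihy =>
      intro v
      rw [map_mul, Equiv.Perm.mul_apply, Equiv.Perm.mul_apply, ihx, ihx (φ y 0), ihy]
      simp [smul_smul, add_assoc]
    | inv x _ ihx =>
      intro v
      apply (φ x).injective
      rw [← Equiv.Perm.mul_apply, ← map_mul, ihx (_ + _), smul_add, smul_smul, ← map_mul, add_assoc,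
        ← ihx (φ x⁻¹ 0), ← Equiv.Perm.mul_apply, ← map_mul]
      simp
  refine ⟨fun g => φ g 0, ⟨fun g h => ?_⟩, fun i => ?_⟩
  · rw [map_mul, Equiv.Perm.mul_apply, key, add_comm]
  · simp [hφ, affinePerm]

/-! ### Fox calculus over series -/

open Series

universe u

section Fox

variable {F X : Type u} [Group F] [LinearOrder F] [MulLeftStrictMono F] [MulRightStrictMono F]
  (b : FreeGroupBasis X F)

/-- The universal derivation of a free group, with values in the free module over series. -/
noncomputable def fox : F → X →₀ Series F :=
  (exists_isDerivation b (mono : F →* Series F) fun x => Finsupp.single x 1).choose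

theorem isDerivation_fox : IsDerivation (mono : F →* Series F) (fox b) :=
  (exists_isDerivation b (mono : F →* Series F) fun x => Finsupp.single x 1).choose_spec.1

theorem fox_basis (x : X) : fox b (b x) = Finsupp.single x 1 :=
  (exists_isDerivation b (mono : F →* Series F) fun x => Finsupp.single x 1).choose_spec.2 x

/-- The boundary map sending the basis vector at `x` to `x - 1`. -/
noncomputable def boundary : (X →₀ Series F) →ₗ[Series F] Series F :=
  Finsupp.linearCombination (Series F) fun x => mono (b x) - 1

theorem boundary_smul {H : Subgroup F} (d : supportedOn H) (w : X →₀ Series F) :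
    boundary b (d • w) = (d : Series F) * boundary b w :=
  map_smul (boundary b) (d : Series F) w

theorem boundary_fox (g : F) : boundary b (fox b g) = mono g - 1 := by
  have hg : g ∈ Subgroup.closure (Set.range b) := by
    rw [closure_range_basis]; trivial
  have hd := isDerivation_fox b
  induction hg using Subgroup.closure_induction with
  | mem x hx =>
    obtain ⟨i, rfl⟩ := hx
    simp [fox_basis, boundary]
  | one => simp [hd.map_one]
  | mul x y _ _ ihx ihy =>
    rw [hd.map_mul, map_add, map_smul, ihx, ihy, smul_eq_mul, map_mul]
    noncomm_ring
  | inv x _ ihx =>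
    rw [hd.map_inv, map_neg, map_smul, ihx, smul_eq_mul, mul_sub, ← map_mul]
    simp

/-- The span of the Fox derivatives of the elements of `H` over the series supported on `H`. -/
noncomputable def foxSpan (H : Subgroup F) : Submodule (supportedOn H) (X →₀ Series F) :=
  Submodule.span _ (fox b '' H)

theorem fox_mem_foxSpan {H : Subgroup F} {h : F} (hh : h ∈ H) : fox b h ∈ foxSpan b H :=
  Submodule.subset_span ⟨h, hh, rfl⟩

theorem boundary_mem {H : Subgroup F} {w : X →₀ Series F} (hw : w ∈ foxSpan b H) :
    boundary b w ∈ supportedOn H := by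
  induction hw using Submodule.span_induction with
  | mem x hx =>
    obtain ⟨h, hh, rfl⟩ := hx
    rw [boundary_fox]
    exact sub_mem (mono_mem_supportedOn hh) (one_mem _)
  | zero => rw [map_zero]; exact zero_mem _
  | add x y _ _ hx hy => rw [map_add]; exact add_mem hx hy
  | smul d x _ hx =>
    rw [boundary_smul]
    exact mul_mem d.2 hx

/-- The elements of `foxSpan b H` with trivial boundary. -/
noncomputable def cycles (H : Subgroup F) : Submodule (supportedOn H) (X →₀ Series F) :=
  foxSpan b H ⊓ LinearMap.ker ((boundary b).restrictScalars (supportedOn H))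

theorem foxSpan_mono {H K : Subgroup F} (h : H ≤ K) {w : X →₀ Series F} (hw : w ∈ foxSpan b H) :
    w ∈ foxSpan b K := by
  induction hw using Submodule.span_induction with
  | mem x hx =>
    obtain ⟨g, hg, rfl⟩ := hx
    exact fox_mem_foxSpan b (h hg)
  | zero => exact zero_mem _
  | add x y _ _ hx hy => exact add_mem hx hy
  | smul d x _ hx => exact Submodule.smul_mem _ (⟨d, supportedOn_mono h d.2⟩ : supportedOn K) hx

theorem cycles_mono {H K : Subgroup F} (h : H ≤ K) {w : X →₀ Series F} (hw : w ∈ cycles b H) :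
    w ∈ cycles b K :=
  ⟨foxSpan_mono b h hw.1, hw.2⟩

theorem conj_mem_supportedOn {H : Subgroup F} {s : F} {d : Series F}
    (hd : d ∈ supportedOn (H.map (MulAut.conj s).toMonoidHom)) :
    mono s⁻¹ * d * mono s ∈ supportedOn H := by
  intro a ha
  rw [coeff_mul_mono, coeff_mono_mul] at ha
  obtain ⟨h, hh, he⟩ := hd _ ha
  have : h = a := by simpa [mul_assoc] using he
  exact this ▸ hh

theorem conj_mem_foxSpan {H : Subgroup F} {s : F} {w : X →₀ Series F}
    (hw : w ∈ foxSpan b (H.map (MulAut.conj s).toMonoidHom)) :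
    (mono s⁻¹ : Series F) • (w + boundary b w • fox b s) ∈ foxSpan b H := by
  have hd := isDerivation_fox b
  induction hw using Submodule.span_induction with
  | mem x hx =>
    obtain ⟨_, ⟨h, hh, rfl⟩, rfl⟩ := hx
    convert fox_mem_foxSpan b hh using 1
    rw [boundary_fox]
    simp only [MulEquiv.toMonoidHom_eq_coe, MonoidHom.coe_coe, MulAut.conj_apply,
      hd.map_mul, hd.map_inv, smul_add, smul_neg, sub_smul, smul_sub, one_smul, smul_smul,
      ← map_mul]
    simp only [mul_assoc, inv_mul_cancel_left, inv_mul_cancel, map_one, one_smul]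
    abel
  | zero => simp
  | add x y _ _ hx hy =>
    convert add_mem hx hy using 1
    rw [map_add, ← smul_add, add_smul]
    abel_nf
  | smul d x _ hx =>
    convert Submodule.smul_mem _ (⟨_, conj_mem_supportedOn d.2⟩ : supportedOn H) hx using 1
    rw [boundary_smul]
    change (mono s⁻¹ : Series F) • ((d : Series F) • x + _) =
      (mono s⁻¹ * (d : Series F) * mono s) • _
    rw [smul_smul, mul_assoc, mul_assoc, ← map_mul, mul_inv_cancel, map_one, mul_one, ← smul_smul,
      smul_add, smul_add, smul_smul, smul_smul]

theorem conj_mem_cycles {H : Subgroup F} {s : F} {w : X →₀ Series F}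
    (hw : w ∈ cycles b (H.map (MulAut.conj s).toMonoidHom)) :
    (mono s⁻¹ : Series F) • w ∈ cycles b H := by
  have hw2 : boundary b w = 0 := hw.2
  refine ⟨?_, ?_⟩
  · have := conj_mem_foxSpan b hw.1
    rwa [hw2, zero_smul, add_zero] at this
  · change boundary b _ = 0
    rw [map_smul, hw2, smul_zero]

/-- The boundary map restricted to `foxSpan b H`. -/
noncomputable def boundaryOn (H : Subgroup F) : foxSpan b H →ₗ[supportedOn H] supportedOn H :=
  trunc H ∘ₗ (boundary b).restrictScalars (supportedOn H) ∘ₗ (foxSpan b H).subtype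

theorem coe_boundaryOn {H : Subgroup F} (w : foxSpan b H) :
    (boundaryOn b H w : Series F) = boundary b w :=
  congrArg Subtype.val (trunc_of_mem (boundary_mem b w.2))

theorem rank_range_add_rank_cycles (H : Subgroup F) :
    Module.rank (supportedOn H) (LinearMap.range (boundaryOn b H)) +
      Module.rank (supportedOn H) (cycles b H) = Module.rank (supportedOn H) (foxSpan b H) := by
  rw [← LinearMap.rank_range_add_rank_ker (boundaryOn b H)]
  have hle : cycles b H ≤ foxSpan b H := inf_le_left
  have hk : LinearMap.ker (boundaryOn b H) = (cycles b H).comap (foxSpan b H).subtype := by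
    ext w
    rw [LinearMap.mem_ker, ← Subtype.coe_inj, coe_boundaryOn]
    exact ⟨fun h => ⟨w.2, h⟩, fun h => h.2⟩
  rw [hk, (Submodule.comapSubtypeEquivOfLe hle).rank_eq]

theorem rank_foxSpan_le (H : Subgroup F) :
    Module.rank (supportedOn H) (foxSpan b H) ≤ Module.rank (supportedOn H) (cycles b H) + 1 := by
  rw [← rank_range_add_rank_cycles, add_comm]
  gcongr
  exact (Submodule.rank_le _).trans (Module.rank_self _).le

theorem rank_cycles_add_one_le {H : Subgroup F} (hH : H ≠ ⊥) :
    Module.rank (supportedOn H) (cycles b H) + 1 ≤ Module.rank (supportedOn H) (foxSpan b H) := by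
  rw [← rank_range_add_rank_cycles, add_comm]
  gcongr
  rw [Cardinal.one_le_iff_ne_zero]
  obtain ⟨h, hh, h1⟩ := H.bot_or_exists_ne_one.resolve_left hH
  intro h0
  rw [rank_zero_iff] at h0
  have h2 := Subsingleton.elim (⟨_, ⟨⟨_, fox_mem_foxSpan b hh⟩, rfl⟩⟩ :
    LinearMap.range (boundaryOn b H)) 0
  have h3 := congrArg (fun z : LinearMap.range (boundaryOn b H) => ((z : supportedOn H) : Series F))
    h2
  simp only [coe_boundaryOn, boundary_fox, ZeroMemClass.coe_zero, sub_eq_zero] at h3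
  exact h1 (mono_injective (h3.trans (map_one _).symm))

theorem rank_foxSpan_le_card {H : Subgroup F} (s : Finset H)
    (hs : Subgroup.closure (s : Set H) = ⊤) :
    Module.rank (supportedOn H) (foxSpan b H) ≤ s.card := by
  classical
  have hcl : Subgroup.closure (Subtype.val '' (s : Set H)) = H := by
    have := MonoidHom.map_closure H.subtype (s : Set H)
    rw [hs, ← MonoidHom.range_eq_map, Subgroup.range_subtype] at this
    exact this.symm
  have hspan : foxSpan b H ≤
      Submodule.span (supportedOn H) (fox b '' (Subtype.val '' (s : Set H))) := by
    refine Submodule.span_le.2 ?_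
    rintro _ ⟨h, hh, rfl⟩
    refine (isDerivation_fox b).map_mem_span _ (fun g hg => ?_) (by rwa [hcl])
    exact mono_mem_supportedOn (hcl.le hg)
  refine (Submodule.rank_mono hspan).trans ((rank_span_le _).trans ?_)
  rw [← Set.image_comp]
  exact Cardinal.mk_image_le.trans (by simp)

end Fox

/-! ### Fox derivatives of a basis of a subgroup -/

section Independence

variable {F X : Type u} [Group F] [LinearOrder F] [MulLeftStrictMono F] [MulRightStrictMono F]

/-- The functional sending `v` to the part of `v x` supported on the coset `H g`, shifted
to `H`. -/
noncomputable def coordAt (H : Subgroup F) (x : X) (g : F) :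
    (X →₀ Series F) →ₗ[supportedOn H] supportedOn H where
  toFun v := trunc H (v x * mono g⁻¹)
  map_add' v w := by rw [Finsupp.add_apply, add_mul, map_add]
  map_smul' d v := by
    have : (d • v) x * mono g⁻¹ = d • (v x * mono g⁻¹) := mul_assoc _ _ _
    rw [this, map_smul, RingHom.id_apply]

theorem coeff_coordAt {H : Subgroup F} (x : X) (g : F) (v : X →₀ Series F) {h : F} (hh : h ∈ H) :
    (coordAt H x g v : Series F).coeff h = (v x).coeff (h * g) := by
  refine (coeff_trunc _ hh).trans ?_
  rw [coeff_mul_mono, inv_inv]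

theorem coordAt_eq_zero {H : Subgroup F} {x : X} {g : F} {v : X →₀ Series F}
    (h : ∀ k ∈ H, (v x).coeff (k * g) = 0) : coordAt H x g v = 0 :=
  trunc_eq_zero fun k hk => by rw [coeff_mul_mono, inv_inv, h k hk]

theorem coordAt_single_self (H : Subgroup F) (x : X) (g : F) :
    coordAt H x g (Finsupp.single x (mono g)) = 1 := by
  change trunc H (Finsupp.single x (mono g) x * mono g⁻¹) = 1
  rw [Finsupp.single_eq_same, ← map_mul, mul_inv_cancel, map_one,
    trunc_of_mem (supportedOn H).one_mem]
  rfl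

theorem coordAt_single_of_ne {H : Subgroup F} {x y : X} {g h : F}
    (hne : y = x → ∀ k ∈ H, k * g ≠ h) : coordAt H x g (Finsupp.single y (mono h)) = 0 := by
  classical
  refine coordAt_eq_zero fun k hk => ?_
  rw [Finsupp.single_apply]
  split_ifs with hy
  · rw [coeff_mono, if_neg (hne hy k hk)]
  · exact coeff_zero _

theorem linearIndependent_single_mono {C : Subgroup F} {T : Set F}
    (hT : Subgroup.IsComplement (C : Set F) T) :
    LinearIndependent (supportedOn C)
      fun p : T × X => Finsupp.single p.2 (mono (p.1 : F) : Series F) := by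
  refine .of_pairwise_dual_eq_zero_one _ (fun p => coordAt C p.2 (p.1 : F)) ?_
    fun p => coordAt_single_self C p.2 p.1
  rintro ⟨t, x⟩ ⟨t', x'⟩ hne
  refine coordAt_single_of_ne fun hx k hk hkt => hne ?_
  have := hT.1 (a₁ := (⟨k, hk⟩, t)) (a₂ := (⟨1, C.one_mem⟩, t')) (by simpa using hkt)
  exact Prod.ext (congrArg Prod.snd this) hx.symm

theorem exists_linearMap_eq {K V V' ι : Type*} [DivisionRing K] [AddCommGroup V] [AddCommGroup V']
    [Module K V] [Module K V'] {e : ι → V} (he : LinearIndependent K e) (f : ι → V') :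
    ∃ φ : V →ₗ[K] V', ∀ i, φ (e i) = f i := by
  obtain ⟨φ, hφ⟩ := LinearMap.exists_extend ((Module.Basis.span he).constr ℕ f)
  refine ⟨φ, fun i => ?_⟩
  have h1 := LinearMap.congr_fun hφ (Module.Basis.span he i)
  rw [Module.Basis.constr_basis] at h1
  rw [← h1, Module.Basis.span_apply]
  rfl

/-- The embedding of a subgroup into the series it supports. -/
noncomputable def monoOn (C : Subgroup F) : C →* supportedOn C :=
  (mono.comp C.subtype).codRestrict (supportedOn C) fun c => mono_mem_supportedOn c.2

variable (b : FreeGroupBasis X F)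

theorem exists_linearMap_fox {C : Subgroup F} {δ : C → supportedOn C}
    (hδ : IsDerivation (monoOn C) δ) :
    ∃ ψ : (X →₀ Series F) →ₗ[supportedOn C] supportedOn C, ∀ c : C, ψ (fox b c) = δ c := by
  obtain ⟨T, hT, hT1⟩ := C.exists_isComplement_right 1
  let γ : F → C := fun g => (hT.equiv g).1
  let τ : F → T := fun g => (hT.equiv g).2
  have hγτ (g : F) : (γ g : F) * τ g = g := hT.equiv_fst_mul_equiv_snd g
  have hγ (c : C) (g : F) : γ (c * g) = c * γ g := congrArg Prod.fst (hT.equiv_mul_left c g)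
  have hγC (c : C) : γ c = c := hT.equiv_fst_eq_self_of_mem_of_one_mem hT1 c.2
  obtain ⟨ψ, hψ⟩ := exists_linearMap_eq (linearIndependent_single_mono (X := X) hT)
    fun p => δ (γ (p.1 * b p.2))
  have hd := isDerivation_fox b
  have step (g : F) (x : X) :
      ψ (fox b (g * b x)) - δ (γ (g * b x)) = ψ (fox b g) - δ (γ g) := by
    have h1 : (mono g : Series F) • fox b (b x) =
        monoOn C (γ g) • Finsupp.single x (mono (τ g : F) : Series F) := by
      rw [fox_basis, Finsupp.smul_single, smul_eq_mul, mul_one, Finsupp.smul_single]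
      congr 1
      conv_lhs => rw [← hγτ g, map_mul]
      rfl
    have h2 : γ (g * b x) = γ g * γ (τ g * b x) := by
      rw [← hγ, ← mul_assoc, hγτ]
    rw [hd.map_mul, h1, map_add, map_smul, hψ (τ g, x), h2, hδ.map_mul]
    abel
  have key (k : F) : ∀ g, ψ (fox b (g * k)) - δ (γ (g * k)) = ψ (fox b g) - δ (γ g) := by
    have hk : k ∈ Subgroup.closure (Set.range b) := by
      rw [closure_range_basis]; trivial
    induction hk using Subgroup.closure_induction with
    | mem y hy =>
      obtain ⟨x, rfl⟩ := hy
      exact fun g => step g x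
    | one => simp
    | mul y z _ _ ihy ihz => exact fun g => by rw [← mul_assoc, ihz, ihy]
    | inv y _ ihy => exact fun g => by rw [← ihy (g * y⁻¹), inv_mul_cancel_right]
  refine ⟨ψ, fun c => ?_⟩
  have h1 : γ 1 = 1 := hγC 1
  have := key c 1
  rwa [one_mul, hγC, h1, hd.map_one, hδ.map_one, map_zero, sub_zero, sub_eq_zero] at this

theorem linearIndependent_fox {C : Subgroup F} {I : Type*} (c : FreeGroupBasis I C) :
    LinearIndependent (supportedOn C) fun i => fox b (c i : F) := by
  classical
  have h (i : I) : ∃ ψ : (X →₀ Series F) →ₗ[supportedOn C] supportedOn C,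
      ∀ j, ψ (fox b (c j : F)) = if i = j then 1 else 0 := by
    obtain ⟨δ, hδ, hδc⟩ := exists_isDerivation c (monoOn C)
      fun j => if i = j then (1 : supportedOn C) else 0
    obtain ⟨ψ, hψ⟩ := exists_linearMap_fox b hδ
    exact ⟨ψ, fun j => by rw [hψ, hδc]⟩
  choose ψ hψ using h
  exact .of_pairwise_dual_eq_zero_one _ ψ (fun i j hij => by simp only [hψ, if_neg hij])
    fun i => by simp only [hψ, if_pos]

end Independence

/-! ### Leading positions -/

section Leads

section

variable {F X : Type u}

/-- The coset position `(x, H g)` of a position `(x, g)`. -/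
def cosetOf [Group F] (H : Subgroup F) (e : X × F) : X × Quotient (QuotientGroup.rightRel H) :=
  (e.1, Quotient.mk _ e.2)

theorem cosetOf_eq_iff [Group F] {H : Subgroup F} {e e' : X × F} :
    cosetOf H e = cosetOf H e' ↔ e.1 = e'.1 ∧ e'.2 * e.2⁻¹ ∈ H := by
  rw [cosetOf, cosetOf, Prod.mk.injEq, Quotient.eq, QuotientGroup.rightRel_apply]

variable [LinearOrder F] [LinearOrder X]

/-- `IsLead v (x, g)` says that `(x, g)` is the lexicographically smallest position at which `v` has
a nonzero coefficient. -/
def IsLead (v : X →₀ Series F) (e : X × F) : Prop :=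
  (v e.1).coeff e.2 ≠ 0 ∧ (∀ g < e.2, (v e.1).coeff g = 0) ∧ ∀ y < e.1, v y = 0

theorem exists_isLead {v : X →₀ Series F} (hv : v ≠ 0) : ∃ e, IsLead v e := by
  have hne := Finsupp.support_nonempty_iff.2 hv
  obtain ⟨g, hg, hmin⟩ := exists_min_coeff_ne_zero
    (Finsupp.mem_support_iff.1 (v.support.min'_mem hne))
  refine ⟨(v.support.min' hne, g), hg, hmin, fun y hy => ?_⟩
  by_contra hvy
  exact (v.support.min'_le y (Finsupp.mem_support_iff.2 hvy)).not_gt hy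

theorem IsLead.coeff_eq_zero {v : X →₀ Series F} {e e' : X × F} (h : IsLead v e)
    (hlt : toLex e' < toLex e) : (v e'.1).coeff e'.2 = 0 := by
  obtain h1 | ⟨h1, h2⟩ := Prod.Lex.toLex_lt_toLex.1 hlt
  · rw [h.2.2 _ h1, coeff_zero]
  · rw [h1]
    exact h.2.1 _ h2

end

variable {F X : Type u} [Group F] [LinearOrder F] [LinearOrder X] [MulLeftStrictMono F]
  [MulRightStrictMono F]

theorem IsLead.smul {v : X →₀ Series F} {e : X × F} (h : IsLead v e) {d : Series F} (hd : d ≠ 0) :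
    ∃ k, d.coeff k ≠ 0 ∧ IsLead (d • v) (e.1, k * e.2) := by
  obtain ⟨k, hk, hmin⟩ := exists_min_coeff_ne_zero hd
  have hm := coeff_mul_min hmin h.2.1
  refine ⟨k, hk, ?_, hm.2, fun y hy => ?_⟩
  · exact hm.1.trans_ne (mul_ne_zero hk h.1)
  · rw [Finsupp.smul_apply, h.2.2 y hy, smul_zero]

theorem IsLead.mono_smul {v : X →₀ Series F} {e : X × F} (h : IsLead v e) (g : F) :
    IsLead ((mono g : Series F) • v) (e.1, g * e.2) := by
  classical
  obtain ⟨k, hk, hl⟩ := h.smul (d := mono g) (fun h0 => by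
    have := coeff_mono g g
    rw [h0, coeff_zero, if_pos rfl] at this
    exact zero_ne_one this)
  obtain rfl : k = g := by
    by_contra hne
    rw [coeff_mono, if_neg hne] at hk
    exact hk rfl
  exact hl

theorem linearIndependent_of_isLead {H : Subgroup F} {ι : Type*} {z : ι → X →₀ Series F}
    {e : ι → X × F} (hz : ∀ i, IsLead (z i) (e i))
    (he : Function.Injective fun i => cosetOf H (e i)) :
    LinearIndependent (supportedOn H) z := by
  classical
  rw [linearIndependent_iff']
  intro s d hsum
  by_contra! hne
  have hlead (i : ι) : ∃ k ∈ H, d i ≠ 0 → IsLead (d i • z i) ((e i).1, k * (e i).2) := by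
    by_cases hi : d i = 0
    · exact ⟨1, H.one_mem, fun h => absurd hi h⟩
    · obtain ⟨k, hk, hl⟩ := (hz i).smul (d := (d i : Series F)) (by simpa using hi)
      exact ⟨k, (d i).2 k hk, fun _ => hl⟩
  choose k hkH hk using hlead
  obtain ⟨i, hi, hmin⟩ := (s.filter fun i => d i ≠ 0).exists_min_image
    (fun i => toLex ((e i).1, k i * (e i).2)) (by
      obtain ⟨i, hi, hdi⟩ := hne
      exact ⟨i, Finset.mem_filter.2 ⟨hi, hdi⟩⟩)
  rw [Finset.mem_filter] at hi
  have hother : ∀ j ∈ s, j ≠ i → ((d j • z j) (e i).1).coeff (k i * (e i).2) = 0 := by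
    intro j hj hji
    by_cases hdj : d j = 0
    · rw [hdj, zero_smul]; rfl
    · refine (hk j hdj).coeff_eq_zero (e' := ((e i).1, k i * (e i).2)) ?_
      refine lt_of_le_of_ne (hmin j (Finset.mem_filter.2 ⟨hj, hdj⟩)) fun heq => hji (he ?_)
      have h1 := toLex.injective heq
      rw [Prod.mk.injEq] at h1
      refine cosetOf_eq_iff.2 ⟨h1.1.symm, ?_⟩
      have h2 : (e i).2 * (e j).2⁻¹ = (k i)⁻¹ * k j := by
        rw [eq_inv_mul_iff_mul_eq, ← mul_assoc, h1.2, mul_inv_cancel_right]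
      rw [h2]
      exact H.mul_mem (H.inv_mem (hkH i)) (hkH j)
  let φ : (X →₀ Series F) →+ ℚ :=
    { toFun := fun v => (v (e i).1).coeff (k i * (e i).2)
      map_zero' := rfl
      map_add' := fun _ _ => rfl }
  have h0 := congrArg φ hsum
  rw [map_sum, map_zero] at h0
  have h1 := Finset.sum_eq_single (f := fun j => φ (d j • z j)) i hother fun h => absurd hi.1 h
  exact (hk i hi.2).1 (h1.symm.trans h0)

variable (b : FreeGroupBasis X F)

/-- The coset positions of the leads of the cycles of `H`. -/
def leads (H : Subgroup F) : Set (X × Quotient (QuotientGroup.rightRel H)) :=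
  {q | ∃ z ∈ cycles b H, ∃ e, IsLead z e ∧ cosetOf H e = q}

theorem mk_leads_le_rank (H : Subgroup F) :
    Cardinal.mk (leads b H) ≤ Module.rank (supportedOn H) (cycles b H) := by
  choose z hz e he hq using fun q : leads b H => q.2
  have hli : LinearIndependent (supportedOn H) z :=
    linearIndependent_of_isLead he fun q q' h => Subtype.ext (by simpa only [hq] using h)
  exact (LinearIndependent.of_comp (cycles b H).subtype
    (v := fun q => (⟨z q, hz q⟩ : cycles b H)) hli).cardinal_le_rank

theorem rank_cycles_le {H : Subgroup F} (hfin : (leads b H).Finite) :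
    Module.rank (supportedOn H) (cycles b H) ≤ (leads b H).ncard := by
  have := hfin.fintype
  have hrep (q : leads b H) : ∃ e, cosetOf H e = q.1 := by
    obtain ⟨_, z, _, e, _, rfl⟩ := q
    exact ⟨e, rfl⟩
  choose e he using hrep
  let φ : cycles b H →ₗ[supportedOn H] leads b H → supportedOn H :=
    LinearMap.pi fun q => coordAt H (e q).1 (e q).2 ∘ₗ (cycles b H).subtype
  have hφ : Function.Injective φ := by
    rw [← LinearMap.ker_eq_bot, LinearMap.ker_eq_bot']
    intro z hz
    by_contra hne
    obtain ⟨p, hp⟩ := exists_isLead (v := (z : X →₀ Series F)) (by simpa using hne)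
    let q : leads b H := ⟨cosetOf H p, z, z.2, p, hp, rfl⟩
    obtain ⟨h1, h2⟩ := cosetOf_eq_iff.1 (he q)
    have h3 : coordAt H (e q).1 (e q).2 (z : X →₀ Series F) = 0 := congrFun hz q
    have h4 := coeff_coordAt (e q).1 (e q).2 (z : X →₀ Series F) h2
    rw [h3, inv_mul_cancel_right, h1] at h4
    exact hp.1 h4.symm
  refine (LinearMap.rank_le_of_injective φ hφ).trans ?_
  rw [rank_fun', Set.ncard_eq_toFinset_card', Set.toFinset_card]

theorem grank_le_of_basis {G I : Type*} [Group G] [Finite I] (c : FreeGroupBasis I G) :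
    grank G ≤ Nat.card I := by
  classical
  have := Fintype.ofFinite I
  refine (csInf_le (OrderBot.bddBelow _) ⟨Finset.univ.image c, ?_, rfl⟩ :
    grank G ≤ (Finset.univ.image c).card).trans ?_
  · rw [Finset.coe_image, Finset.coe_univ, Set.image_univ, closure_range_basis]
  · rw [Nat.card_eq_fintype_card]
    exact_mod_cast Finset.card_image_le

theorem redRank_le_encard_leads [IsFreeGroup F] (C : Subgroup F) :
    redRank C ≤ (leads b C).encard := by
  by_cases hfin : (leads b C).Finite
  · have hli := linearIndependent_fox b (IsFreeGroup.basis C)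
    have hli' := LinearIndependent.of_comp (foxSpan b C).subtype
      (v := fun i => (⟨_, fox_mem_foxSpan b (IsFreeGroup.basis C i).2⟩ : foxSpan b C)) hli
    have hcard : Cardinal.mk (IsFreeGroup.Generators C) ≤ ((leads b C).ncard + 1 : ℕ) := by
      refine hli'.cardinal_le_rank.trans ((rank_foxSpan_le b C).trans ?_)
      rw [Nat.cast_add, Nat.cast_one]
      gcongr
      exact rank_cycles_le b hfin
    have hfinI : Finite (IsFreeGroup.Generators C) :=
      Cardinal.mk_lt_aleph0_iff.1 (hcard.trans_lt Cardinal.natCast_lt_aleph0)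
    rw [← hfin.cast_ncard_eq, redRank, tsub_le_iff_right]
    refine (grank_le_of_basis (IsFreeGroup.basis C)).trans ?_
    rw [← Nat.cast_card] at hcard
    exact_mod_cast hcard
  · rw [Set.Infinite.encard_eq hfin]
    exact le_top

theorem finite_leads_and_encard_le (A : Subgroup F) [Group.FG A] :
    (leads b A).Finite ∧ (leads b A).encard ≤ redRank A := by
  have hne : {n : ℕ∞ | ∃ s : Finset A, Subgroup.closure (s : Set A) = ⊤ ∧ n = s.card}.Nonempty := by
    obtain ⟨s, hs⟩ := Group.FG.out (G := A)
    exact ⟨_, s, hs, rfl⟩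
  obtain ⟨s, hs, hn⟩ := csInf_mem hne
  have hcard : Cardinal.mk (leads b A) ≤ (s.card - 1 : ℕ) := by
    refine (mk_leads_le_rank b A).trans ?_
    by_cases hA : A = ⊥
    · have h0 : Subgroup.closure ((∅ : Finset A) : Set A) = ⊤ := by
        have := (Subgroup.eq_bot_iff_forall A).1 hA
        refine eq_top_iff.2 fun a _ => ?_
        rw [show a = 1 from Subtype.ext (this a a.2)]
        exact one_mem _
      refine (Submodule.rank_mono (inf_le_left : cycles b A ≤ foxSpan b A)).trans ?_
      refine (rank_foxSpan_le_card b ∅ h0).trans ?_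
      exact_mod_cast Nat.zero_le _
    · have hle := (rank_cycles_add_one_le b hA).trans (rank_foxSpan_le_card b s hs)
      obtain ⟨m, hm⟩ := Cardinal.lt_aleph0.1
        (((self_le_add_right _ _).trans hle).trans_lt Cardinal.natCast_lt_aleph0)
      rw [hm] at hle ⊢
      have : m + 1 ≤ s.card := by exact_mod_cast hle
      exact_mod_cast Nat.le_sub_one_of_lt this
  have hfin : (leads b A).Finite :=
    Cardinal.mk_lt_aleph0_iff.1 (hcard.trans_lt Cardinal.natCast_lt_aleph0)
  refine ⟨hfin, ?_⟩
  rw [redRank, grank, hn, ← hfin.cast_ncard_eq]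
  rw [← Set.cast_ncard hfin] at hcard
  have : (leads b A).ncard ≤ s.card - 1 := by exact_mod_cast hcard
  exact_mod_cast this

end Leads

/-! ### Counting leads over double cosets -/

section Counting

theorem finsum_mem_le_of_forall_finset_sum_le {α : Type*} {S : Set α} {f : α → ℕ∞} {N : ℕ}
    (h : ∀ T : Finset α, (T : Set α) ⊆ S → ∑ a ∈ T, f a ≤ N) :
    {a ∈ S | f a ≠ 0}.Finite ∧ ∑ᶠ a ∈ S, f a ≤ N := by
  have hfin : {a ∈ S | f a ≠ 0}.Finite := by
    by_contra hinf
    obtain ⟨T, hT, hcard⟩ := Set.Infinite.exists_subset_card_eq hinf (N + 1)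
    have h1 := h T fun a ha => (hT ha).1
    have h2 : ∑ a ∈ T, (1 : ℕ∞) ≤ ∑ a ∈ T, f a :=
      Finset.sum_le_sum fun a ha => Order.one_le_iff_ne_zero.2 (hT ha).2
    rw [Finset.sum_const, hcard, nsmul_one] at h2
    exact absurd (h2.trans h1) (by simp only [Nat.cast_le]; lia)
  refine ⟨hfin, ?_⟩
  have hfin' : (S ∩ Function.support f).Finite := hfin
  rw [finsum_mem_eq_sum f hfin']
  exact h _ fun a ha => (hfin'.mem_toFinset.1 ha).1

variable {F X : Type u} [Group F] [LinearOrder F] [LinearOrder X] [MulLeftStrictMono F]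
  [MulRightStrictMono F] (b : FreeGroupBasis X F)

theorem exists_injective_leads (A B : Subgroup F) {S : Set F}
    (hS : ∀ g : F, ∃! s, s ∈ S ∧ ∃ a ∈ A, ∃ b ∈ B, g = a * s * b) :
    ∃ Φ : (Σ s : S, leads b (A ⊓ B.map (MulAut.conj (s : F)).toMonoidHom)) →
      leads b A × leads b B, Function.Injective Φ := by
  choose z hz e he hq using
    fun p : Σ s : S, leads b (A ⊓ B.map (MulAut.conj (s : F)).toMonoidHom) => p.2.2
  refine ⟨fun p => (⟨cosetOf A (e p), z p, cycles_mono b inf_le_left (hz p), e p, he p, rfl⟩,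
    ⟨cosetOf B ((e p).1, (p.1 : F)⁻¹ * (e p).2), _,
      conj_mem_cycles b (cycles_mono b inf_le_right (hz p)), _, (he p).mono_smul _, rfl⟩),
    fun p p' hpp => ?_⟩
  obtain ⟨hx, hA⟩ := cosetOf_eq_iff.1 (congrArg (fun r => r.1.1) hpp)
  obtain ⟨-, hB⟩ := cosetOf_eq_iff.1 (congrArg (fun r => r.2.1) hpp)
  have hB' : (p'.1 : F)⁻¹ * ((e p').2 * (e p).2⁻¹) * p.1 ∈ B := by
    simpa [mul_assoc] using hB
  have hs : (p'.1 : F) = p.1 := by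
    refine (hS p'.1).unique ⟨p'.1.2, 1, A.one_mem, 1, B.one_mem, by simp⟩
      ⟨p.1.2, _, hA, _, B.inv_mem hB', ?_⟩
    group
  obtain ⟨s, q⟩ := p
  obtain ⟨s', q'⟩ := p'
  obtain rfl : s' = s := Subtype.ext hs
  congr 1
  refine Subtype.ext ?_
  rw [← hq ⟨s', q⟩, ← hq ⟨s', q'⟩, cosetOf_eq_iff]
  refine ⟨hx, hA, _, hB', ?_⟩
  simp [mul_assoc]

theorem sum_redRank_le [IsFreeGroup F] (A B : Subgroup F) [Group.FG A] [Group.FG B] {S : Set F}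
    (hS : ∀ g : F, ∃! s, s ∈ S ∧ ∃ a ∈ A, ∃ b ∈ B, g = a * s * b) (T : Finset F)
    (hT : (T : Set F) ⊆ S) :
    ∑ s ∈ T, redRank ↥(A ⊓ B.map (MulAut.conj s).toMonoidHom) ≤
      ((leads b A).ncard * (leads b B).ncard : ℕ) := by
  have := (finite_leads_and_encard_le b A).1.to_subtype
  have := (finite_leads_and_encard_le b B).1.to_subtype
  obtain ⟨Φ, hΦ⟩ := exists_injective_leads b A B hS
  have hfin (s : T) : Finite (leads b (A ⊓ B.map (MulAut.conj (s : F)).toMonoidHom)) :=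
    Finite.of_injective (fun q => Φ ⟨⟨s, hT s.2⟩, q⟩) (hΦ.comp sigma_mk_injective)
  let ι : (Σ s : T, leads b (A ⊓ B.map (MulAut.conj (s : F)).toMonoidHom)) →
      Σ s : S, leads b (A ⊓ B.map (MulAut.conj (s : F)).toMonoidHom) :=
    fun p => ⟨⟨p.1, hT p.1.2⟩, p.2⟩
  have hι : Function.Injective ι := by
    rintro ⟨⟨s, hs⟩, q⟩ ⟨⟨s', hs'⟩, q'⟩ h
    simp only [ι, Sigma.mk.injEq, Subtype.mk.injEq] at h ⊢
    exact h
  have hcard := Nat.card_le_card_of_injective _ (hΦ.comp hι)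
  rw [Nat.card_sigma, Nat.card_prod] at hcard
  simp only [Nat.card_coe_set_eq] at hcard
  rw [← Finset.sum_coe_sort T]
  refine (Finset.sum_le_sum fun s _ => redRank_le_encard_leads b _).trans ?_
  refine le_trans (le_of_eq ?_) (Nat.cast_le.2 hcard)
  rw [Nat.cast_sum]
  exact Finset.sum_congr rfl fun s _ => (Set.Finite.cast_ncard_eq (Set.toFinite _)).symm

end Counting

end HannaNeumann
/-- The strengthened Hanna Neumann conjecture (Friedman–Mineyev theorem): for finitely
generated subgroups `A, B` of a free group `F` and a system of representatives `S` of the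
double cosets `AsB` in `F`, one has `∑_{s ∈ S} r̄ank(A ∩ sBs⁻¹) ≤ r̄ank(A) ⬝ r̄ank(B)`;
in particular, only finitely many terms of the sum are nonzero. -/
theorem strengthened_hanna_neumann {F : Type*} [Group F] [IsFreeGroup F]
    (A B : Subgroup F) [Group.FG A] [Group.FG B] (S : Set F)
    (hS : ∀ g : F, ∃! s, s ∈ S ∧ ∃ a ∈ A, ∃ b ∈ B, g = a * s * b) :
    {s ∈ S | redRank ↥(A ⊓ Subgroup.map (MulAut.conj s).toMonoidHom B) ≠ 0}.Finite ∧
      ∑ᶠ s ∈ S, redRank ↥(A ⊓ Subgroup.map (MulAut.conj s).toMonoidHom B) ≤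
        redRank A * redRank B := by

  obtain ⟨_, _, _⟩ := HannaNeumann.exists_biorder F
  let _ : LinearOrder (IsFreeGroup.Generators F) := IsWellOrder.linearOrder WellOrderingRel
  let b := IsFreeGroup.basis F
  obtain ⟨hA, hA'⟩ := HannaNeumann.finite_leads_and_encard_le b A
  obtain ⟨hB, hB'⟩ := HannaNeumann.finite_leads_and_encard_le b B
  obtain ⟨hfin, hle⟩ := HannaNeumann.finsum_mem_le_of_forall_finset_sum_le
    (HannaNeumann.sum_redRank_le b A B hS)
  refine ⟨hfin, hle.trans ?_⟩
  rw [Nat.cast_mul, hA.cast_ncard_eq, hB.cast_ncard_eq]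
  exact mul_le_mul' hA' hB'
end
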